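/- Let α,β>−1, let M,N≥0 be integers, let L,γ₁,γ₂∈{0,1}, let W≥1 be real and 1≤p≤∞, and assume W/p+γ₁+γ₂−L−N−M ≥ 1 (with the convention W/p=0 when p=∞). Then there exists a constant C such that for all θ,φ∈(0,π) with θ≠φ: (sin θ)^{γ₁}(sin φ)^{γ₂}·‖∂_φ^L ∂_θ^N ∂_t^M H_t^{α+1,β+1}(θ,φ)‖_{L^p((0,∞),t^{W−1}dt)} ≤ C/(|θ−φ|·μ⁺_{α,β}(B(θ,|θ−φ|))). -/

import Mathlib

open MeasureTheory Real Set
open scoped ENNReal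

noncomputable section

/-- The classical Jacobi polynomial `P_n^{α,β}`. -/
def jacobiP (α β : ℝ) (n : ℕ) (x : ℝ) : ℝ :=
  ∑ m ∈ Finset.range (n + 1),
    (Real.Gamma (α + n + 1) * Real.Gamma (α + β + n + m + 1)) /
      ((m.factorial : ℝ) * ((n - m).factorial : ℝ) * Real.Gamma (α + β + n + 1) *
        Real.Gamma (α + m + 1)) * ((x - 1) / 2) ^ m

/-- `Ψ^{α,β}(θ) = |sin(θ/2)|^{α+1/2} (cos(θ/2))^{β+1/2}`. -/
def jPsi (α β θ : ℝ) : ℝ := |Real.sin (θ / 2)| ^ (α + 1 / 2) * Real.cos (θ / 2) ^ (β + 1 / 2)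

/-- The measure `μ_{α,β}` on `(−π, π)`, with density `(Ψ^{α,β})²` w.r.t. Lebesgue measure. -/
def jacobiMeasure (α β : ℝ) : Measure ℝ :=
  (volume.restrict (Ioo (-π) π)).withDensity fun θ => ENNReal.ofReal (jPsi α β θ ^ 2)

/-- The restriction `μ⁺_{α,β}` of `μ_{α,β}` to `(0, π)`. -/
def jacobiMeasurePlus (α β : ℝ) : Measure ℝ := (jacobiMeasure α β).restrict (Ioo 0 π)

/-- The normalizing constant `c_n^{α,β}` making `𝒫_n^{α,β}` have unit `L²(μ⁺)` norm. -/
def cJ (α β : ℝ) (n : ℕ) : ℝ :=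
  (∫ θ, jacobiP α β n (Real.cos θ) ^ 2 ∂(jacobiMeasurePlus α β)) ^ (-(1 / 2) : ℝ)

/-- The normalized trigonometric Jacobi polynomial `𝒫_n^{α,β}(θ)`. -/
def trigP (α β : ℝ) (n : ℕ) (θ : ℝ) : ℝ := cJ α β n * jacobiP α β n (Real.cos θ)

/-- The eigenvalue `λ_n^{α,β} = (n + (α+β+1)/2)²`. -/
def jLam (α β : ℝ) (n : ℕ) : ℝ := ((n : ℝ) + (α + β + 1) / 2) ^ 2

/-- The symmetrized system `Φ_n^{α,β}`. -/
def symPhi (α β : ℝ) (n : ℕ) (θ : ℝ) : ℝ :=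
  if Even n then (Real.sqrt 2)⁻¹ * trigP α β (n / 2) θ
  else (Real.sqrt 2)⁻¹ * (Real.sin θ / 2) * trigP (α + 1) (β + 1) ((n - 1) / 2) θ

/-- The Jacobi functions `φ_n^{α,β} = Ψ^{α,β} 𝒫_n^{α,β}`. -/
def phiFun (α β : ℝ) (n : ℕ) (θ : ℝ) : ℝ := jPsi α β θ * trigP α β n θ

/-- The symmetrized Jacobi function system `Θ_n^{α,β}`. -/
def jTheta (α β : ℝ) (n : ℕ) (θ : ℝ) : ℝ :=
  if Even n then (Real.sqrt 2)⁻¹ * phiFun α β (n / 2) θ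
  else (Real.sqrt 2)⁻¹ * Real.sign θ * phiFun (α + 1) (β + 1) ((n - 1) / 2) θ

/-- The symmetrized Jacobi–Poisson semigroup `ℍ_t^{α,β}f(θ)` (polynomial setting). -/
def symH (α β : ℝ) (f : ℝ → ℝ) (t θ : ℝ) : ℝ :=
  ∑' n : ℕ, Real.exp (-t * Real.sqrt (jLam α β ((n + 1) / 2))) *
    (∫ φ, f φ * symPhi α β n φ ∂(jacobiMeasure α β)) * symPhi α β n θ

/-- The symmetrized Jacobi–Poisson semigroup `H̄_t^{α,β}f(θ)` (function setting). -/
def symHbar (α β : ℝ) (f : ℝ → ℝ) (t θ : ℝ) : ℝ :=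
  ∑' n : ℕ, Real.exp (-t * Real.sqrt (jLam α β ((n + 1) / 2))) *
    (∫ φ in Ioo (-π) π, f φ * jTheta α β n φ) * jTheta α β n θ

/-- The non-symmetrized Jacobi–Poisson semigroup `ℋ_t^{α,β}f(θ)` (polynomial setting). -/
def jacH (α β : ℝ) (f : ℝ → ℝ) (t θ : ℝ) : ℝ :=
  ∑' n : ℕ, Real.exp (-t * Real.sqrt (jLam α β n)) *
    (∫ φ, f φ * trigP α β n φ ∂(jacobiMeasurePlus α β)) * trigP α β n θ

/-- The non-symmetrized Jacobi–Poisson semigroup `𝓗̄_t^{α,β}f(θ)` (function setting). -/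
def jacHbar (α β : ℝ) (f : ℝ → ℝ) (t θ : ℝ) : ℝ :=
  ∑' n : ℕ, Real.exp (-t * Real.sqrt (jLam α β n)) *
    (∫ φ in Ioo 0 π, f φ * phiFun α β n φ) * phiFun α β n θ

/-- The symmetrized derivative `𝔻_{α,β}`. -/
def symD (α β : ℝ) (f : ℝ → ℝ) : ℝ → ℝ := fun θ =>
  deriv f θ + (α - β + (α + β + 1) * Real.cos θ) / Real.sin θ * ((f θ - f (-θ)) / 2)

/-- The symmetrized derivative `D̄_{α,β}` (function setting). -/
def symDbar (α β : ℝ) (f : ℝ → ℝ) : ℝ → ℝ := fun θ =>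
  deriv f θ -
    ((2 * α + 1) / 4 * (Real.cos (θ / 2) / Real.sin (θ / 2)) -
      (2 * β + 1) / 4 * Real.tan (θ / 2)) * f (-θ)

/-- The derivative `D_{α,β}` (non-symmetrized function setting). -/
def jacD (α β : ℝ) (f : ℝ → ℝ) : ℝ → ℝ := fun θ =>
  deriv f θ - (2 * α + 1) / 4 * (Real.cos (θ / 2) / Real.sin (θ / 2)) * f θ +
    (2 * β + 1) / 4 * Real.tan (θ / 2) * f θ

/-- `δ*_{α,β} = −d/dθ − (α+1/2)cot(θ/2) + (β+1/2)tan(θ/2)`. -/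
def delStar (α β : ℝ) (f : ℝ → ℝ) : ℝ → ℝ := fun θ =>
  -deriv f θ - (α + 1 / 2) * (Real.cos (θ / 2) / Real.sin (θ / 2)) * f θ +
    (β + 1 / 2) * Real.tan (θ / 2) * f θ

/-- `δ_N^even`: `N` alternating factors, rightmost (first applied) one being `δ = d/dθ`. -/
def deltaEven (α β : ℝ) : ℕ → (ℝ → ℝ) → ℝ → ℝ
  | 0 => fun f => f
  | N + 1 => fun f => (if N % 2 = 0 then deriv else delStar α β) (deltaEven α β N f)

/-- `δ_N^odd`: `N` alternating factors, rightmost (first applied) one being `δ*_{α,β}`. -/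
def deltaOdd (α β : ℝ) : ℕ → (ℝ → ℝ) → ℝ → ℝ
  | 0 => fun f => f
  | N + 1 => fun f => (if N % 2 = 0 then delStar α β else deriv) (deltaOdd α β N f)

/-- The Jacobi–Poisson kernel `H_t^{α,β}(θ,φ)` (even part of the symmetrized kernel). -/
def jHker (α β t θ φ : ℝ) : ℝ :=
  (1 / 2) * ∑' n : ℕ, Real.exp (-t * Real.sqrt (jLam α β n)) * trigP α β n θ * trigP α β n φ

/-- The kernel `H̃_t^{α,β}(θ,φ)` (odd part of the symmetrized kernel). -/
def jHtil (α β t θ φ : ℝ) : ℝ :=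
  (1 / 8) * Real.sin θ * Real.sin φ *
    ∑' n : ℕ, Real.exp (-t * Real.sqrt (jLam α β (n + 1))) *
      trigP (α + 1) (β + 1) n θ * trigP (α + 1) (β + 1) n φ

/-- `μ⁺_{α,β}(B(θ,r))` where `B(θ,r) = (θ−r, θ+r) ∩ (0,π)`. -/
def ballMeasure (α β θ r : ℝ) : ℝ≥0∞ := jacobiMeasurePlus α β (Ioo (θ - r) (θ + r))

/-- The Muckenhoupt class `A_p^{α,β}` (`1 < p < ∞`) on `(−π,π)` w.r.t. `μ_{α,β}`. -/
def IsApWeight (α β p : ℝ) (w : ℝ → ℝ) : Prop :=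
  (∀ θ, 0 ≤ w θ) ∧
    ∃ C : ℝ, ∀ a b : ℝ, -π ≤ a → a ≤ b → b ≤ π →
      (∫⁻ θ in Ioo a b, ENNReal.ofReal (w θ) ∂(jacobiMeasure α β)) *
          (∫⁻ θ in Ioo a b, ENNReal.ofReal (w θ ^ (-1 / (p - 1))) ∂(jacobiMeasure α β)) ^
            (p - 1) ≤
        ENNReal.ofReal C * jacobiMeasure α β (Ioo a b) ^ p

/-- The Muckenhoupt class `A_1^{α,β}` on `(−π,π)` w.r.t. `μ_{α,β}`. -/
def IsA1Weight (α β : ℝ) (w : ℝ → ℝ) : Prop :=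
  (∀ θ, 0 ≤ w θ) ∧
    ∃ C : ℝ, ∀ a b : ℝ, -π ≤ a → a ≤ b → b ≤ π →
      ∫⁻ θ in Ioo a b, ENNReal.ofReal (w θ) ∂(jacobiMeasure α β) ≤
        ENNReal.ofReal C *
          essInf (fun θ => ENNReal.ofReal (w θ)) ((jacobiMeasure α β).restrict (Ioo a b)) *
          jacobiMeasure α β (Ioo a b)

/-- The Muckenhoupt class `(A_p^{α,β})⁺` (`1 < p < ∞`) on `(0,π)` w.r.t. `μ⁺_{α,β}`. -/
def IsApWeightPlus (α β p : ℝ) (w : ℝ → ℝ) : Prop :=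
  (∀ θ, 0 ≤ w θ) ∧
    ∃ C : ℝ, ∀ a b : ℝ, 0 ≤ a → a ≤ b → b ≤ π →
      (∫⁻ θ in Ioo a b, ENNReal.ofReal (w θ) ∂(jacobiMeasurePlus α β)) *
          (∫⁻ θ in Ioo a b, ENNReal.ofReal (w θ ^ (-1 / (p - 1))) ∂(jacobiMeasurePlus α β)) ^
            (p - 1) ≤
        ENNReal.ofReal C * jacobiMeasurePlus α β (Ioo a b) ^ p

/-- The Muckenhoupt class `(A_1^{α,β})⁺` on `(0,π)` w.r.t. `μ⁺_{α,β}`. -/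
def IsA1WeightPlus (α β : ℝ) (w : ℝ → ℝ) : Prop :=
  (∀ θ, 0 ≤ w θ) ∧
    ∃ C : ℝ, ∀ a b : ℝ, 0 ≤ a → a ≤ b → b ≤ π →
      ∫⁻ θ in Ioo a b, ENNReal.ofReal (w θ) ∂(jacobiMeasurePlus α β) ≤
        ENNReal.ofReal C *
          essInf (fun θ => ENNReal.ofReal (w θ)) ((jacobiMeasurePlus α β).restrict (Ioo a b)) *
          jacobiMeasurePlus α β (Ioo a b)

/-- The double power weight `w_{r,s}(θ) = |sin(θ/2)|^r (cos(θ/2))^s`. -/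
def wrs (r s θ : ℝ) : ℝ := |Real.sin (θ / 2)| ^ r * Real.cos (θ / 2) ^ s


namespace JK

open Polynomial in
/-- The unnormalized Jacobi polynomial in the variable `X = sin²(θ/2)`. -/
def pP (a b : ℝ) (n : ℕ) : ℝ[X] :=
  ∑ m ∈ Finset.range (n + 1), monomial m
    ((-1) ^ m * (n.choose m : ℝ) * Real.Gamma (n + m + a + b + 1) / Real.Gamma (m + a + 1))

open Polynomial in
/-- The Jacobi operator on polynomials. -/
def jD (a b : ℝ) (f : ℝ[X]) : ℝ[X] :=
  X * (1 - X) * derivative (derivative f) + (C (a + 1) - C (a + b + 2) * X) * derivative f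

open Polynomial in
lemma pP_coeff (a b : ℝ) (n m : ℕ) : (pP a b n).coeff m =
    (-1) ^ m * (n.choose m : ℝ) * Real.Gamma (n + m + a + b + 1) / Real.Gamma (m + a + 1) := by
  unfold pP
  simp only [finsetSum_coeff, coeff_monomial]
  rw [Finset.sum_ite_eq' (Finset.range (n+1)) m]
  split_ifs with h
  · rfl
  · have : n.choose m = 0 := Nat.choose_eq_zero_of_lt (by simpa using h)
    simp [this]

open Polynomial in
lemma jD_coeff (a b : ℝ) (f : ℝ[X]) (m : ℕ) : (jD a b f).coeff m =
    (m + 1) * (m + 1 + a) * f.coeff (m + 1) - m * (m + a + b + 1) * f.coeff m := by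
  have e : jD a b f = X * derivative (derivative f) - X * (X * derivative (derivative f))
      + C (a + 1) * derivative f - C (a + b + 2) * (X * derivative f) := by
    unfold jD; ring
  rw [e]
  simp only [coeff_add, coeff_sub, coeff_C_mul]
  rcases m with _ | _ | m
  · simp [coeff_derivative]
    left; ring
  · simp [coeff_derivative, coeff_X_mul]
    have : (X * (X * derivative (derivative f))).coeff 1 = 0 := by
      rw [show (1:ℕ) = 0 + 1 from rfl, coeff_X_mul]; simp
    ring_nf
  · simp only [coeff_derivative, coeff_X_mul]
    push_cast; ring

open Polynomial in
lemma jD_add (a b : ℝ) (f g : ℝ[X]) : jD a b (f + g) = jD a b f + jD a b g := by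
  unfold jD; simp only [derivative_add]; ring

open Polynomial in
lemma jD_C_mul (a b c : ℝ) (f : ℝ[X]) : jD a b (C c * f) = C c * jD a b f := by
  unfold jD; simp only [derivative_C_mul]; ring

open Polynomial in
lemma jD_sum {ι : Type*} (a b : ℝ) (s : Finset ι) (f : ι → ℝ[X]) :
    jD a b (∑ i ∈ s, f i) = ∑ i ∈ s, jD a b (f i) := by
  classical
  induction s using Finset.induction_on with
  | empty => simp [jD]
  | insert i s hi ih => rw [Finset.sum_insert hi, Finset.sum_insert hi, jD_add, ih]

open Polynomial in
lemma jD_mul (a b : ℝ) (f g : ℝ[X]) : jD a b (f * g) =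
    f * jD a b g + g * jD a b f + 2 * (X * derivative f) * ((1 - X) * derivative g) := by
  unfold jD; simp only [derivative_mul, derivative_add]; ring

open Polynomial in
lemma X_mul_der (i : ℕ) : (X : ℝ[X]) * derivative (X ^ i) = C (i : ℝ) * X ^ i := by
  rcases i with _ | i
  · simp
  · rw [derivative_X_pow, Nat.add_sub_cancel, pow_succ]; ring

open Polynomial in
lemma der_one_sub (j : ℕ) : derivative ((1 - X : ℝ[X]) ^ j) = - C (j : ℝ) * (1 - X) ^ (j - 1) := by
  rw [derivative_pow]; simp

open Polynomial in
lemma one_sub_mul_der (j : ℕ) :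
    (1 - X : ℝ[X]) * derivative ((1 - X) ^ j) = - C (j : ℝ) * (1 - X) ^ j := by
  rw [der_one_sub]
  rcases j with _ | j
  · simp
  · simp [pow_succ]; ring

open Polynomial in
lemma jD_X_pow (a b : ℝ) (i : ℕ) : jD a b (X ^ i) =
    - C ((i : ℝ) * (i + a + b + 1)) * X ^ i + C ((i : ℝ) * (i + a)) * X ^ (i - 1) := by
  have hC2 : (C (2 : ℝ)) = (2 : ℝ[X]) := rfl
  unfold jD
  rcases i with _ | _ | i
  · simp
  · simp [hC2]; ring
  · simp [hC2]; ring

open Polynomial in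
lemma jD_one_sub_pow (a b : ℝ) (j : ℕ) : jD a b ((1 - X) ^ j) =
    - C ((j : ℝ) * (j + a + b + 1)) * (1 - X) ^ j + C ((j : ℝ) * (j + b)) * (1 - X) ^ (j - 1) := by
  have hC2 : (C (2 : ℝ)) = (2 : ℝ[X]) := rfl
  unfold jD
  rw [der_one_sub, ← C_neg, derivative_C_mul, der_one_sub]
  rcases j with _ | _ | j
  · simp
  · simp [hC2]; ring
  · simp [hC2]; ring

open Polynomial in
lemma jD_XY (a b : ℝ) (i j : ℕ) : jD a b (X ^ i * (1 - X) ^ j) =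
    - C (((i + j : ℕ) : ℝ) * ((i + j : ℕ) + a + b + 1)) * (X ^ i * (1 - X) ^ j)
    + C ((i : ℝ) * (i + a)) * (X ^ (i - 1) * (1 - X) ^ j)
    + C ((j : ℝ) * (j + b)) * (X ^ i * (1 - X) ^ (j - 1)) := by
  rw [jD_mul, jD_X_pow, jD_one_sub_pow, X_mul_der, one_sub_mul_der]
  simp only [C_mul, C_add, Nat.cast_add]
  simp; ring

/-- `1/(i! Γ(i+a+1))`. -/
def cf (a : ℝ) (i : ℕ) : ℝ := 1 / ((i.factorial : ℝ) * Real.Gamma (i + a + 1))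

lemma cf_pos {a : ℝ} (ha : 0 < a) (i : ℕ) : 0 < cf a i := by
  unfold cf
  have := Real.Gamma_pos_of_pos (s := i + a + 1) (by positivity)
  positivity

lemma cf_succ {a : ℝ} (ha : 0 < a) (i : ℕ) :
    ((i : ℝ) + 1) * (i + 1 + a) * cf a (i + 1) = cf a i := by
  unfold cf
  have h := Real.Gamma_add_one (s := i + a + 1) (by positivity)
  have := Real.Gamma_pos_of_pos (s := i + a + 1) (by positivity)
  rw [show ((i + 1 : ℕ) : ℝ) + a + 1 = (i + a + 1) + 1 by push_cast; ring, h, Nat.factorial_succ]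
  push_cast
  field_simp
  ring_nf

open Polynomial in
/-- The polynomial `G_k(X, y)`. -/
def GP (a b : ℝ) (k : ℕ) (y : ℝ) : ℝ[X] :=
  ∑ q ∈ Finset.HasAntidiagonal.antidiagonal k, C (cf a q.1 * cf b q.2 * (y ^ q.1 * (1 - y) ^ q.2)) *
    (X ^ q.1 * (1 - X) ^ q.2)

open Polynomial in
lemma jD_GP_zero (a b : ℝ) (y : ℝ) : jD a b (GP a b 0 y) = 0 := by
  simp [GP, jD]

open Polynomial in
lemma jD_GP_succ {a b : ℝ} (ha : 0 < a) (hb : 0 < b) (k : ℕ) (y : ℝ) : jD a b (GP a b (k + 1) y) =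
    - C (((k + 1 : ℕ) : ℝ) * ((k + 1 : ℕ) + a + b + 1)) * GP a b (k + 1) y + GP a b k y := by
  have h1 : ∀ q ∈ Finset.HasAntidiagonal.antidiagonal (k + 1),
      jD a b (C (cf a q.1 * cf b q.2 * (y ^ q.1 * (1 - y) ^ q.2)) * (X ^ q.1 * (1 - X) ^ q.2)) =
      - C (((k + 1 : ℕ) : ℝ) * ((k + 1 : ℕ) + a + b + 1)) *
        (C (cf a q.1 * cf b q.2 * (y ^ q.1 * (1 - y) ^ q.2)) * (X ^ q.1 * (1 - X) ^ q.2)) +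
      (C (cf a q.1 * cf b q.2 * (y ^ q.1 * (1 - y) ^ q.2) * ((q.1 : ℝ) * (q.1 + a))) *
        (X ^ (q.1 - 1) * (1 - X) ^ q.2) +
      C (cf a q.1 * cf b q.2 * (y ^ q.1 * (1 - y) ^ q.2) * ((q.2 : ℝ) * (q.2 + b))) *
        (X ^ q.1 * (1 - X) ^ (q.2 - 1))) := by
    intro q hq
    rw [Finset.HasAntidiagonal.mem_antidiagonal] at hq
    rw [jD_C_mul, jD_XY, hq]
    simp only [C_mul]; ring
  unfold GP
  rw [jD_sum, Finset.sum_congr rfl h1, Finset.sum_add_distrib, Finset.mul_sum,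
    Finset.sum_add_distrib]
  congr 1
  rw [Finset.Nat.sum_antidiagonal_succ, add_comm]
  rw [Finset.Nat.sum_antidiagonal_succ']
  simp only [Nat.cast_zero, zero_mul, mul_zero, C_0, zero_add, add_zero, Nat.add_sub_cancel]
  rw [← Finset.sum_add_distrib]
  refine Finset.sum_congr rfl fun q _ => ?_
  have e1 := cf_succ ha q.1
  have e2 := cf_succ hb q.2
  rw [← add_mul, ← C_add]
  congr 2
  push_cast
  rw [pow_succ, pow_succ]
  linear_combination (cf b q.2 * (y ^ q.1 * (1 - y) ^ q.2) * y) * e1 +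
    (cf a q.1 * (y ^ q.1 * (1 - y) ^ q.2) * (1 - y)) * e2

lemma pP_coeff_succ {a b : ℝ} (ha : 0 < a) (hb : 0 < b) (n m : ℕ) :
    ((m : ℝ) + 1) * (m + 1 + a) * (pP a b n).coeff (m + 1) =
      ((m : ℝ) - n) * (m + n + a + b + 1) * (pP a b n).coeff m := by
  rw [pP_coeff, pP_coeff]
  have h1 := Real.Gamma_add_one (s := m + a + 1) (by positivity)
  have h2 := Real.Gamma_add_one (s := n + m + a + b + 1) (by positivity)
  have h3 := Real.Gamma_pos_of_pos (s := m + a + 1) (by positivity)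
  have h4 : ((n.choose (m + 1) : ℕ) : ℝ) * ((m : ℝ) + 1) = (n.choose m : ℝ) * ((n : ℝ) - m) := by
    rcases le_or_gt m n with h | h
    · have := Nat.choose_succ_right_eq n m
      rw [← Nat.cast_sub h]
      exact_mod_cast this
    · rw [Nat.choose_eq_zero_of_lt h, Nat.choose_eq_zero_of_lt (by omega)]; simp
  rw [show ((m + 1 : ℕ) : ℝ) + a + 1 = (m + a + 1) + 1 by push_cast; ring, h1,
    show (n : ℝ) + ((m + 1 : ℕ) : ℝ) + a + b + 1 = (n + m + a + b + 1) + 1 by push_cast; ring, h2,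
    pow_succ]
  have : (m : ℝ) + a + 1 ≠ 0 := by positivity
  field_simp
  linear_combination (-((m : ℝ) + a + 1) * (n + m + a + b + 1)) * h4

open Polynomial in
lemma jD_pP {a b : ℝ} (ha : 0 < a) (hb : 0 < b) (n : ℕ) :
    jD a b (pP a b n) = - C ((n : ℝ) * (n + a + b + 1)) * pP a b n := by
  ext m
  rw [jD_coeff, pP_coeff_succ ha hb, ← C_neg, coeff_C_mul]
  ring

lemma pP_coeff_zero_pos {a b : ℝ} (ha : 0 < a) (hb : 0 < b) (n : ℕ) : 0 < (pP a b n).coeff 0 := by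
  rw [pP_coeff]
  have h1 := Real.Gamma_pos_of_pos (s := a + 1) (by positivity)
  have h2 := Real.Gamma_pos_of_pos (s := n + a + b + 1) (by positivity)
  simp; positivity

open Polynomial in
lemma eigen_unique {a b : ℝ} (ha : 0 < a) (hb : 0 < b) (n : ℕ) (f : ℝ[X])
    (hf : jD a b f = - C ((n : ℝ) * (n + a + b + 1)) * f) :
    f = C (f.coeff 0 / (pP a b n).coeff 0) * pP a b n := by
  have h0 := (pP_coeff_zero_pos ha hb n).ne'
  ext m
  rw [coeff_C_mul]
  induction m with
  | zero => field_simp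
  | succ m ih =>
    have e := congrArg (fun g => coeff g m) hf
    simp only [jD_coeff, ← C_neg, coeff_C_mul] at e
    have e2 := pP_coeff_succ ha hb n m
    have h1 : ((m : ℝ) + 1) * (m + 1 + a) ≠ 0 := by positivity
    apply mul_left_cancel₀ h1
    rw [mul_left_comm, e2]
    rw [ih] at e
    linear_combination e

/-- `B_n`. -/
def BB (a b : ℝ) (n : ℕ) : ℝ := (2 * n + a + b + 1) * Real.Gamma (n + a + 1) /
  ((n.factorial : ℝ) * Real.Gamma (n + b + 1) * Real.Gamma (n + a + b + 1))

/-- `1/((k-n)! Γ(k+n+a+b+2))`. -/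
def bb (a b : ℝ) (k n : ℕ) : ℝ := 1 / (((k - n).factorial : ℝ) * Real.Gamma (k + n + a + b + 2))

lemma bb_succ {a b : ℝ} (ha : 0 < a) (hb : 0 < b) (k n : ℕ) (h : n ≤ k) :
    (((k + 1 : ℕ) : ℝ) * ((k + 1 : ℕ) + a + b + 1) - n * (n + a + b + 1)) * bb a b (k + 1) n =
      bb a b k n := by
  unfold bb
  have h2 := Real.Gamma_add_one (s := k + n + a + b + 2) (by positivity)
  have h3 := Real.Gamma_pos_of_pos (s := k + n + a + b + 2) (by positivity)
  rw [show k + 1 - n = (k - n) + 1 by omega, Nat.factorial_succ,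
    show ((k + 1 : ℕ) : ℝ) + n + a + b + 2 = (k + n + a + b + 2) + 1 by push_cast; ring, h2]
  push_cast [Nat.cast_sub h]
  have h4 : (0 : ℝ) < (k : ℝ) - n + 1 := by
    have : (n : ℝ) ≤ k := by exact_mod_cast h
    linarith
  have h5 : (k : ℝ) + n + a + b + 2 ≠ 0 := by positivity
  field_simp
  ring

open Polynomial in
/-- The remainder polynomial. -/
def RP (a b : ℝ) (k : ℕ) (y : ℝ) : ℝ[X] :=
  GP a b k y - ∑ n ∈ Finset.range (k + 1), C (BB a b n * bb a b k n * (pP a b n).eval y) * pP a b n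

open Polynomial in
lemma jD_neg (a b : ℝ) (f : ℝ[X]) : jD a b (-f) = - jD a b f := by
  have := jD_C_mul a b (-1) f
  simpa using this

open Polynomial in
lemma jD_RP {a b : ℝ} (ha : 0 < a) (hb : 0 < b) (k : ℕ) (hR : ∀ j < k, ∀ y, RP a b j y = 0)
    (y : ℝ) : jD a b (RP a b k y) = - C ((k : ℝ) * (k + a + b + 1)) * RP a b k y := by
  rcases k with _ | k
  · rw [RP, sub_eq_add_neg, jD_add, jD_neg, jD_GP_zero]
    rw [zero_add, Finset.sum_range_one, jD_C_mul, jD_pP ha hb]; simp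
  · have h := hR k (by omega) y
    rw [RP, sub_eq_zero] at h
    rw [RP, sub_eq_add_neg, jD_add, jD_neg, jD_GP_succ ha hb, jD_sum, h]
    rw [mul_add (-C _), mul_neg, Finset.mul_sum, ← Finset.sum_neg_distrib, ← Finset.sum_neg_distrib]
    rw [Finset.sum_range_succ _ (k + 1), Finset.sum_range_succ _ (k + 1)]
    rw [add_assoc]
    congr 1
    rw [← add_assoc]
    rw [← Finset.sum_add_distrib]
    congr 1
    · refine Finset.sum_congr rfl fun n hn => ?_
      have hn' : n ≤ k := by simpa [Nat.lt_succ_iff] using hn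
      rw [jD_C_mul, jD_pP ha hb, ← bb_succ ha hb k n hn']
      simp only [C_mul, C_sub]
      ring
    · rw [jD_C_mul, jD_pP ha hb]; ring

open Polynomial in
lemma GP_eval (a b : ℝ) (k : ℕ) (x y : ℝ) : (GP a b k y).eval x =
    ∑ q ∈ Finset.HasAntidiagonal.antidiagonal k, cf a q.1 * cf b q.2 * ((x * y) ^ q.1 * ((1 - x) * (1 - y)) ^ q.2) := by
  unfold GP
  rw [eval_finsetSum]
  refine Finset.sum_congr rfl fun q _ => ?_
  simp [mul_pow]; ring

open Polynomial in
lemma RP_symm (a b : ℝ) (k : ℕ) (x y : ℝ) : (RP a b k y).eval x = (RP a b k x).eval y := by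
  unfold RP
  rw [eval_sub, eval_sub, GP_eval, GP_eval, eval_finsetSum, eval_finsetSum]
  congr 1
  · refine Finset.sum_congr rfl fun q _ => ?_
    rw [mul_comm x y, mul_comm (1 - x)]
  · refine Finset.sum_congr rfl fun q _ => ?_
    simp; ring

open Polynomial in
lemma coeff_one_sub_pow (k : ℕ) : ((1 - X : ℝ[X]) ^ k).coeff k = (-1) ^ k := by
  rw [show (1 - X : ℝ[X]) = - (X - C 1) by simp, neg_pow, ← C_1, ← C_neg, ← C_pow, coeff_C_mul]
  have h : ((X - C (1:ℝ)) ^ k).Monic := (monic_X_sub_C 1).pow k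
  have h2 : ((X - C (1:ℝ)) ^ k).natDegree = k := by
    rw [(monic_X_sub_C (1:ℝ)).natDegree_pow, natDegree_X_sub_C, mul_one]
  have := h.coeff_natDegree
  rw [h2] at this
  rw [this]; simp

open Polynomial in
lemma RP_coeff {a b : ℝ} (ha : 0 < a) (hb : 0 < b) (k : ℕ) : (RP a b k 0).coeff k = 0 := by
  have hG : GP a b k 0 = C (cf a 0 * cf b k) * (1 - X) ^ k := by
    unfold GP
    rw [Finset.sum_eq_single (0, k)]
    · simp
    · rintro ⟨i, j⟩ hq hne
      rw [Finset.HasAntidiagonal.mem_antidiagonal] at hq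
      have : i ≠ 0 := by
        rintro rfl
        apply hne; simp at hq; simp [hq]
      simp [this]
    · simp
  unfold RP
  rw [coeff_sub, hG, coeff_C_mul, coeff_one_sub_pow, finsetSum_coeff, Finset.sum_range_succ,
    Finset.sum_eq_zero]
  · rw [coeff_C_mul, zero_add, ← coeff_zero_eq_eval_zero, pP_coeff, pP_coeff]
    unfold cf BB bb
    have h2 := Real.Gamma_add_one (s := k + k + a + b + 1) (by positivity)
    have h3 := Real.Gamma_pos_of_pos (s := k + k + a + b + 1) (by positivity)
    have h4 := Real.Gamma_pos_of_pos (s := k + a + b + 1) (by positivity)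
    have h5 := Real.Gamma_pos_of_pos (s := k + a + 1) (by positivity)
    have h6 := Real.Gamma_pos_of_pos (s := k + b + 1) (by positivity)
    have h7 := Real.Gamma_pos_of_pos (s := a + 1) (by positivity)
    rw [show (k : ℝ) + k + a + b + 2 = (k + k + a + b + 1) + 1 by ring, h2]
    simp
    have : (k : ℝ) + k + a + b + 1 ≠ 0 := by positivity
    field_simp
    ring
  · intro n hn
    have : n.choose k = 0 := Nat.choose_eq_zero_of_lt (by simpa using hn)
    rw [coeff_C_mul, pP_coeff, this]; simp

open Polynomial in
lemma RP_eq_zero {a b : ℝ} (ha : 0 < a) (hb : 0 < b) (k : ℕ) : ∀ y, RP a b k y = 0 := by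
  induction k using Nat.strong_induction_on with
  | _ k ih =>
    have key : ∀ y, RP a b k y = C ((RP a b k y).coeff 0 / (pP a b k).coeff 0) * pP a b k :=
      fun y => eigen_unique ha hb k _ (jD_RP ha hb k ih y)
    have h0 : RP a b k 0 = 0 := by
      have h := key 0
      have hc := RP_coeff ha hb k
      rw [h, coeff_C_mul, mul_eq_zero] at hc
      rcases hc with hc | hc
      · rw [h, hc]; simp
      · exfalso
        revert hc
        rw [pP_coeff]
        have h3 := Real.Gamma_pos_of_pos (s := k + k + a + b + 1) (by positivity)
        have h5 := Real.Gamma_pos_of_pos (s := k + a + 1) (by positivity)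
        simp
        constructor <;> positivity
    intro y
    rw [key y, coeff_zero_eq_eval_zero, RP_symm, h0]
    simp

/-- Bateman-type expansion. -/
theorem G_expand {a b : ℝ} (ha : 0 < a) (hb : 0 < b) (k : ℕ) (x y : ℝ) :
    ∑ q ∈ Finset.HasAntidiagonal.antidiagonal k,
      cf a q.1 * cf b q.2 * ((x * y) ^ q.1 * ((1 - x) * (1 - y)) ^ q.2) =
    ∑ n ∈ Finset.range (k + 1), BB a b n * bb a b k n * ((pP a b n).eval x * (pP a b n).eval y) := by
  have h := RP_eq_zero ha hb k y
  rw [RP, sub_eq_zero] at h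
  rw [← GP_eval, h, Polynomial.eval_finsetSum]
  refine Finset.sum_congr rfl fun q _ => ?_
  simp; ring

end JK

namespace JK

lemma alt_sum_succ (f : ℕ → ℝ) (n : ℕ) :
    ∑ m ∈ Finset.range (n + 2), (-1 : ℝ) ^ m * ((n + 1).choose m : ℝ) * f m =
    ∑ m ∈ Finset.range (n + 1), (-1 : ℝ) ^ m * (n.choose m : ℝ) * f m -
    ∑ m ∈ Finset.range (n + 1), (-1 : ℝ) ^ m * (n.choose m : ℝ) * f (m + 1) := by
  rw [Finset.sum_range_succ']
  have h1 : ∀ m, (-1 : ℝ) ^ (m + 1) * ((n + 1).choose (m + 1) : ℝ) * f (m + 1) =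
      (-1 : ℝ) ^ (m + 1) * (n.choose (m + 1) : ℝ) * f (m + 1) -
      (-1 : ℝ) ^ m * (n.choose m : ℝ) * f (m + 1) := by
    intro m
    rw [Nat.choose_succ_succ]; push_cast; ring
  simp only [h1, Finset.sum_sub_distrib]
  have h2 : ∑ m ∈ Finset.range (n + 1), (-1 : ℝ) ^ m * (n.choose m : ℝ) * f m =
      ∑ m ∈ Finset.range (n + 1), (-1 : ℝ) ^ (m + 1) * (n.choose (m + 1) : ℝ) * f (m + 1) + f 0 := by
    have h3 := Finset.sum_range_succ' (fun m => (-1 : ℝ) ^ m * (n.choose m : ℝ) * f m) (n + 1)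
    rw [Finset.sum_range_succ] at h3
    simpa using h3
  rw [h2]
  simp
  ring

lemma chu_vandermonde (n : ℕ) : ∀ (z w : ℝ), 0 < z → 0 < w →
    ∑ m ∈ Finset.range (n + 1), (-1 : ℝ) ^ m * (n.choose m : ℝ) *
      (Real.Gamma (z + m) / Real.Gamma (w + m)) =
    Real.Gamma z / Real.Gamma (w + n) * ∏ l ∈ Finset.range n, (w - z + l) := by
  induction n with
  | zero => intro z w hz hw; simp
  | succ n ih =>
    intro z w hz hw
    rw [alt_sum_succ (fun m => Real.Gamma (z + m) / Real.Gamma (w + m)), ih z w hz hw]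
    have h := ih (z + 1) (w + 1) (by linarith) (by linarith)
    have e : ∀ m : ℕ, Real.Gamma (z + ((m + 1 : ℕ) : ℝ)) / Real.Gamma (w + ((m + 1 : ℕ) : ℝ)) =
        Real.Gamma (z + 1 + m) / Real.Gamma (w + 1 + m) := by
      intro m; push_cast; rw [add_comm (m : ℝ) 1, ← add_assoc, ← add_assoc]
    simp only [e]
    rw [h, Real.Gamma_add_one hz.ne', Finset.prod_range_succ,
      show w + ((n + 1 : ℕ) : ℝ) = (w + n) + 1 by push_cast; ring,
      show w + 1 + (n : ℝ) = (w + n) + 1 by ring, Real.Gamma_add_one (by positivity)]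
    have h2 := Real.Gamma_pos_of_pos (s := w + n) (by positivity)
    have h3 : w + n ≠ 0 := by positivity
    rw [show w + 1 - (z + 1) = w - z by ring]
    field_simp
    ring

/-- Moment integrals. -/
def II (p q : ℝ) : ℝ := ∫ θ in (0:ℝ)..π, Real.sin (θ / 2) ^ p * Real.cos (θ / 2) ^ q

lemma cont_sc {p q : ℝ} (hp : 0 ≤ p) (hq : 0 ≤ q) :
    Continuous fun θ : ℝ => Real.sin (θ / 2) ^ p * Real.cos (θ / 2) ^ q := by
  refine Continuous.mul ?_ ?_
  · exact (Real.continuous_sin.comp (continuous_id.div_const 2)).rpow_const fun x => Or.inr hp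
  · exact (Real.continuous_cos.comp (continuous_id.div_const 2)).rpow_const fun x => Or.inr hq

lemma sc_nonneg {θ : ℝ} (h : θ ∈ Icc (0:ℝ) π) : 0 ≤ Real.sin (θ / 2) ∧ 0 ≤ Real.cos (θ / 2) := by
  constructor
  · exact Real.sin_nonneg_of_nonneg_of_le_pi (by linarith [h.1]) (by linarith [h.2, Real.pi_pos])
  · exact Real.cos_nonneg_of_neg_pi_div_two_le_of_le (by linarith [h.1, Real.pi_pos])
      (by linarith [h.2])

lemma rpow_add_two' {x p : ℝ} (hx : 0 ≤ x) (hp : 0 < p) : x ^ (p + 2) = x ^ p * x ^ 2 := by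
  rw [Real.rpow_add' hx (by positivity)]; norm_num

lemma II_add {p q : ℝ} (hp : 0 < p) (hq : 0 < q) : II (p + 2) q + II p (q + 2) = II p q := by
  unfold II
  rw [← intervalIntegral.integral_add
    ((cont_sc (by positivity) hq.le).intervalIntegrable _ _)
    ((cont_sc hp.le (by positivity)).intervalIntegrable _ _)]
  apply intervalIntegral.integral_congr
  intro θ hθ
  rw [uIcc_of_le Real.pi_pos.le] at hθ
  obtain ⟨h1, h2⟩ := sc_nonneg hθ
  simp only
  rw [rpow_add_two' h1 hp, rpow_add_two' h2 hq]
  linear_combination (Real.sin (θ / 2) ^ p * Real.cos (θ / 2) ^ q) * Real.sin_sq_add_cos_sq (θ / 2)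

lemma II_ftc {p q : ℝ} (hp : 0 < p) (hq : 0 < q) : (p + 1) * II p (q + 2) = (q + 1) * II (p + 2) q := by
  have hd : ∀ θ ∈ uIcc (0:ℝ) π, HasDerivAt
      (fun θ : ℝ => Real.sin (θ / 2) ^ (p + 1) * Real.cos (θ / 2) ^ (q + 1))
      ((p + 1) / 2 * (Real.sin (θ / 2) ^ p * Real.cos (θ / 2) ^ (q + 2)) -
       (q + 1) / 2 * (Real.sin (θ / 2) ^ (p + 2) * Real.cos (θ / 2) ^ q)) θ := by
    intro θ hθ
    rw [uIcc_of_le Real.pi_pos.le] at hθ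
    obtain ⟨h1, h2⟩ := sc_nonneg hθ
    have hh : HasDerivAt (fun θ : ℝ => θ / 2) (1 / 2) θ := (hasDerivAt_id θ).div_const 2
    have hs : HasDerivAt (fun θ : ℝ => Real.sin (θ / 2)) (Real.cos (θ / 2) * (1 / 2)) θ := hh.sin
    have hc : HasDerivAt (fun θ : ℝ => Real.cos (θ / 2)) (-Real.sin (θ / 2) * (1 / 2)) θ := hh.cos
    have hs' := hs.rpow_const (p := p + 1) (Or.inr (by linarith))
    have hc' := hc.rpow_const (p := q + 1) (Or.inr (by linarith))
    refine (hs'.mul hc').congr_deriv ?_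
    rw [rpow_add_two' h1 hp, rpow_add_two' h2 hq, add_sub_cancel_right, add_sub_cancel_right,
      Real.rpow_add_one' h1 (by positivity), Real.rpow_add_one' h2 (by positivity)]
    ring
  have hc1 := (cont_sc (p := p) (q := q + 2) hp.le (by positivity)).intervalIntegrable
    (μ := volume) 0 π
  have hc2 := (cont_sc (p := p + 2) (q := q) (by positivity) hq.le).intervalIntegrable
    (μ := volume) 0 π
  have h := intervalIntegral.integral_eq_sub_of_hasDerivAt hd
    ((hc1.const_mul _).sub (hc2.const_mul _))
  rw [intervalIntegral.integral_sub (hc1.const_mul _) (hc2.const_mul _),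
    intervalIntegral.integral_const_mul, intervalIntegral.integral_const_mul] at h
  have e1 : p + 1 ≠ 0 := by positivity
  have e2 : q + 1 ≠ 0 := by positivity
  simp [Real.zero_rpow e1, Real.zero_rpow e2] at h
  unfold II
  linarith

lemma II_pos {p q : ℝ} (hp : 0 < p) (hq : 0 < q) : 0 < II p q := by
  unfold II
  apply intervalIntegral.intervalIntegral_pos_of_pos_on
    ((cont_sc hp.le hq.le).intervalIntegrable _ _) _ Real.pi_pos
  intro θ hθ
  have h1 : 0 < Real.sin (θ / 2) :=
    Real.sin_pos_of_pos_of_lt_pi (by linarith [hθ.1]) (by linarith [hθ.2, Real.pi_pos])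
  have h2 : 0 < Real.cos (θ / 2) :=
    Real.cos_pos_of_mem_Ioo ⟨by linarith [hθ.1, Real.pi_pos], by linarith [hθ.2]⟩
  positivity

/-- The normalizing constant `c₀`. -/
def c0 (a b : ℝ) : ℝ := II (2 * a + 1) (2 * b + 1) * Real.Gamma (a + b + 2) /
  (Real.Gamma (a + 1) * Real.Gamma (b + 1))

lemma c0_pos {a b : ℝ} (ha : 0 < a) (hb : 0 < b) : 0 < c0 a b := by
  unfold c0
  have h1 := Real.Gamma_pos_of_pos (s := a + b + 2) (by positivity)
  have h2 := Real.Gamma_pos_of_pos (s := a + 1) (by positivity)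
  have h3 := Real.Gamma_pos_of_pos (s := b + 1) (by positivity)
  have h4 := II_pos (p := 2 * a + 1) (q := 2 * b + 1) (by positivity) (by positivity)
  positivity

lemma II_step1 {a b : ℝ} (ha : 0 < a) (hb : 0 < b) (i j : ℕ) :
    ((a + b + 2) + i + j) * II (2 * a + 1 + 2 * (i + 1 : ℕ)) (2 * b + 1 + 2 * j) =
      (i + a + 1) * II (2 * a + 1 + 2 * i) (2 * b + 1 + 2 * j) := by
  have h1 := II_add (p := 2 * a + 1 + 2 * i) (q := 2 * b + 1 + 2 * j) (by positivity) (by positivity)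
  have h2 := II_ftc (p := 2 * a + 1 + 2 * i) (q := 2 * b + 1 + 2 * j) (by positivity) (by positivity)
  rw [show 2 * a + 1 + 2 * ((i + 1 : ℕ) : ℝ) = 2 * a + 1 + 2 * i + 2 by push_cast; ring]
  linear_combination (i + a + 1) * h1 - (1/2) * h2

lemma II_step2 {a b : ℝ} (ha : 0 < a) (hb : 0 < b) (i j : ℕ) :
    ((a + b + 2) + i + j) * II (2 * a + 1 + 2 * i) (2 * b + 1 + 2 * (j + 1 : ℕ)) =
      (j + b + 1) * II (2 * a + 1 + 2 * i) (2 * b + 1 + 2 * j) := by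
  have h1 := II_add (p := 2 * a + 1 + 2 * i) (q := 2 * b + 1 + 2 * j) (by positivity) (by positivity)
  have h2 := II_ftc (p := 2 * a + 1 + 2 * i) (q := 2 * b + 1 + 2 * j) (by positivity) (by positivity)
  rw [show 2 * b + 1 + 2 * ((j + 1 : ℕ) : ℝ) = 2 * b + 1 + 2 * j + 2 by push_cast; ring]
  linear_combination (j + b + 1) * h1 + (1/2) * h2

lemma II_eq {a b : ℝ} (ha : 0 < a) (hb : 0 < b) (i j : ℕ) :
    II (2 * a + 1 + 2 * i) (2 * b + 1 + 2 * j) =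
      c0 a b * Real.Gamma (i + a + 1) * Real.Gamma (j + b + 1) / Real.Gamma (i + j + a + b + 2) := by
  induction i with
  | zero =>
    induction j with
    | zero =>
      unfold c0
      have h1 := Real.Gamma_pos_of_pos (s := a + b + 2) (by positivity)
      have h2 := Real.Gamma_pos_of_pos (s := a + 1) (by positivity)
      have h3 := Real.Gamma_pos_of_pos (s := b + 1) (by positivity)
      simp
      field_simp
    | succ j ih =>
      have h := II_step2 ha hb 0 j
      rw [ih] at h
      have h0 : (a + b + 2) + ((0 : ℕ) : ℝ) + j ≠ 0 := by positivity
      apply mul_left_cancel₀ h0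
      rw [h, show ((0 : ℕ) : ℝ) + ((j + 1 : ℕ) : ℝ) + a + b + 2 = ((0 : ℕ) : ℝ) + j + a + b + 2 + 1 by
        push_cast; ring, Real.Gamma_add_one (s := ((0 : ℕ) : ℝ) + j + a + b + 2) (by positivity),
        show ((j + 1 : ℕ) : ℝ) + b + 1 = j + b + 1 + 1 by push_cast; ring,
        Real.Gamma_add_one (s := j + b + 1) (by positivity)]
      have h1 := Real.Gamma_pos_of_pos (s := ((0 : ℕ) : ℝ) + j + a + b + 2) (by positivity)
      have h5 : ((0 : ℕ) : ℝ) + j + a + b + 2 ≠ 0 := by positivity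
      field_simp
      ring
  | succ i ih =>
    have h := II_step1 ha hb i j
    rw [ih] at h
    have h0 : (a + b + 2) + (i : ℝ) + j ≠ 0 := by positivity
    apply mul_left_cancel₀ h0
    rw [h, show ((i + 1 : ℕ) : ℝ) + (j : ℝ) + a + b + 2 = (i : ℝ) + j + a + b + 2 + 1 by
      push_cast; ring, Real.Gamma_add_one (s := (i : ℝ) + j + a + b + 2) (by positivity),
      show ((i + 1 : ℕ) : ℝ) + a + 1 = i + a + 1 + 1 by push_cast; ring,
      Real.Gamma_add_one (s := i + a + 1) (by positivity)]
    have h1 := Real.Gamma_pos_of_pos (s := (i : ℝ) + j + a + b + 2) (by positivity)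
    have h5 : (i : ℝ) + j + a + b + 2 ≠ 0 := by positivity
    field_simp
    ring

/-- The weight. -/
def ww (a b θ : ℝ) : ℝ := Real.sin (θ / 2) ^ (2 * a + 1) * Real.cos (θ / 2) ^ (2 * b + 1)

open Polynomial in
/-- The moment functional. -/
def Lam (a b : ℝ) (f : ℝ[X]) : ℝ := ∫ θ in (0:ℝ)..π, ww a b θ * f.eval (Real.sin (θ / 2) ^ 2)

open Polynomial in
lemma Lam_cont {a b : ℝ} (ha : 0 < a) (hb : 0 < b) (f : ℝ[X]) :
    Continuous fun θ : ℝ => ww a b θ * f.eval (Real.sin (θ / 2) ^ 2) := by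
  refine (cont_sc (by positivity) (by positivity)).mul ?_
  have : Continuous fun θ : ℝ => Real.sin (θ / 2) ^ 2 := by fun_prop
  exact f.continuous.comp this

open Polynomial in
lemma Lam_sum {a b : ℝ} (ha : 0 < a) (hb : 0 < b) {ι : Type*} (s : Finset ι) (c : ι → ℝ)
    (f : ι → ℝ[X]) : Lam a b (∑ i ∈ s, C (c i) * f i) = ∑ i ∈ s, c i * Lam a b (f i) := by
  unfold Lam
  simp only [← intervalIntegral.integral_const_mul]
  rw [← intervalIntegral.integral_finset_sum]
  · congr 1; ext θ
    rw [eval_finsetSum, Finset.mul_sum]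
    refine Finset.sum_congr rfl fun i _ => ?_
    simp; ring
  · intro i _
    exact ((Lam_cont ha hb (f i)).intervalIntegrable _ _).const_mul _

open Polynomial in
lemma Lam_mono {a b : ℝ} (ha : 0 < a) (hb : 0 < b) (i j : ℕ) :
    Lam a b (X ^ i * (1 - X) ^ j) =
      c0 a b * Real.Gamma (i + a + 1) * Real.Gamma (j + b + 1) / Real.Gamma (i + j + a + b + 2) := by
  rw [← II_eq ha hb]
  unfold Lam II
  apply intervalIntegral.integral_congr
  intro θ hθ
  rw [uIcc_of_le Real.pi_pos.le] at hθ
  obtain ⟨h1, h2⟩ := sc_nonneg hθ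
  simp only [ww]
  rw [Real.rpow_add' (y := 2 * a + 1) (z := 2 * (i:ℝ)) h1 (by positivity), Real.rpow_add' (y := 2 * b + 1) (z := 2 * (j:ℝ)) h2 (by positivity)]
  have e : ∀ n : ℕ, (2 * (n : ℝ)) = ((2 * n : ℕ) : ℝ) := by intro n; push_cast; ring
  rw [e i, e j, Real.rpow_natCast, Real.rpow_natCast, pow_mul, pow_mul]
  have : 1 - Real.sin (θ / 2) ^ 2 = Real.cos (θ / 2) ^ 2 := by
    linarith [Real.sin_sq_add_cos_sq (θ / 2)]
  simp [this]
  ring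

open Polynomial in
lemma pP_eq_sum (a b : ℝ) (n : ℕ) : pP a b n = ∑ m ∈ Finset.range (n + 1),
    C ((-1) ^ m * (n.choose m : ℝ) * Real.Gamma (n + m + a + b + 1) / Real.Gamma (m + a + 1)) *
      X ^ m := by
  unfold pP
  simp only [C_mul_X_pow_eq_monomial]

open Polynomial in
lemma Lam_pP {a b : ℝ} (ha : 0 < a) (hb : 0 < b) (n k : ℕ) :
    Lam a b (pP a b n * (1 - X) ^ k) = c0 a b * Real.Gamma (k + b + 1) *
      (Real.Gamma (n + a + b + 1) / Real.Gamma (k + a + b + 2 + n) *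
        ∏ l ∈ Finset.range n, ((k : ℝ) + 1 - n + l)) := by
  rw [pP_eq_sum, Finset.sum_mul]
  simp only [mul_assoc (C _)]
  rw [Lam_sum ha hb]
  simp only [Lam_mono ha hb]
  have h := chu_vandermonde n (n + a + b + 1) (k + a + b + 2) (by positivity) (by positivity)
  have e : ∀ l : ℕ, (k : ℝ) + a + b + 2 - (n + a + b + 1) + l = (k : ℝ) + 1 - n + l := by
    intro l; ring
  simp only [e] at h
  rw [← h, Finset.mul_sum]
  refine Finset.sum_congr rfl fun m _ => ?_
  rw [show (m : ℝ) + k + a + b + 2 = k + a + b + 2 + m by ring,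
    show (n : ℝ) + m + a + b + 1 = n + a + b + 1 + m by ring]
  have h2 := Real.Gamma_pos_of_pos (s := m + a + 1) (by positivity)
  field_simp

open Polynomial in
lemma pP_natDegree {a b : ℝ} (ha : 0 < a) (hb : 0 < b) (n : ℕ) : (pP a b n).natDegree = n := by
  apply le_antisymm
  · rw [natDegree_le_iff_coeff_eq_zero]
    intro m hm
    rw [pP_coeff, Nat.choose_eq_zero_of_lt hm]; simp
  · apply le_natDegree_of_ne_zero
    rw [pP_coeff]
    have h3 := Real.Gamma_pos_of_pos (s := n + n + a + b + 1) (by positivity)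
    have h5 := Real.Gamma_pos_of_pos (s := n + a + 1) (by positivity)
    simp
    constructor <;> positivity

open Polynomial in
lemma Lam_sq {a b : ℝ} (ha : 0 < a) (hb : 0 < b) (n : ℕ) :
    Lam a b (pP a b n * pP a b n) = c0 a b / BB a b n := by
  have ht := sum_taylor_eq (pP a b n) 1
  rw [sum_over_range' _ _ (n + 1) (by rw [natDegree_taylor, pP_natDegree ha hb]; omega)] at ht
  · have e : pP a b n * pP a b n = ∑ i ∈ Finset.range (n + 1),
        C ((taylor 1 (pP a b n)).coeff i * (-1) ^ i) * (pP a b n * (1 - X) ^ i) := by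
      conv_lhs => arg 2; rw [← ht]
      rw [Finset.mul_sum]
      refine Finset.sum_congr rfl fun i _ => ?_
      rw [C_mul, C_pow, C_neg, C_1, show (X - 1 : ℝ[X]) = (-1) * (1 - X) by ring, mul_pow]
      ring
    rw [e, Lam_sum ha hb, Finset.sum_range_succ, Finset.sum_eq_zero, zero_add, Lam_pP ha hb]
    · have hc := coeff_taylor_natDegree (r := (1:ℝ)) (f := pP a b n)
      rw [leadingCoeff, pP_natDegree ha hb, pP_coeff] at hc
      rw [hc]
      have hf : ∀ n : ℕ, ∏ l ∈ Finset.range n, ((n : ℝ) + 1 - n + l) = n.factorial := by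
        intro n
        rw [← Finset.prod_range_add_one_eq_factorial]
        push_cast
        refine Finset.prod_congr rfl fun i _ => by ring
      rw [hf]
      unfold BB
      have h2 := Real.Gamma_add_one (s := n + n + a + b + 1) (by positivity)
      have h3 := Real.Gamma_pos_of_pos (s := n + n + a + b + 1) (by positivity)
      have h4 := Real.Gamma_pos_of_pos (s := n + a + b + 1) (by positivity)
      have h5 := Real.Gamma_pos_of_pos (s := n + a + 1) (by positivity)
      have h6 := Real.Gamma_pos_of_pos (s := n + b + 1) (by positivity)
      rw [show (n : ℝ) + a + b + 2 + n = (n + n + a + b + 1) + 1 by ring, h2]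
      have h7 : (n : ℝ) + n + a + b + 1 ≠ 0 := by positivity
      have h8 : 2 * (n : ℝ) + a + b + 1 ≠ 0 := by positivity
      have h9 : ((-1 : ℝ) ^ n) * (-1) ^ n = 1 := by rw [← mul_pow]; simp
      simp only [Nat.choose_self, Nat.cast_one, mul_one]
      field_simp
      linear_combination (c0 a b * (2 * (n : ℝ) + a + b + 1)) * h9
    · intro i hi
      have hi' : i < n := by simpa using hi
      rw [Lam_pP ha hb]
      have : ∏ l ∈ Finset.range n, ((i : ℝ) + 1 - n + l) = 0 := by
        apply Finset.prod_eq_zero (i := n - 1 - i) (by simp; omega)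
        rw [Nat.sub_sub, Nat.cast_sub (by omega)]; push_cast; ring
      rw [this]; simp
  · simp

lemma jacobiP_eq {a b : ℝ} (ha : 0 < a) (hb : 0 < b) (n : ℕ) (θ : ℝ) :
    jacobiP a b n (Real.cos θ) = Real.Gamma (a + n + 1) / ((n.factorial : ℝ) * Real.Gamma (a + b + n + 1)) *
      (pP a b n).eval (Real.sin (θ / 2) ^ 2) := by
  unfold jacobiP
  rw [pP_eq_sum, Polynomial.eval_finsetSum, Finset.mul_sum]
  refine Finset.sum_congr rfl fun m hm => ?_
  have hm' : m ≤ n := by simpa [Nat.lt_succ_iff] using hm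
  have hx : (Real.cos θ - 1) / 2 = - Real.sin (θ / 2) ^ 2 := by
    have := Real.cos_sq' (θ / 2)
    have h2 := Real.cos_two_mul (θ / 2)
    rw [show 2 * (θ / 2) = θ by ring] at h2
    rw [h2, this]; ring
  rw [hx, neg_pow, Nat.cast_choose ℝ hm']
  simp only [Polynomial.eval_mul, Polynomial.eval_C, Polynomial.eval_pow, Polynomial.eval_X]
  rw [show (n : ℝ) + m + a + b + 1 = a + b + n + m + 1 by ring, show (m : ℝ) + a + 1 = a + m + 1 by ring]
  have h4 := Real.Gamma_pos_of_pos (s := a + b + n + 1) (by positivity)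
  have h5 := Real.Gamma_pos_of_pos (s := a + m + 1) (by positivity)
  field_simp

lemma integral_plus (a b : ℝ) (f : ℝ → ℝ) :
    ∫ θ, f θ ∂(jacobiMeasurePlus a b) = ∫ θ in (0:ℝ)..π, ww a b θ * f θ := by
  have hm : Measurable fun θ => ENNReal.ofReal (jPsi a b θ ^ 2) := by
    unfold jPsi; fun_prop
  unfold jacobiMeasurePlus jacobiMeasure
  rw [MeasureTheory.restrict_withDensity measurableSet_Ioo, Measure.restrict_restrict measurableSet_Ioo]
  have hs : Ioo (0:ℝ) π ∩ Ioo (-π) π = Ioo 0 π := by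
    ext x; simp only [mem_inter_iff, mem_Ioo]
    constructor
    · exact fun h => h.1
    · exact fun h => ⟨h, by linarith [h.1, Real.pi_pos], h.2⟩
  rw [hs, integral_withDensity_eq_integral_toReal_smul hm (by simp),
    intervalIntegral.integral_of_le Real.pi_pos.le, integral_Ioc_eq_integral_Ioo]
  apply setIntegral_congr_fun measurableSet_Ioo
  intro θ hθ
  obtain ⟨h1, h2⟩ := sc_nonneg (Ioo_subset_Icc_self hθ)
  simp only [smul_eq_mul]
  rw [ENNReal.toReal_ofReal (sq_nonneg _)]
  congr 1
  unfold jPsi ww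
  rw [abs_of_nonneg h1, mul_pow, ← Real.rpow_natCast, ← Real.rpow_natCast, ← Real.rpow_mul h1,
    ← Real.rpow_mul h2]
  congr 2 <;> push_cast <;> ring

lemma BB_pos {a b : ℝ} (ha : 0 < a) (hb : 0 < b) (n : ℕ) : 0 < BB a b n := by
  unfold BB
  have h4 := Real.Gamma_pos_of_pos (s := n + a + b + 1) (by positivity)
  have h5 := Real.Gamma_pos_of_pos (s := n + a + 1) (by positivity)
  have h6 := Real.Gamma_pos_of_pos (s := n + b + 1) (by positivity)
  positivity

theorem trigP_mul {a b : ℝ} (ha : 0 < a) (hb : 0 < b) (n : ℕ) (θ φ : ℝ) :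
    trigP a b n θ * trigP a b n φ = BB a b n / c0 a b *
      ((pP a b n).eval (Real.sin (θ / 2) ^ 2) * (pP a b n).eval (Real.sin (φ / 2) ^ 2)) := by
  unfold trigP
  set κ : ℝ := Real.Gamma (a + n + 1) / ((n.factorial : ℝ) * Real.Gamma (a + b + n + 1)) with hκ
  have hκ0 : 0 < κ := by
    have h4 := Real.Gamma_pos_of_pos (s := a + b + n + 1) (by positivity)
    have h5 := Real.Gamma_pos_of_pos (s := a + n + 1) (by positivity)
    positivity
  have hI : ∫ θ, jacobiP a b n (Real.cos θ) ^ 2 ∂(jacobiMeasurePlus a b) =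
      κ ^ 2 * (c0 a b / BB a b n) := by
    rw [integral_plus, ← Lam_sq ha hb, Lam, ← intervalIntegral.integral_const_mul]
    congr 1; ext θ
    rw [jacobiP_eq ha hb, ← hκ]
    simp; ring
  have hB := BB_pos ha hb n
  have hc := c0_pos ha hb
  have hcJ : cJ a b n * cJ a b n = (κ ^ 2 * (c0 a b / BB a b n))⁻¹ := by
    unfold cJ
    rw [hI, ← Real.rpow_add (by positivity), ← Real.rpow_neg_one]
    norm_num
  rw [jacobiP_eq ha hb, jacobiP_eq ha hb, ← hκ]
  rw [show ∀ c x y : ℝ, c * (κ * x) * (c * (κ * y)) = (c * c) * κ ^ 2 * (x * y) by intros; ring, hcJ]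
  congr 1
  field_simp

end JK

namespace JK

/-- coefficients for the one-variable generating function -/
def fE (s : ℝ) (m : ℕ) : ℝ := Real.Gamma (s + 2 * m) / (4 ^ m * (m.factorial : ℝ) * Real.Gamma (m + s + 1))

lemma fE_pos {s : ℝ} (hs : 0 < s) (m : ℕ) : 0 < fE s m := by
  unfold fE
  have h1 := Real.Gamma_pos_of_pos (s := s + 2 * m) (by positivity)
  have h2 := Real.Gamma_pos_of_pos (s := m + s + 1) (by positivity)
  positivity

lemma fE_succ {s : ℝ} (hs : 0 < s) (m : ℕ) :
    fE s (m + 1) * (4 * (m + 1) * (m + 1 + s)) = fE s m * ((s + 2 * m) * (s + 2 * m + 1)) := by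
  unfold fE
  have h1 := Real.Gamma_pos_of_pos (s := s + 2 * m) (by positivity)
  have h2 := Real.Gamma_pos_of_pos (s := m + s + 1) (by positivity)
  have e1 : Real.Gamma (s + 2 * ((m + 1 : ℕ) : ℝ)) = (s + 2 * m + 1) * ((s + 2 * m) * Real.Gamma (s + 2 * m)) := by
    rw [← Real.Gamma_add_one (by positivity), ← Real.Gamma_add_one (by positivity)]
    push_cast; congr 1; ring
  have e2 : Real.Gamma (((m + 1 : ℕ) : ℝ) + s + 1) = (m + s + 1) * Real.Gamma (m + s + 1) := by
    rw [← Real.Gamma_add_one (by positivity)]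
    push_cast; congr 1; ring
  rw [e1, e2, Nat.factorial_succ]
  push_cast
  have : (m : ℝ) + s + 1 ≠ 0 := by positivity
  have : (m : ℝ) + 1 ≠ 0 := by positivity
  have : (m.factorial : ℝ) ≠ 0 := by positivity
  field_simp
  ring

lemma fE_summable {s : ℝ} (hs : 0 < s) (j : ℕ) {q : ℝ} (hq : 0 < q) (hq1 : q < 1) :
    Summable (fun m : ℕ => (s + 2 * m) ^ j * fE s m * q ^ m) := by
  refine summable_of_ratio_test_tendsto_lt_one (l := q) hq1 ?_ ?_
  · filter_upwards with m
    have := fE_pos hs m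
    positivity
  · have hlim : ∀ x : ℝ, Filter.Tendsto (fun m : ℕ => x / (m : ℝ)) Filter.atTop (nhds 0) :=
      fun x => tendsto_const_div_atTop_nhds_zero_nat x
    have key : Filter.Tendsto (fun m : ℕ => ((s / m + 2 + 2 / m) / (s / m + 2)) ^ j *
        (((s / m + 2) * (s / m + 2 + 1 / m)) / (4 * (1 + 1 / m) * (1 + 1 / m + s / m))) * q)
        Filter.atTop (nhds (((0 + 2 + 0) / (0 + 2)) ^ j *
        (((0 + 2) * (0 + 2 + 0)) / (4 * (1 + 0) * (1 + 0 + 0))) * q)) := by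
      have c := fun x : ℝ => (tendsto_const_nhds (x := x) (f := (Filter.atTop : Filter ℕ)))
      refine Filter.Tendsto.mul (Filter.Tendsto.mul (Filter.Tendsto.pow (Filter.Tendsto.div ?_ ?_ (by norm_num)) j)
        (Filter.Tendsto.div (Filter.Tendsto.mul ?_ ?_) (Filter.Tendsto.mul (Filter.Tendsto.mul (c 4) ?_) ?_) (by norm_num))) (c q)
      · exact ((hlim s).add (c 2)).add (hlim 2)
      · exact (hlim s).add (c 2)
      · exact (hlim s).add (c 2)
      · exact ((hlim s).add (c 2)).add (hlim 1)
      · exact (c 1).add (hlim 1)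
      · exact ((c 1).add (hlim 1)).add (hlim s)
    have e : ((0 + 2 + 0) / (0 + 2)) ^ j *
        (((0 + 2) * (0 + 2 + 0)) / (4 * (1 + 0) * (1 + 0 + 0))) * q = q := by norm_num
    rw [e] at key
    refine key.congr' ?_
    filter_upwards [Filter.eventually_gt_atTop 0] with m hm
    have hm' : (0:ℝ) < m := by exact_mod_cast hm
    have h0 := fE_pos hs m
    have h1 := fE_pos hs (m + 1)
    rw [Real.norm_of_nonneg (by positivity), Real.norm_of_nonneg (by positivity)]
    have h2 := fE_succ hs m
    have h3 : fE s (m + 1) = fE s m * ((s + 2 * m) * (s + 2 * m + 1)) / (4 * (m + 1) * (m + 1 + s)) := by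
      rw [eq_div_iff (by positivity)]; exact h2
    rw [h3]
    have e1 : (s / m + 2 + 2 / m) / (s / m + 2) = (s + 2 * ((m + 1 : ℕ) : ℝ)) / (s + 2 * m) := by
      push_cast; field_simp
      ring
    rw [e1, div_pow, pow_succ]
    have : (s + 2 * (m:ℝ)) ^ j ≠ 0 := by positivity
    have : (q ^ m) ≠ 0 := by positivity
    have : (m : ℝ) + 1 ≠ 0 := by positivity
    have : (m : ℝ) + 1 + s ≠ 0 := by positivity
    field_simp

lemma cosh_half_gt {t : ℝ} (ht : 0 < t) : 1 < Real.cosh (t / 2) :=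
  Real.one_lt_cosh.2 (by positivity)

lemma rpow_split {c s : ℝ} (hc : 0 < c) (m : ℕ) :
    c ^ (-(s + 2 * (m:ℝ))) = c ^ (-s) * ((c ^ 2)⁻¹) ^ m := by
  rw [neg_add, Real.rpow_add hc, Real.rpow_neg hc.le (2 * (m : ℝ)), inv_pow, ← pow_mul, 
    ← Real.rpow_natCast c (2 * m)]
  push_cast; rfl

lemma summ_aux {s : ℝ} (hs : 0 < s) (j : ℕ) {c : ℝ} (hc : 1 < c) :
    Summable (fun m : ℕ => (s + 2 * m) ^ j * fE s m * c ^ (-(s + 2 * (m : ℝ)))) := by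
  have h0 : 0 < c := by linarith
  have := (fE_summable hs j (q := (c ^ 2)⁻¹) (by positivity) (inv_lt_one_of_one_lt₀ (by nlinarith))).mul_left (c ^ (-s))
  refine this.congr fun m => ?_
  rw [rpow_split h0]; ring

def FE (s t : ℝ) : ℝ := ∑' m : ℕ, fE s m * Real.cosh (t / 2) ^ (-(s + 2 * (m : ℝ)))
def EE (s t : ℝ) : ℝ := ∑' m : ℕ, (s + 2 * m) * fE s m * (Real.sinh (t / 2) * Real.cosh (t / 2) ^ (-(s + 2 * (m : ℝ)) - 1))

lemma hasDerivAt_cosh_half (t : ℝ) : HasDerivAt (fun t => Real.cosh (t / 2)) (Real.sinh (t / 2) / 2) t := by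
  have := (Real.hasDerivAt_cosh (t / 2)).comp t ((hasDerivAt_id t).div_const 2)
  refine this.congr_deriv ?_; ring

lemma hasDerivAt_sinh_half (t : ℝ) : HasDerivAt (fun t => Real.sinh (t / 2)) (Real.cosh (t / 2) / 2) t := by
  have := (Real.hasDerivAt_sinh (t / 2)).comp t ((hasDerivAt_id t).div_const 2)
  refine this.congr_deriv ?_; ring

lemma abs_sinh_le_cosh (x : ℝ) : |Real.sinh x| ≤ Real.cosh x := by
  rw [abs_le]
  constructor
  · have := Real.cosh_add_sinh x; have := Real.exp_pos x; linarith
  · exact (Real.sinh_lt_cosh x).le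

lemma cosh_half_mono {t₀ t : ℝ} (h0 : 0 < t₀) (h : t₀ < t) : Real.cosh (t₀ / 2) ≤ Real.cosh (t / 2) := by
  rw [Real.cosh_le_cosh, abs_of_pos (by linarith), abs_of_pos (by linarith)]; linarith

lemma rpow_anti {c₀ c e : ℝ} (h0 : 0 < c₀) (h : c₀ ≤ c) (he : 0 ≤ e) : c ^ (-e) ≤ c₀ ^ (-e) :=
  Real.rpow_le_rpow_of_nonpos h0 h (by linarith)

lemma FE_deriv {s : ℝ} (hs : 0 < s) {t : ℝ} (ht : 0 < t) : HasDerivAt (FE s) (-(EE s t) / 2) t := by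
  have ht0 : 0 < t / 2 := by positivity
  have h := hasDerivAt_tsum_of_isPreconnected (y₀ := t) (y := t) (t := Ioi (t / 2))
    (g := fun (m : ℕ) t => fE s m * Real.cosh (t / 2) ^ (-(s + 2 * (m : ℝ))))
    (g' := fun (m : ℕ) t => -(1/2) * ((s + 2 * m) * fE s m * (Real.sinh (t / 2) * Real.cosh (t / 2) ^ (-(s + 2 * (m : ℝ)) - 1))))
    (summ_aux hs 1 (cosh_half_gt ht0)) isOpen_Ioi isPreconnected_Ioi ?_ ?_ (by simp; linarith) ?_ (by simp; linarith)
  · rw [tsum_mul_left] at h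
    refine h.congr_deriv ?_
    unfold EE; ring
  · intro m y _
    have hc := Real.cosh_pos (y / 2)
    have := ((hasDerivAt_cosh_half y).rpow_const (p := -(s + 2 * (m : ℝ))) (Or.inl hc.ne')).const_mul (fE s m)
    refine this.congr_deriv ?_; ring
  · intro m y hy
    have hc := Real.cosh_pos (y / 2)
    have hf := fE_pos hs m
    have h1 := cosh_half_mono ht0 hy
    rw [norm_mul, norm_mul ((s + 2 * m) * fE s m), norm_mul (Real.sinh _), Real.norm_of_nonneg (r := (s + 2 * m) * fE s m) (by positivity),
      Real.norm_of_nonneg (r := Real.cosh (y/2) ^ _) (by positivity), Real.norm_eq_abs (Real.sinh _)]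
    rw [Real.rpow_sub_one hc.ne', pow_one]
    have h2 := abs_sinh_le_cosh (y / 2)
    have h3 := rpow_anti (Real.cosh_pos _) h1 (e := s + 2 * (m:ℝ)) (by positivity)
    have h4 : |Real.sinh (y / 2)| * (Real.cosh (y / 2) ^ (-(s + 2 * (m:ℝ))) / Real.cosh (y / 2)) ≤ Real.cosh (t / 2 / 2) ^ (-(s + 2 * (m:ℝ))) := by
      calc _ ≤ Real.cosh (y / 2) * (Real.cosh (y / 2) ^ (-(s + 2 * (m:ℝ))) / Real.cosh (y / 2)) := by gcongr
        _ = Real.cosh (y / 2) ^ (-(s + 2 * (m:ℝ))) := by field_simp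
        _ ≤ _ := h3
    have h5 : ‖-(1 / 2 : ℝ)‖ ≤ 1 := by norm_num
    calc _ ≤ 1 * ((s + 2 * m) * fE s m * Real.cosh (t / 2 / 2) ^ (-(s + 2 * (m:ℝ)))) := by gcongr
      _ = _ := by ring
  · simpa using summ_aux hs 0 (cosh_half_gt ht)

lemma EE_summable {s : ℝ} (hs : 0 < s) {t : ℝ} (ht : 0 < t) : Summable (fun m : ℕ => (s + 2 * m) * fE s m * (Real.sinh (t / 2) * Real.cosh (t / 2) ^ (-(s + 2 * (m : ℝ)) - 1))) := by
  have := (summ_aux hs 1 (cosh_half_gt ht)).mul_left (Real.sinh (t / 2) / Real.cosh (t / 2))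
  refine this.congr fun m => ?_
  rw [Real.rpow_sub_one (Real.cosh_pos _).ne']
  ring

lemma EE_deriv {s : ℝ} (hs : 0 < s) {t : ℝ} (ht : 0 < t) : HasDerivAt (EE s) (-(s ^ 2 / 2) * FE s t) t := by
  have ht0 : 0 < t / 2 := by positivity
  have hu : Summable (fun m : ℕ => (s + 2 * m) * fE s m * ((s + 2 * m + 2) * Real.cosh (t/2/2) ^ (-(s + 2 * (m:ℝ))))) := by
    refine ((summ_aux hs 2 (cosh_half_gt ht0)).add ((summ_aux hs 1 (cosh_half_gt ht0)).mul_left 2)).congr fun m => ?_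
    ring
  have h := hasDerivAt_tsum_of_isPreconnected (y₀ := t) (y := t) (t := Ioi (t / 2))
    (g := fun (m : ℕ) t => (s + 2 * m) * fE s m * (Real.sinh (t / 2) * Real.cosh (t / 2) ^ (-(s + 2 * (m : ℝ)) - 1)))
    (g' := fun (m : ℕ) t => (s + 2 * m) * fE s m * (1 / 2 * (-(s + 2 * m) * Real.cosh (t / 2) ^ (-(s + 2 * (m : ℝ))) + (s + 2 * m + 1) * Real.cosh (t / 2) ^ (-(s + 2 * ((m + 1 : ℕ) : ℝ))))))
    hu isOpen_Ioi isPreconnected_Ioi ?_ ?_ (by simp; linarith) (EE_summable hs ht) (by simp; linarith)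
  · refine h.congr_deriv ?_
    have hA := summ_aux hs 2 (cosh_half_gt ht)
    have hB : Summable (fun m : ℕ => fE s m * (4 * m * (m + s)) * Real.cosh (t / 2) ^ (-(s + 2 * (m : ℝ)))) := by
      refine Summable.of_nonneg_of_le (fun m => ?_) (fun m => ?_) hA
      · have := fE_pos hs m
        have := Real.cosh_pos (t / 2)
        positivity
      · have := fE_pos hs m
        have := Real.cosh_pos (t / 2)
        apply mul_le_mul_of_nonneg_right _ (by positivity)
        nlinarith [sq_nonneg s]
    have hB1 := (summable_nat_add_iff 1).2 hB
    have hsplit : (∑' m : ℕ, (s + 2 * m) * fE s m * (1 / 2 * (-(s + 2 * m) * Real.cosh (t / 2) ^ (-(s + 2 * (m : ℝ))) + (s + 2 * m + 1) * Real.cosh (t / 2) ^ (-(s + 2 * ((m + 1 : ℕ) : ℝ)))))) =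
        -(1/2) * (∑' m : ℕ, (s + 2 * m) ^ 2 * fE s m * Real.cosh (t / 2) ^ (-(s + 2 * (m : ℝ)))) +
        (1/2) * ∑' m : ℕ, fE s m * (4 * m * (m + s)) * Real.cosh (t / 2) ^ (-(s + 2 * (m : ℝ))) := by
      rw [hB.tsum_eq_zero_add, ← tsum_mul_left, mul_add, ← tsum_mul_left]
      simp only [Nat.cast_zero, mul_zero, zero_mul, zero_add]
      rw [← Summable.tsum_add (hA.mul_left _) (hB1.mul_left _)]
      refine tsum_congr fun m => ?_
      have := fE_succ hs m
      push_cast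
      linear_combination (-(1/2) * Real.cosh (t / 2) ^ (-(s + 2 * ((m : ℝ) + 1)))) * this
    rw [hsplit, ← tsum_mul_left, ← tsum_mul_left, ← Summable.tsum_add (hA.mul_left _) (hB.mul_left _)]
    unfold FE
    rw [← tsum_mul_left]
    refine tsum_congr fun m => ?_
    ring
  · intro m y _
    have hc := Real.cosh_pos (y / 2)
    have := (((hasDerivAt_sinh_half y).mul ((hasDerivAt_cosh_half y).rpow_const (p := -(s + 2 * (m : ℝ)) - 1) (Or.inl hc.ne')))).const_mul ((s + 2 * m) * fE s m)
    refine this.congr_deriv ?_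
    have e1 : Real.cosh (y/2) ^ (-(s + 2 * (m:ℝ)) - 1) = Real.cosh (y/2) ^ (-(s + 2 * (m:ℝ))) / Real.cosh (y/2) := Real.rpow_sub_one hc.ne' _
    have e2 : Real.cosh (y/2) ^ (-(s + 2 * (m:ℝ)) - 1 - 1) = Real.cosh (y/2) ^ (-(s + 2 * (m:ℝ))) / Real.cosh (y/2) / Real.cosh (y/2) := by
      rw [Real.rpow_sub_one hc.ne', e1]
    have e3 : Real.cosh (y/2) ^ (-(s + 2 * ((m + 1 : ℕ):ℝ))) = Real.cosh (y/2) ^ (-(s + 2 * (m:ℝ))) / Real.cosh (y/2) / Real.cosh (y/2) := by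
      rw [← e2]; congr 1; push_cast; ring
    rw [e1, e2, e3]
    have h2 : Real.sinh (y/2) ^ 2 = Real.cosh (y/2) ^ 2 - 1 := by rw [Real.cosh_sq]; ring
    field_simp
    rw [h2]; ring
  · intro m y hy
    have hc := Real.cosh_pos (y / 2)
    have hc1 := Real.one_le_cosh (y / 2)
    have hf := fE_pos hs m
    have h1 := cosh_half_mono ht0 hy
    rw [norm_mul, Real.norm_of_nonneg (r := (s + 2 * m) * fE s m) (by positivity)]
    have h3 := rpow_anti (Real.cosh_pos _) h1 (e := s + 2 * (m:ℝ)) (by positivity)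
    have h4 : Real.cosh (y / 2) ^ (-(s + 2 * ((m + 1 : ℕ):ℝ))) ≤ Real.cosh (t / 2 / 2) ^ (-(s + 2 * (m:ℝ))) := by
      refine le_trans (Real.rpow_le_rpow_of_exponent_le hc1 ?_) h3
      push_cast; linarith
    have h5 : 0 ≤ Real.cosh (y / 2) ^ (-(s + 2 * ((m + 1 : ℕ):ℝ))) := by positivity
    have h6 : 0 ≤ Real.cosh (y / 2) ^ (-(s + 2 * (m:ℝ))) := by positivity
    apply mul_le_mul_of_nonneg_left _ (by positivity)
    have hk : 0 ≤ s + 2 * (m:ℝ) := by positivity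
    rw [Real.norm_eq_abs, abs_le]
    have h7 := mul_le_mul_of_nonneg_left h3 hk
    have h8 := mul_le_mul_of_nonneg_left h4 hk
    have h9 := mul_nonneg hk h5
    have h10 := mul_nonneg hk h6
    constructor <;> nlinarith

end JK

namespace JK

lemma const_of_deriv_zero {g : ℝ → ℝ} (hg : ∀ t, 0 < t → HasDerivAt g 0 t) {x y : ℝ} (hx : 0 < x) (hy : 0 < y) :
    g x = g y := by
  have hd : DifferentiableOn ℝ g (Ioi 0) := fun t ht => (hg t ht).differentiableAt.differentiableWithinAt
  exact isOpen_Ioi.is_const_of_deriv_eq_zero isPreconnected_Ioi hd (fun t ht => (hg t ht).deriv) hx hy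

lemma FE_summable {s : ℝ} (hs : 0 < s) {t : ℝ} (ht : 0 < t) :
    Summable (fun m : ℕ => fE s m * Real.cosh (t / 2) ^ (-(s + 2 * (m : ℝ)))) := by
  simpa using summ_aux hs 0 (cosh_half_gt ht)

lemma cosh_half_tendsto : Filter.Tendsto (fun t : ℝ => Real.exp (t / 2) * (Real.cosh (t / 2))⁻¹) Filter.atTop (nhds 2) := by
  have h : ∀ t : ℝ, Real.exp (t / 2) * (Real.cosh (t / 2))⁻¹ = 2 / (1 + Real.exp (-t)) := by
    intro t
    have h1 := Real.exp_pos (t/2)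
    have e : Real.exp (-t) = Real.exp (-(t/2)) * Real.exp (-(t/2)) := by rw [← Real.exp_add]; ring_nf
    rw [Real.cosh_eq, e, Real.exp_neg]
    field_simp
  simp only [h]
  have : Filter.Tendsto (fun t : ℝ => 2 / (1 + Real.exp (-t))) Filter.atTop (nhds (2 / (1 + 0))) :=
    tendsto_const_nhds.div (tendsto_const_nhds.add (Real.tendsto_exp_neg_atTop_nhds_zero)) (by norm_num)
  simpa using this

lemma FE_le {s : ℝ} (hs : 0 < s) {t : ℝ} (ht : 1 < t) : 0 ≤ FE s t ∧ FE s t ≤ FE s 1 := by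
  constructor
  · exact tsum_nonneg fun m => mul_nonneg (fE_pos hs m).le (Real.rpow_nonneg (Real.cosh_pos _).le _)
  · refine (FE_summable hs (by linarith)).tsum_le_tsum (fun m => ?_) (FE_summable hs one_pos)
    exact mul_le_mul_of_nonneg_left (rpow_anti (Real.cosh_pos _) (cosh_half_mono one_pos ht) (by positivity)) (fE_pos hs m).le

lemma EE_le {s : ℝ} (hs : 0 < s) {t : ℝ} (ht : 1 < t) : 0 ≤ EE s t ∧ EE s t ≤ 
    ∑' m : ℕ, (s + 2 * m) ^ 1 * fE s m * Real.cosh (1 / 2) ^ (-(s + 2 * (m : ℝ))) := by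
  have hc := Real.cosh_pos (t / 2)
  have hsh : 0 ≤ Real.sinh (t / 2) := Real.sinh_nonneg_iff.2 (by linarith)
  constructor
  · refine tsum_nonneg fun m => ?_
    have := fE_pos hs m
    positivity
  · refine (EE_summable hs (by linarith)).tsum_le_tsum (fun m => ?_) (summ_aux hs 1 (cosh_half_gt one_pos))
    have h1 := (rpow_anti (Real.cosh_pos _) (cosh_half_mono one_pos ht) (e := s + 2 * (m:ℝ)) (by positivity))
    have := fE_pos hs m
    rw [pow_one]
    apply mul_le_mul_of_nonneg_left _ (by positivity)
    rw [Real.rpow_sub_one hc.ne']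
    have h2 := abs_sinh_le_cosh (t / 2)
    rw [abs_of_nonneg hsh] at h2
    calc _ ≤ Real.cosh (t / 2) * (Real.cosh (t / 2) ^ (-(s + 2 * (m:ℝ))) / Real.cosh (t / 2)) := by gcongr
        _ = Real.cosh (t / 2) ^ (-(s + 2 * (m:ℝ))) := by field_simp
        _ ≤ _ := h1

lemma EE_eq_FE {s : ℝ} (hs : 0 < s) {t : ℝ} (ht : 0 < t) : EE s t = s * FE s t := by
  set g : ℝ → ℝ := fun t => (EE s t - s * FE s t) * Real.exp (-(s / 2 * t)) with hgdef
  have hg : ∀ t, 0 < t → HasDerivAt g 0 t := by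
    intro t ht
    have h1 := (EE_deriv hs ht).sub ((FE_deriv hs ht).const_mul s)
    have h2 : HasDerivAt (fun t => Real.exp (-(s / 2 * t))) (Real.exp (-(s/2*t)) * (-(s/2))) t := by
      have h3 : HasDerivAt (fun t : ℝ => -(s / 2 * t)) (-(s/2)) t := by
        have := ((hasDerivAt_id t).const_mul (s/2)).neg
        refine this.congr_deriv ?_; simp
      exact h3.exp
    refine (h1.mul h2).congr_deriv ?_
    simp only [Pi.sub_apply]
    ring
  have hc : ∀ x, 0 < x → g t = g x := fun x hx => const_of_deriv_zero hg ht hx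
  have hlim : Filter.Tendsto g Filter.atTop (nhds 0) := by
    set K := (∑' m : ℕ, (s + 2 * m) ^ 1 * fE s m * Real.cosh (1 / 2) ^ (-(s + 2 * (m : ℝ)))) + s * FE s 1
    have h0 : Filter.Tendsto (fun t : ℝ => K * Real.exp (-(s / 2 * t))) Filter.atTop (nhds 0) := by
      have : Filter.Tendsto (fun t : ℝ => Real.exp (-(s / 2 * t))) Filter.atTop (nhds 0) :=
        Real.tendsto_exp_neg_atTop_nhds_zero.comp (Filter.tendsto_id.const_mul_atTop (by positivity))
      simpa using this.const_mul K
    refine squeeze_zero_norm' ?_ h0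
    filter_upwards [Filter.eventually_gt_atTop 1] with x hx
    simp only [hgdef]
    rw [norm_mul, Real.norm_of_nonneg (r := Real.exp _) (by positivity)]
    gcongr
    obtain ⟨a1, a2⟩ := FE_le hs hx
    obtain ⟨a3, a4⟩ := EE_le hs hx
    have a5 := mul_le_mul_of_nonneg_left a2 hs.le
    have a6 := mul_nonneg hs.le a1
    rw [Real.norm_eq_abs, abs_le]
    constructor <;> simp only [K] <;> linarith
  have hz : g t = 0 := by
    refine tendsto_nhds_unique ?_ hlim
    refine Filter.Tendsto.congr' ?_ (tendsto_const_nhds)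
    filter_upwards [Filter.eventually_gt_atTop 0] with x hx using hc x hx
  have := Real.exp_pos (-(s / 2 * t))
  have h := (mul_eq_zero.1 hz).resolve_right this.ne'
  linarith

lemma FE_eq {s : ℝ} (hs : 0 < s) {t : ℝ} (ht : 0 < t) : FE s t * Real.exp (s / 2 * t) = 2 ^ s / s := by
  set g : ℝ → ℝ := fun t => FE s t * Real.exp (s / 2 * t) with hgdef
  have hg : ∀ t, 0 < t → HasDerivAt g 0 t := by
    intro t ht
    have h2 : HasDerivAt (fun t => Real.exp (s / 2 * t)) (Real.exp (s/2*t) * (s/2)) t := by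
      have h3 : HasDerivAt (fun t : ℝ => s / 2 * t) (s/2) t := by
        have := ((hasDerivAt_id t).const_mul (s/2))
        refine this.congr_deriv ?_; simp
      exact h3.exp
    refine ((FE_deriv hs ht).mul h2).congr_deriv ?_
    rw [EE_eq_FE hs ht]
    ring
  have hc : ∀ x, 0 < x → g t = g x := fun x hx => const_of_deriv_zero hg ht hx
  -- the limit at infinity
  have hf0 : fE s 0 = 1 / s := by
    unfold fE
    simp [Real.Gamma_add_one hs.ne']
    have := Real.Gamma_pos_of_pos hs
    field_simp
  have hH : Filter.Tendsto (fun t : ℝ => FE s t * Real.cosh (t / 2) ^ s) Filter.atTop (nhds (1 / s)) := by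
    have hform : ∀ t : ℝ, 0 < t → FE s t * Real.cosh (t / 2) ^ s = ∑' m : ℕ, fE s m * ((Real.cosh (t / 2) ^ 2)⁻¹) ^ m := by
      intro t ht
      unfold FE
      rw [← tsum_mul_right]
      refine tsum_congr fun m => ?_
      have hc := Real.cosh_pos (t / 2)
      rw [rpow_split hc, Real.rpow_neg hc.le]
      have : Real.cosh (t / 2) ^ s ≠ 0 := by positivity
      field_simp
    have hfs : ∀ q : ℝ, 0 < q → q < 1 → Summable (fun m : ℕ => fE s m * q ^ m) := by
      intro q h0 h1; simpa using fE_summable hs 0 h0 h1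
    have hq0 : (0:ℝ) < 1 / 2 := by norm_num
    set K := ∑' m : ℕ, fE s (m + 1) * (1 / 2 : ℝ) ^ m
    have hKs : Summable (fun m : ℕ => fE s (m + 1) * (1 / 2 : ℝ) ^ m) := by
      have := ((summable_nat_add_iff 1).2 (hfs (1/2) hq0 (by norm_num))).mul_left 2
      refine this.congr fun m => ?_
      rw [pow_succ]; ring
    have hq : Filter.Tendsto (fun t : ℝ => (Real.cosh (t / 2) ^ 2)⁻¹) Filter.atTop (nhds 0) := by
      apply Filter.Tendsto.inv_tendsto_atTop
      have : ∀ t : ℝ, t ≤ Real.cosh (t / 2) ^ 2 := by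
        intro t
        have h1 := Real.cosh_sq (t/2)
        have h2 : t / 2 + 1 ≤ Real.exp (t / 2) := Real.add_one_le_exp _
        have h3 := Real.cosh_add_sinh (t/2)
        have h4 := Real.one_le_cosh (t / 2)
        rcases le_or_gt t 0 with h | h
        · nlinarith
        · have : t / 2 ≤ Real.sinh (t / 2) := Real.self_le_sinh_iff.2 (by linarith)
          nlinarith [sq_nonneg (t/2 - 1)]
      exact Filter.tendsto_atTop_mono this Filter.tendsto_id
    have hub : Filter.Tendsto (fun t : ℝ => 1 / s + (Real.cosh (t / 2) ^ 2)⁻¹ * K) Filter.atTop (nhds (1 / s)) := by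
      simpa using (tendsto_const_nhds (x := 1 / s)).add (hq.mul_const K)
    have hev : ∀ᶠ t : ℝ in Filter.atTop, (Real.cosh (t / 2) ^ 2)⁻¹ < 1 / 2 := hq.eventually_lt_const hq0
    have hev2 : ∀ᶠ t : ℝ in Filter.atTop, FE s t * Real.cosh (t / 2) ^ s = 1 / s + (Real.cosh (t / 2) ^ 2)⁻¹ * ∑' m : ℕ, fE s (m + 1) * ((Real.cosh (t / 2) ^ 2)⁻¹) ^ m := by
      filter_upwards [hev, Filter.eventually_gt_atTop 0] with t h1 h2
      have hc := Real.cosh_pos (t / 2)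
      rw [hform t h2, (hfs _ (by positivity) (by linarith)).tsum_eq_zero_add, ← tsum_mul_left, hf0]
      simp only [pow_zero, mul_one]
      congr 1
      refine tsum_congr fun m => ?_
      rw [pow_succ]; ring
    refine tendsto_of_tendsto_of_tendsto_of_le_of_le' tendsto_const_nhds hub ?_ ?_
    · filter_upwards [hev2] with t h2
      have hc := Real.cosh_pos (t / 2)
      rw [h2]
      have : 0 ≤ ∑' m : ℕ, fE s (m + 1) * ((Real.cosh (t / 2) ^ 2)⁻¹) ^ m :=
        tsum_nonneg fun m => mul_nonneg (fE_pos hs _).le (by positivity)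
      have : 0 ≤ (Real.cosh (t / 2) ^ 2)⁻¹ * ∑' m : ℕ, fE s (m + 1) * ((Real.cosh (t / 2) ^ 2)⁻¹) ^ m := by positivity
      linarith
    · filter_upwards [hev2, hev] with t h2 h1
      have hc := Real.cosh_pos (t / 2)
      rw [h2]
      have hle : ∀ m : ℕ, fE s (m + 1) * ((Real.cosh (t / 2) ^ 2)⁻¹) ^ m ≤ fE s (m + 1) * (1 / 2 : ℝ) ^ m := by
        intro m
        have := fE_pos hs (m+1)
        gcongr
      have hsum : Summable (fun m : ℕ => fE s (m + 1) * ((Real.cosh (t / 2) ^ 2)⁻¹) ^ m) :=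
        Summable.of_nonneg_of_le (fun m => mul_nonneg (fE_pos hs _).le (by positivity)) hle hKs
      have := hsum.tsum_le_tsum hle hKs
      gcongr
  have hlim : Filter.Tendsto g Filter.atTop (nhds (1 / s * 2 ^ s)) := by
    have h1 := hH.mul (cosh_half_tendsto.rpow_const (p := s) (Or.inl two_ne_zero))
    refine h1.congr fun t => ?_
    have hc := Real.cosh_pos (t / 2)
    simp only [hgdef]
    rw [Real.mul_rpow (by positivity) (by positivity), Real.inv_rpow hc.le, ← Real.exp_mul]
    have : Real.cosh (t / 2) ^ s ≠ 0 := by positivity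
    rw [show t / 2 * s = s / 2 * t by ring]
    field_simp
  have : g t = 1 / s * 2 ^ s := by
    refine tendsto_nhds_unique ?_ hlim
    refine Filter.Tendsto.congr' ?_ (tendsto_const_nhds)
    filter_upwards [Filter.eventually_gt_atTop 0] with x hx using hc x hx
  simp only [hgdef] at this
  rw [this]; ring

/-- The generating identity. -/
lemma E_hasSum {s : ℝ} (hs : 0 < s) {t : ℝ} (ht : 0 < t) :
    HasSum (fun m : ℕ => Real.Gamma (s + 2 * m + 1) / (4 ^ m * (m.factorial : ℝ) * Real.Gamma (m + s + 1)) *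
      (Real.sinh (t / 2) * (Real.cosh (t / 2) ^ (-(s + 1)) * ((Real.cosh (t / 2) ^ 2)⁻¹) ^ m)))
      (2 ^ s * Real.exp (-(s / 2 * t))) := by
  have h := (EE_summable hs ht).hasSum
  have h1 : ∑' m : ℕ, (s + 2 * m) * fE s m * (Real.sinh (t / 2) * Real.cosh (t / 2) ^ (-(s + 2 * (m : ℝ)) - 1)) =
      2 ^ s * Real.exp (-(s / 2 * t)) := by
    have h2 := EE_eq_FE hs ht
    have h3 := FE_eq hs ht
    unfold EE at h2
    rw [h2, Real.exp_neg]
    have := Real.exp_pos (s / 2 * t)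
    field_simp at h3 ⊢
    exact h3
  rw [h1] at h
  refine h.congr_fun ?_ 
  intro m
  rw [Real.Gamma_add_one (by positivity), ← rpow_split (Real.cosh_pos _)]
  unfold fE
  rw [show -(s + 2 * (m:ℝ)) - 1 = -(s + 1 + 2 * (m:ℝ)) by ring]
  ring

end JK

namespace JK

lemma II_pos' {p q : ℝ} (hp : 0 ≤ p) (hq : 0 ≤ q) : 0 < II p q := by
  unfold II
  apply intervalIntegral.intervalIntegral_pos_of_pos_on
    ((cont_sc hp hq).intervalIntegrable _ _) _ Real.pi_pos
  intro θ hθ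
  have h1 : 0 < Real.sin (θ / 2) :=
    Real.sin_pos_of_pos_of_lt_pi (by linarith [hθ.1]) (by linarith [hθ.2, Real.pi_pos])
  have h2 : 0 < Real.cos (θ / 2) := Real.cos_pos_of_mem_Ioo ⟨by linarith [hθ.1, Real.pi_pos], by linarith [hθ.2]⟩
  positivity

/-- `cf a i (2i)! / 4^i`. -/
def vB (a : ℝ) (i : ℕ) : ℝ := cf a i * ((2 * i).factorial : ℝ) / 4 ^ i

lemma vB_pos {a : ℝ} (ha : 0 < a) (i : ℕ) : 0 < vB a i := by
  have := cf_pos ha i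
  unfold vB; positivity

lemma vB_succ {a : ℝ} (ha : 0 < a) (i : ℕ) : (i + a + 1) * vB a (i + 1) = (i + 1 / 2) * vB a i := by
  unfold vB
  rw [← cf_succ ha i, show 2 * (i + 1) = 2 * i + 1 + 1 by ring, Nat.factorial_succ, Nat.factorial_succ]
  push_cast
  field_simp
  ring

lemma II_rec {a : ℝ} (ha : 0 < a) (i : ℕ) : (((i + 1 : ℕ) : ℝ) + a + 1) * II (2 * a) (2 * ((i + 2 : ℕ) : ℝ)) =
    (((i + 1 : ℕ) : ℝ) + 1 / 2) * II (2 * a) (2 * ((i + 1 : ℕ) : ℝ)) := by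
  have h1 := II_add (p := 2 * a) (q := 2 * ((i + 1 : ℕ) : ℝ)) (by positivity) (by positivity)
  have h2 := II_ftc (p := 2 * a) (q := 2 * ((i + 1 : ℕ) : ℝ)) (by positivity) (by positivity)
  have e : 2 * ((i + 1 : ℕ) : ℝ) + 2 = 2 * ((i + 2 : ℕ) : ℝ) := by push_cast; ring
  rw [e] at h1 h2
  have h3 : II (2 * a + 2) (2 * ((i + 1 : ℕ) : ℝ)) = II (2 * a) (2 * ((i + 1 : ℕ) : ℝ)) - II (2 * a) (2 * ((i + 2 : ℕ) : ℝ)) := by linarith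
  rw [h3] at h2
  push_cast at h2 ⊢
  linarith

lemma vB_le {a : ℝ} (ha : 0 < a) : ∃ K : ℝ, 0 < K ∧ ∀ i : ℕ, vB a i ≤ K * II (2 * a) (2 * (i : ℝ)) := by
  have hp : ∀ i : ℕ, 0 < II (2 * a) (2 * (i : ℝ)) := fun i => II_pos' (by positivity) (by positivity)
  have hv := vB_pos ha
  have h1 : ∀ i : ℕ, vB a (i + 1) = vB a 1 / II (2 * a) (2 * ((1 : ℕ) : ℝ)) * II (2 * a) (2 * ((i + 1 : ℕ) : ℝ)) := by
    intro i
    induction i with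
    | zero =>
      have := hp 1
      rw [zero_add, div_mul_cancel₀ _ this.ne']
    | succ i ih =>
      have e1 := vB_succ ha (i + 1)
      have e2 := II_rec ha i
      have h0 : (((i + 1 : ℕ) : ℝ) + a + 1) ≠ 0 := by positivity
      rw [ih] at e1
      apply mul_left_cancel₀ h0
      rw [e1]
      linear_combination (-(vB a 1 / II (2 * a) (2 * ((1 : ℕ) : ℝ)))) * e2
  refine ⟨vB a 1 / II (2 * a) (2 * ((1 : ℕ) : ℝ)) + vB a 0 / II (2 * a) (2 * ((0 : ℕ) : ℝ)), ?_, ?_⟩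
  · have := hp 1; have := hp 0; have := hv 1; have := hv 0; positivity
  · intro i
    have a1 := hp 1; have a2 := hp 0; have a3 := hv 1; have a4 := hv 0; have a5 := hp i
    rw [add_mul]
    rcases i with _ | i
    · have : vB a 0 / II (2 * a) (2 * ((0 : ℕ) : ℝ)) * II (2 * a) (2 * ((0 : ℕ) : ℝ)) = vB a 0 := by
        field_simp
      rw [this]
      have : 0 ≤ vB a 1 / II (2 * a) (2 * ((1 : ℕ) : ℝ)) * II (2 * a) (2 * ((0 : ℕ) : ℝ)) := by positivity
      linarith
    · rw [h1 i]
      have : 0 ≤ vB a 0 / II (2 * a) (2 * ((0 : ℕ) : ℝ)) * II (2 * a) (2 * ((i + 1 : ℕ) : ℝ)) := by positivity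
      linarith

lemma gauss_bound {a : ℝ} (ha : 0 < a) : ∃ K : ℝ, 0 < K ∧ ∀ z : ℝ, 0 ≤ z →
    ∫ θ in (0:ℝ)..π, Real.sin (θ / 2) ^ (2 * a) * Real.exp (z * Real.cos (θ / 2)) ≤
      K * (Real.exp z * (1 + z) ^ (-(a + 1 / 2))) := by
  set c : ℝ := 1 / (2 * π ^ 2) with hc
  have hcp : 0 < c := by positivity
  refine ⟨Real.exp 1 * (c ^ (-(a + 1/2)) * (1 / 2) * Real.Gamma (a + 1 / 2)), ?_, ?_⟩
  · have := Real.Gamma_pos_of_pos (s := a + 1/2) (by positivity)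
    positivity
  intro z hz
  have hb : 0 < c * (1 + z) := by positivity
  have hi := integrableOn_rpow_mul_exp_neg_mul_rpow (p := 2) (s := 2 * a) (b := c * (1 + z)) (by linarith) (by norm_num) hb
  have hv := integral_rpow_mul_exp_neg_mul_rpow (p := 2) (q := 2 * a) (b := c * (1 + z)) (by norm_num) (by linarith) hb
  have hle : ∫ θ in (0:ℝ)..π, Real.sin (θ / 2) ^ (2 * a) * Real.exp (z * Real.cos (θ / 2)) ≤
      ∫ θ in Ioi (0:ℝ), Real.exp (z + 1) * (θ ^ (2 * a) * Real.exp (-(c * (1 + z)) * θ ^ (2:ℝ))) := by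
    rw [intervalIntegral.integral_of_le Real.pi_pos.le]
    have hcont : Continuous fun θ : ℝ => Real.sin (θ / 2) ^ (2 * a) * Real.exp (z * Real.cos (θ / 2)) := by
      refine Continuous.mul ?_ (by fun_prop)
      exact (Real.continuous_sin.comp (continuous_id.div_const 2)).rpow_const fun x => Or.inr (by positivity)
    calc _ ≤ ∫ θ in Ioc (0:ℝ) π, Real.exp (z + 1) * (θ ^ (2 * a) * Real.exp (-(c * (1 + z)) * θ ^ (2:ℝ))) := by
          refine setIntegral_mono_on ?_ ((hi.mono_set Ioc_subset_Ioi_self).const_mul _) measurableSet_Ioc ?_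
          · exact (hcont.integrableOn_Icc (a := 0) (b := π)).mono_set Ioc_subset_Icc_self
          · intro θ hθ
            obtain ⟨s1, s2⟩ := sc_nonneg (θ := θ) ⟨hθ.1.le, hθ.2⟩
            have h1 : Real.sin (θ / 2) ≤ θ := by
              have := Real.sin_le (x := θ / 2) (by linarith [hθ.1])
              linarith [hθ.1]
            have h2 : Real.cos (θ / 2) ≤ 1 - c * θ ^ 2 := by
              have := Real.cos_le_one_sub_mul_cos_sq (x := θ / 2) (by rw [abs_of_nonneg (by linarith [hθ.1])]; linarith [hθ.2, Real.pi_pos])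
              have e : 2 / π ^ 2 * (θ / 2) ^ 2 = c * θ ^ 2 := by rw [hc]; field_simp
              linarith
            have h3 : z * Real.cos (θ / 2) ≤ (z + 1) + (-(c * (1 + z)) * θ ^ (2:ℝ)) := by
              have : θ ^ (2:ℝ) = θ ^ 2 := by norm_cast
              rw [this]
              nlinarith
            calc _ ≤ θ ^ (2 * a) * Real.exp ((z + 1) + (-(c * (1 + z)) * θ ^ (2:ℝ))) := by
                  apply mul_le_mul (Real.rpow_le_rpow s1 h1 (by positivity)) (Real.exp_le_exp.2 h3) (by positivity)
                  exact Real.rpow_nonneg hθ.1.le _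
              _ = _ := by rw [Real.exp_add (z + 1)]; ring
      _ ≤ _ := by
          refine setIntegral_mono_set (hi.const_mul _) ?_ (Filter.Eventually.of_forall fun x hx => hx.1)
          filter_upwards [self_mem_ae_restrict measurableSet_Ioi] with x hx
          have : 0 ≤ x ^ (2 * a) := Real.rpow_nonneg (le_of_lt hx) _
          simp only [Pi.zero_apply]
          positivity
  refine hle.trans (le_of_eq ?_)
  rw [integral_const_mul, hv, Real.exp_add, show -(2 * a + 1) / 2 = -(a + 1/2) by ring,
    show (2 * a + 1) / 2 = a + 1/2 by ring, Real.mul_rpow hcp.le (by linarith)]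
  ring

lemma bessel_bound {a : ℝ} (ha : 0 < a) : ∃ K : ℝ, 0 < K ∧ ∀ z : ℝ, 0 ≤ z → ∀ n : ℕ,
    ∑ i ∈ Finset.range n, cf a i / 4 ^ i * z ^ (2 * i) ≤ K * (Real.exp z * (1 + z) ^ (-(a + 1 / 2))) := by
  obtain ⟨K1, hK1, h1⟩ := vB_le ha
  obtain ⟨K2, hK2, h2⟩ := gauss_bound ha
  refine ⟨K1 * K2, by positivity, fun z hz n => ?_⟩
  have hcs : Continuous fun θ : ℝ => Real.sin (θ / 2) ^ (2 * a) :=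
    (Real.continuous_sin.comp (continuous_id.div_const 2)).rpow_const fun x => Or.inr (by positivity)
  calc _ ≤ ∑ i ∈ Finset.range n, K1 * ∫ θ in (0:ℝ)..π, Real.sin (θ / 2) ^ (2 * a) * ((z * Real.cos (θ / 2)) ^ (2 * i) / (2 * i).factorial) := by
        refine Finset.sum_le_sum fun i _ => ?_
        have e : ∫ θ in (0:ℝ)..π, Real.sin (θ / 2) ^ (2 * a) * ((z * Real.cos (θ / 2)) ^ (2 * i) / (2 * i).factorial) =
            II (2 * a) (2 * (i : ℝ)) * (z ^ (2 * i) / (2 * i).factorial) := by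
          unfold II
          rw [← intervalIntegral.integral_mul_const]
          apply intervalIntegral.integral_congr
          intro θ hθ
          simp only
          rw [show (2 * (i:ℝ)) = ((2 * i : ℕ) : ℝ) by push_cast; ring, Real.rpow_natCast, mul_pow]
          ring
        rw [e]
        have h3 := h1 i
        have e2 : cf a i / 4 ^ i * z ^ (2 * i) = vB a i * (z ^ (2 * i) / (2 * i).factorial) := by
          unfold vB; field_simp
        rw [e2, ← mul_assoc]
        gcongr
    _ = K1 * ∫ θ in (0:ℝ)..π, ∑ i ∈ Finset.range n, Real.sin (θ / 2) ^ (2 * a) * ((z * Real.cos (θ / 2)) ^ (2 * i) / (2 * i).factorial) := by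
        rw [← Finset.mul_sum, intervalIntegral.integral_finsetSum]
        intro i _
        apply Continuous.intervalIntegrable
        exact hcs.mul (by fun_prop)
    _ ≤ K1 * ∫ θ in (0:ℝ)..π, Real.sin (θ / 2) ^ (2 * a) * Real.exp (z * Real.cos (θ / 2)) := by
        apply mul_le_mul_of_nonneg_left _ hK1.le
        apply intervalIntegral.integral_mono_on Real.pi_pos.le
        · apply Continuous.intervalIntegrable
          exact continuous_finsetSum _ fun i _ => hcs.mul (by fun_prop)
        · apply Continuous.intervalIntegrable
          exact hcs.mul (by fun_prop)
        · intro θ hθ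
          obtain ⟨s1, s2⟩ := sc_nonneg hθ
          rw [← Finset.mul_sum]
          apply mul_le_mul_of_nonneg_left _ (Real.rpow_nonneg s1 _)
          have h4 := Real.hasSum_cosh (z * Real.cos (θ / 2))
          have h5 := h4.summable.sum_le_tsum (Finset.range n) (fun i _ => by positivity)
          rw [h4.tsum_eq] at h5
          refine h5.trans ?_
          have h6 := Real.cosh_add_sinh (z * Real.cos (θ / 2))
          have h7 : 0 ≤ Real.sinh (z * Real.cos (θ / 2)) := Real.sinh_nonneg_iff.2 (by positivity)
          linarith
    _ ≤ K1 * (K2 * (Real.exp z * (1 + z) ^ (-(a + 1 / 2)))) := by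
        apply mul_le_mul_of_nonneg_left (h2 z hz) hK1.le
    _ = _ := by ring

/-- The positive coefficients of the double series. -/
def coef (a b : ℝ) (q : ℕ × ℕ) : ℝ :=
  Real.Gamma (2 * ((q.1 + q.2 : ℕ) : ℝ) + (a + b + 1) + 1) / 4 ^ (q.1 + q.2) * cf a q.1 * cf b q.2

lemma coef_pos {a b : ℝ} (ha : 0 < a) (hb : 0 < b) (q : ℕ × ℕ) : 0 < coef a b q := by
  unfold coef
  have h1 := Real.Gamma_pos_of_pos (s := 2 * ((q.1 + q.2 : ℕ) : ℝ) + (a + b + 1) + 1) (by positivity)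
  have := cf_pos ha q.1
  have := cf_pos hb q.2
  positivity

lemma frac_bound {s δ x κ : ℝ} (hs : 0 < s) (hδ : 0 < δ) (hx : 0 ≤ x) (hκ : 0 < κ) :
    s ^ κ * (1 + s * x) ^ (-κ) ≤ (max (s * δ) 1) ^ κ * (δ + x) ^ (-κ) := by
  have h1 : 0 < 1 + s * x := by positivity
  have h2 : 0 < δ + x := by positivity
  rw [Real.rpow_neg h1.le, Real.rpow_neg h2.le, ← div_eq_mul_inv, ← div_eq_mul_inv,
    ← Real.div_rpow hs.le h1.le, ← Real.div_rpow (by positivity) h2.le]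
  apply Real.rpow_le_rpow (by positivity) _ hκ.le
  rw [div_le_div_iff₀ h1 h2]
  have h3 := le_max_left (s * δ) 1
  have h4 := le_max_right (s * δ) 1
  nlinarith [mul_nonneg hs.le hx]

lemma S_bound {a b : ℝ} (ha : 0 < a) (hb : 0 < b) : ∃ K : ℝ, 0 < K ∧ ∀ x y : ℝ, 0 ≤ x → 0 ≤ y → x + y < 1 →
    Summable (fun q : ℕ × ℕ => coef a b q * (x ^ (2 * q.1) * y ^ (2 * q.2))) ∧
    ∑' q : ℕ × ℕ, coef a b q * (x ^ (2 * q.1) * y ^ (2 * q.2)) ≤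
      K * ((1 - x - y)⁻¹ * ((1 - x - y + x) ^ (-(a + 1/2)) * (1 - x - y + y) ^ (-(b + 1/2)))) := by
  obtain ⟨K1, hK1, h1⟩ := bessel_bound ha
  obtain ⟨K2, hK2, h2⟩ := bessel_bound hb
  set p : ℝ := a + b + 1 with hp
  have hG := Real.Gamma_pos_of_pos (s := p + 1) (by positivity)
  refine ⟨K1 * K2 * (Real.Gamma (p + 1) + 1), by positivity, fun x y hx hy hxy => ?_⟩
  set δ := 1 - x - y with hδ
  have hδp : 0 < δ := by linarith
  have hnn : ∀ q : ℕ × ℕ, 0 ≤ coef a b q * (x ^ (2 * q.1) * y ^ (2 * q.2)) := by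
    intro q; have := coef_pos ha hb q; positivity
  suffices hmain : ∀ u : Finset (ℕ × ℕ), ∑ q ∈ u, coef a b q * (x ^ (2 * q.1) * y ^ (2 * q.2)) ≤
      K1 * K2 * (Real.Gamma (p + 1) + 1) * (δ⁻¹ * ((δ + x) ^ (-(a + 1/2)) * (δ + y) ^ (-(b + 1/2)))) from
    ⟨summable_of_sum_le hnn hmain, Real.tsum_le_of_sum_le hnn hmain⟩
  intro u
  obtain ⟨n, hn⟩ : ∃ n : ℕ, u ⊆ Finset.range n ×ˢ Finset.range n := by
    refine ⟨u.sup (fun q => q.1 + q.2) + 1, fun q hq => ?_⟩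
    have := Finset.le_sup (f := fun q : ℕ × ℕ => q.1 + q.2) hq
    simp only [Finset.mem_product, Finset.mem_range]
    omega
  refine (Finset.sum_le_sum_of_subset_of_nonneg hn fun q _ _ => hnn q).trans ?_
  have hgi : ∀ e : ℝ, 0 ≤ e → IntegrableOn (fun s : ℝ => Real.exp (-s) * s ^ e) (Ioi 0) := by
    intro e he
    have := Real.GammaIntegral_convergent (s := e + 1) (by positivity)
    simpa using this
  have hIntg : ∀ q : ℕ × ℕ, coef a b q * (x ^ (2 * q.1) * y ^ (2 * q.2)) =
      ∫ s in Ioi (0:ℝ), (Real.exp (-s) * s ^ (2 * ((q.1 + q.2 : ℕ) : ℝ) + p)) * (1 / 4 ^ (q.1 + q.2) * cf a q.1 * cf b q.2 * (x ^ (2 * q.1) * y ^ (2 * q.2))) := by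
    intro q
    rw [integral_mul_const]
    have := Real.Gamma_eq_integral (s := 2 * ((q.1 + q.2 : ℕ) : ℝ) + p + 1) (by positivity)
    simp only [add_sub_cancel_right] at this
    rw [← this]
    unfold coef
    ring
  have hii : ∀ q : ℕ × ℕ, IntegrableOn (fun s : ℝ => (Real.exp (-s) * s ^ (2 * ((q.1 + q.2 : ℕ) : ℝ) + p)) * (1 / 4 ^ (q.1 + q.2) * cf a q.1 * cf b q.2 * (x ^ (2 * q.1) * y ^ (2 * q.2)))) (Ioi 0) :=
    fun q => (hgi _ (by positivity)).mul_const _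
  simp only [hIntg]
  rw [← integral_finsetSum _ (fun q _ => hii q)]
  have hI1 : IntegrableOn (fun s : ℝ => s ^ p * Real.exp (-(δ * s))) (Ioi 0) := by
    have := integrableOn_rpow_mul_exp_neg_mul_rpow (p := 1) (s := p) (b := δ) (by linarith) one_pos hδp
    refine this.congr_fun (fun s _ => ?_) measurableSet_Ioi
    simp
  have hI2 : IntegrableOn (fun s : ℝ => s ^ (0:ℝ) * Real.exp (-(δ * s))) (Ioi 0) := by
    have := integrableOn_rpow_mul_exp_neg_mul_rpow (p := 1) (s := 0) (b := δ) (by linarith) one_pos hδp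
    refine this.congr_fun (fun s _ => ?_) measurableSet_Ioi
    simp
  have hV1 := Real.integral_rpow_mul_exp_neg_mul_Ioi (a := p + 1) (r := δ) (by positivity) hδp
  have hV2 := Real.integral_rpow_mul_exp_neg_mul_Ioi (a := 1) (r := δ) one_pos hδp
  rw [add_sub_cancel_right] at hV1
  rw [sub_self] at hV2
  set Q := K1 * K2 * ((δ + x) ^ (-(a + 1/2)) * (δ + y) ^ (-(b + 1/2))) with hQ
  calc _ ≤ ∫ s in Ioi (0:ℝ), (Q * δ ^ p * (s ^ p * Real.exp (-(δ * s))) + Q * (s ^ (0:ℝ) * Real.exp (-(δ * s)))) := by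
        refine setIntegral_mono_on (integrable_finsetSum _ fun q _ => hii q) ((hI1.const_mul _).add (hI2.const_mul _)) measurableSet_Ioi ?_
        intro s hs
        have hs0 : 0 < s := hs
        have e1 : ∑ q ∈ Finset.range n ×ˢ Finset.range n, (Real.exp (-s) * s ^ (2 * ((q.1 + q.2 : ℕ) : ℝ) + p)) * (1 / 4 ^ (q.1 + q.2) * cf a q.1 * cf b q.2 * (x ^ (2 * q.1) * y ^ (2 * q.2))) =
            (Real.exp (-s) * s ^ p) * ((∑ i ∈ Finset.range n, cf a i / 4 ^ i * (s * x) ^ (2 * i)) * (∑ i ∈ Finset.range n, cf b i / 4 ^ i * (s * y) ^ (2 * i))) := by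
          rw [Finset.sum_mul_sum, ← Finset.sum_product', Finset.mul_sum]
          refine Finset.sum_congr rfl fun q _ => ?_
          rw [Real.rpow_add hs0, show 2 * ((q.1 + q.2 : ℕ) : ℝ) = ((2 * q.1 + 2 * q.2 : ℕ) : ℝ) by push_cast; ring, Real.rpow_natCast,
            pow_add, pow_add, mul_pow, mul_pow]
          field_simp
        rw [e1]
        have b1 := h1 (s * x) (by positivity) n
        have b2 := h2 (s * y) (by positivity) n
        have n2 : 0 ≤ ∑ i ∈ Finset.range n, cf b i / 4 ^ i * (s * y) ^ (2 * i) :=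
          Finset.sum_nonneg fun i _ => by have := cf_pos hb i; positivity
        have f1 := frac_bound hs0 hδp hx (κ := a + 1/2) (by positivity)
        have f2 := frac_bound hs0 hδp hy (κ := b + 1/2) (by positivity)
        have hm : (max (s * δ) 1) ^ (a + 1/2) * (max (s * δ) 1) ^ (b + 1/2) ≤ s ^ p * δ ^ p + 1 := by
          rw [← Real.rpow_add (by positivity), show a + 1/2 + (b + 1/2) = p by rw [hp]; ring, ← Real.mul_rpow hs0.le hδp.le]
          have h0 : 0 ≤ (s * δ) ^ p := by positivity
          rcases le_total (s * δ) 1 with h | h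
          · rw [max_eq_right h, Real.one_rpow]; linarith
          · rw [max_eq_left h]; linarith
        have he : Real.exp (-s) * (Real.exp (s * x) * Real.exp (s * y)) = Real.exp (-(δ * s)) := by
          rw [← Real.exp_add, ← Real.exp_add]; congr 1; rw [hδ]; ring
        have hsp : s ^ p = s ^ (a + 1/2) * s ^ (b + 1/2) := by
          rw [← Real.rpow_add hs0]; congr 1; rw [hp]; ring
        calc _ ≤ (Real.exp (-s) * s ^ p) * ((K1 * (Real.exp (s * x) * (1 + s * x) ^ (-(a + 1 / 2)))) * (K2 * (Real.exp (s * y) * (1 + s * y) ^ (-(b + 1 / 2))))) := by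
              gcongr
          _ = K1 * K2 * Real.exp (-(δ * s)) * ((s ^ (a + 1/2) * (1 + s * x) ^ (-(a + 1 / 2))) * (s ^ (b + 1/2) * (1 + s * y) ^ (-(b + 1 / 2)))) := by
              rw [← he, hsp]; ring
          _ ≤ K1 * K2 * Real.exp (-(δ * s)) * (((max (s * δ) 1) ^ (a + 1/2) * (δ + x) ^ (-(a + 1/2))) * ((max (s * δ) 1) ^ (b + 1/2) * (δ + y) ^ (-(b + 1/2)))) := by
              gcongr
          _ = Q * Real.exp (-(δ * s)) * ((max (s * δ) 1) ^ (a + 1/2) * (max (s * δ) 1) ^ (b + 1/2)) := by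
              rw [hQ]; ring
          _ ≤ Q * Real.exp (-(δ * s)) * (s ^ p * δ ^ p + 1) := by
              gcongr
          _ = _ := by rw [Real.rpow_zero]; ring
    _ = Q * δ ^ p * ((1 / δ) ^ (p + 1) * Real.Gamma (p + 1)) + Q * (1 / δ) := by
        rw [integral_add (hI1.const_mul _) (hI2.const_mul _), integral_const_mul, integral_const_mul, hV1, hV2]
        simp
    _ = _ := by
        have : δ ^ p * (1 / δ) ^ (p + 1) = δ⁻¹ := by
          rw [one_div, Real.inv_rpow hδp.le, ← Real.rpow_neg hδp.le, ← Real.rpow_add hδp,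
            show p + -(p + 1) = -1 by ring, Real.rpow_neg_one]
        calc _ = Q * Real.Gamma (p + 1) * (δ ^ p * (1 / δ) ^ (p + 1)) + Q * δ⁻¹ := by rw [one_div]; ring
          _ = _ := by rw [this, hQ]; ring

end JK

namespace JK

lemma summable_of_antidiag {f : ℕ × ℕ → ℝ} (hf : ∀ q, 0 ≤ f q)
    (h : Summable fun k => ∑ q ∈ Finset.HasAntidiagonal.antidiagonal k, f q) : Summable f := by
  rw [← (Finset.HasAntidiagonal.sigmaAntidiagonalEquivProd (A := ℕ)).summable_iff]
  refine (summable_sigma_of_nonneg (fun _ => hf _)).2 ?_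
  refine ⟨fun k => Summable.of_finite, ?_⟩
  refine h.congr fun k => ?_
  rw [tsum_fintype]
  exact (Finset.sum_coe_sort _ _).symm

lemma antidiag_summable {f : ℕ × ℕ → ℝ} (h : Summable f) :
    Summable fun k => ∑ q ∈ Finset.HasAntidiagonal.antidiagonal k, f q := by
  rw [← (Finset.HasAntidiagonal.sigmaAntidiagonalEquivProd (A := ℕ)).summable_iff] at h
  refine h.sigma.congr fun k => ?_
  rw [tsum_fintype]
  exact (Finset.sum_coe_sort (Finset.HasAntidiagonal.antidiagonal k) f)

lemma antidiag_tsum {f : ℕ × ℕ → ℝ} (h : Summable f) :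
    ∑' q, f q = ∑' k, ∑ q ∈ Finset.HasAntidiagonal.antidiagonal k, f q := by
  rw [← (Finset.HasAntidiagonal.sigmaAntidiagonalEquivProd (A := ℕ)).summable_iff] at h
  rw [← (Finset.HasAntidiagonal.sigmaAntidiagonalEquivProd (A := ℕ)).tsum_eq]
  refine (h.tsum_sigma).trans ?_
  refine tsum_congr fun k => ?_
  rw [tsum_fintype]
  exact (Finset.sum_coe_sort (Finset.HasAntidiagonal.antidiagonal k) f)

/-- the t-factor -/
def At (lam t : ℝ) (k : ℕ) : ℝ :=
  Real.sinh (t / 2) * (Real.cosh (t / 2) ^ (-(lam + 1)) * ((Real.cosh (t / 2) ^ 2)⁻¹) ^ k)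

lemma At_pos {lam t : ℝ} (ht : 0 < t) (k : ℕ) : 0 < At lam t k := by
  unfold At
  have := Real.cosh_pos (t / 2)
  have : 0 < Real.sinh (t / 2) := Real.sinh_pos_iff.2 (by linarith)
  positivity

/-- term of the double series -/
def dterm (a b t X Y : ℝ) (q : ℕ × ℕ) : ℝ :=
  coef a b q * At (a + b + 1) t (q.1 + q.2) * ((X * Y) ^ q.1 * ((1 - X) * (1 - Y)) ^ q.2)

/-- term of the spectral double series -/
def sterm (a b t X Y : ℝ) (q : ℕ × ℕ) : ℝ :=
  Real.Gamma (2 * ((q.1 + q.2 : ℕ) : ℝ) + (a + b + 1) + 1) / 4 ^ (q.1 + q.2) * At (a + b + 1) t (q.1 + q.2) *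
    (BB a b q.1 * bb a b (q.1 + q.2) q.1 * ((pP a b q.1).eval X * (pP a b q.1).eval Y))

lemma antidiag_eq {a b : ℝ} (ha : 0 < a) (hb : 0 < b) (t X Y : ℝ) (k : ℕ) :
    ∑ q ∈ Finset.HasAntidiagonal.antidiagonal k, dterm a b t X Y q =
      ∑ q ∈ Finset.HasAntidiagonal.antidiagonal k, sterm a b t X Y q := by
  have h := G_expand ha hb k X Y
  have e1 : ∑ q ∈ Finset.HasAntidiagonal.antidiagonal k, dterm a b t X Y q = 
      Real.Gamma (2 * (k : ℝ) + (a + b + 1) + 1) / 4 ^ k * At (a + b + 1) t k *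
      ∑ q ∈ Finset.HasAntidiagonal.antidiagonal k, cf a q.1*cf b q.2*((X*Y)^q.1*((1-X)*(1-Y))^q.2) := by
    rw [Finset.mul_sum]
    refine Finset.sum_congr rfl fun q hq => ?_
    rw [Finset.HasAntidiagonal.mem_antidiagonal] at hq
    unfold dterm coef
    rw [hq]; ring
  have e2 : ∑ q ∈ Finset.HasAntidiagonal.antidiagonal k, sterm a b t X Y q = 
      Real.Gamma (2 * (k : ℝ) + (a + b + 1) + 1) / 4 ^ k * At (a + b + 1) t k *
      ∑ n∈Finset.range (k+1), BB a b n*bb a b k n*((pP a b n).eval X*(pP a b n).eval Y) := by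
    rw [Finset.mul_sum, Finset.Nat.sum_antidiagonal_eq_sum_range_succ_mk]
    refine Finset.sum_congr rfl fun n hn => ?_
    have hn' : n ≤ k := by simpa [Nat.lt_succ_iff] using hn
    unfold sterm
    simp only [Nat.add_sub_cancel' hn']
  rw [e1, e2, h]

lemma dterm_diag_summable {a b : ℝ} (ha : 0 < a) (hb : 0 < b) {t : ℝ} (ht : 0 < t) {X Y : ℝ} (hX : 0 ≤ X) (hX1 : X ≤ 1)
    (hY : 0 ≤ Y) (hY1 : Y ≤ 1) :
    Summable (dterm a b t X Y) := by
  obtain ⟨K, hK, h⟩ := S_bound ha hb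
  have hc := cosh_half_gt ht
  set c := Real.cosh (t / 2) with hcdef
  have hc0 : 0 < c := by linarith
  have hsq1 : Real.sqrt (X * Y) ^ 2 = X * Y := Real.sq_sqrt (by positivity)
  have hsq2 : Real.sqrt ((1 - X) * (1 - Y)) ^ 2 = (1 - X) * (1 - Y) := Real.sq_sqrt (mul_nonneg (by linarith) (by linarith))
  have hle : Real.sqrt (X * Y) + Real.sqrt ((1 - X) * (1 - Y)) ≤ 1 := by
    have h1 : Real.sqrt (X * Y) ≤ (X + Y) / 2 := Real.sqrt_le_iff.2 ⟨by linarith, by nlinarith [sq_nonneg (X - Y)]⟩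
    have h2 : Real.sqrt ((1 - X) * (1 - Y)) ≤ (1 - X + (1 - Y)) / 2 := Real.sqrt_le_iff.2 ⟨by linarith, by nlinarith [sq_nonneg (X - Y)]⟩
    linarith
  have hs := (h (Real.sqrt (X * Y) / c) (Real.sqrt ((1 - X) * (1 - Y)) / c) (by positivity) (by positivity) (by
    rw [← add_div, div_lt_one hc0]; linarith)).1
  have := hs.mul_left (Real.sinh (t / 2) * c ^ (-((a + b + 1) + 1)))
  refine this.congr fun q => ?_
  unfold dterm At
  rw [div_pow, div_pow, pow_mul (√(X*Y)) 2, pow_mul (√((1-X)*(1-Y))) 2, pow_mul c 2 q.1, pow_mul c 2 q.2, hsq1, hsq2, pow_add, ← hcdef, inv_pow, inv_pow]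
  field_simp

lemma sterm_diag_summable {a b : ℝ} (ha : 0 < a) (hb : 0 < b) {t : ℝ} (ht : 0 < t) {X : ℝ} (hX : 0 ≤ X) (hX1 : X ≤ 1) :
    Summable (sterm a b t X X) := by
  apply summable_of_antidiag
  · intro q
    unfold sterm bb
    have h1 := Real.Gamma_pos_of_pos (s := 2 * ((q.1 + q.2 : ℕ) : ℝ) + (a + b + 1) + 1) (by positivity)
    have h2 := At_pos (lam := a + b + 1) ht (q.1 + q.2)
    have h3 := BB_pos ha hb q.1
    have h4 := Real.Gamma_pos_of_pos (s := ((q.1 + q.2 : ℕ) : ℝ) + q.1 + a + b + 2) (by positivity)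
    have h5 := mul_self_nonneg ((pP a b q.1).eval X)
    positivity
  · refine (antidiag_summable (dterm_diag_summable ha hb ht hX hX1 hX hX1)).congr fun k => ?_
    exact antidiag_eq ha hb t X X k

lemma sterm_summable {a b : ℝ} (ha : 0 < a) (hb : 0 < b) {t : ℝ} (ht : 0 < t) {X Y : ℝ} (hX : 0 ≤ X) (hX1 : X ≤ 1)
    (hY : 0 ≤ Y) (hY1 : Y ≤ 1) : Summable (sterm a b t X Y) := by
  refine Summable.of_norm_bounded (((sterm_diag_summable ha hb ht hX hX1).add (sterm_diag_summable ha hb ht hY hY1))) fun q => ?_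
  unfold sterm bb
  have h1 := Real.Gamma_pos_of_pos (s := 2 * ((q.1 + q.2 : ℕ) : ℝ) + (a + b + 1) + 1) (by positivity)
  have h2 := At_pos (lam := a + b + 1) ht (q.1 + q.2)
  have h3 := BB_pos ha hb q.1
  have h4 := Real.Gamma_pos_of_pos (s := ((q.1 + q.2 : ℕ) : ℝ) + q.1 + a + b + 2) (by positivity)
  rw [norm_mul, norm_mul (BB a b q.1 * _), Real.norm_of_nonneg (by positivity), Real.norm_of_nonneg (by positivity), ← mul_add, ← mul_add]
  gcongr
  rw [Real.norm_eq_abs, abs_mul]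
  nlinarith [sq_nonneg (|(pP a b q.1).eval X| - |(pP a b q.1).eval Y|), sq_abs ((pP a b q.1).eval X), sq_abs ((pP a b q.1).eval Y),
    sq_nonneg ((pP a b q.1).eval X), sq_nonneg ((pP a b q.1).eval Y)]

lemma sterm_inner {a b : ℝ} (ha : 0 < a) (hb : 0 < b) {t : ℝ} (ht : 0 < t) (X Y : ℝ) (n : ℕ) :
    ∑' m, sterm a b t X Y (n, m) = 2 ^ (a + b + 1) * Real.exp (-(t * (n + (a + b + 1) / 2))) * 
      (BB a b n * ((pP a b n).eval X * (pP a b n).eval Y)) := by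
  have hE := E_hasSum (s := 2 * n + (a + b + 1)) (by positivity) ht
  have hE2 := (hE.mul_left (BB a b n * ((pP a b n).eval X * (pP a b n).eval Y) / 4 ^ n)).tsum_eq
  have hc := Real.cosh_pos (t / 2)
  have e4 : (2:ℝ) ^ (2 * (n:ℝ) + (a + b + 1)) = 4 ^ n * 2 ^ (a + b + 1) := by
    rw [Real.rpow_add two_pos, show (2 * (n:ℝ)) = ((2 * n : ℕ) : ℝ) by push_cast; ring, Real.rpow_natCast, pow_mul]
    norm_num
  rw [e4] at hE2
  have : 2 ^ (a + b + 1) * Real.exp (-(t * (n + (a + b + 1) / 2))) * 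
      (BB a b n * ((pP a b n).eval X * (pP a b n).eval Y)) = BB a b n * ((pP a b n).eval X * (pP a b n).eval Y) / 4 ^ n * (4 ^ n * 2 ^ (a + b + 1) * rexp (-((2 * (n:ℝ) + (a + b + 1)) / 2 * t))) := by
    have e5 : (2 * (n:ℝ) + (a + b + 1)) / 2 * t = t * (n + (a + b + 1) / 2) := by ring
    rw [e5]
    field_simp
  rw [this, ← hE2]
  refine tsum_congr fun m => ?_
  unfold sterm bb At
  simp only [Nat.add_sub_cancel_left]
  have e6 : Real.cosh (t / 2) ^ (-(2 * (n:ℝ) + (a + b + 1) + 1)) = Real.cosh (t / 2) ^ (-(a + b + 1 + 1)) * ((Real.cosh (t / 2) ^ 2)⁻¹) ^ n := by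
    rw [← rpow_split hc]; congr 1; ring
  rw [e6, pow_add, pow_add]
  have g1 : 2 * ((n + m : ℕ) : ℝ) + (a + b + 1) + 1 = 2 * n + (a + b + 1) + 2 * m + 1 := by push_cast; ring
  have g2 : ((n + m : ℕ) : ℝ) + n + a + b + 2 = m + (2 * n + (a + b + 1)) + 1 := by push_cast; ring
  rw [g1, g2]
  have h4 := Real.Gamma_pos_of_pos (s := (m : ℝ) + (2 * n + (a + b + 1)) + 1) (by positivity)
  field_simp

/-- Product series for the kernel. -/
lemma jHker_eq {a b : ℝ} (ha : 0 < a) (hb : 0 < b) {t : ℝ} (ht : 0 < t) (θ φ : ℝ) :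
    jHker a b t θ φ = 1 / (2 * c0 a b * 2 ^ (a + b + 1)) *
      ∑' q : ℕ × ℕ, dterm a b t (Real.sin (θ / 2) ^ 2) (Real.sin (φ / 2) ^ 2) q := by
  set X := Real.sin (θ / 2) ^ 2
  set Y := Real.sin (φ / 2) ^ 2
  have hX : 0 ≤ X := sq_nonneg _
  have hY : 0 ≤ Y := sq_nonneg _
  have hX1 : X ≤ 1 := Real.sin_sq_le_one _
  have hY1 : Y ≤ 1 := Real.sin_sq_le_one _
  have hs := sterm_summable ha hb ht hX hX1 hY hY1
  have hd := dterm_diag_summable ha hb ht hX hX1 hY hY1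
  have hc := c0_pos ha hb
  have e : ∑' q, dterm a b t X Y q = ∑' n : ℕ, 2 ^ (a + b + 1) * Real.exp (-(t * (n + (a + b + 1) / 2))) * 
      (BB a b n * ((pP a b n).eval X * (pP a b n).eval Y)) := by
    rw [antidiag_tsum hd]
    simp only [antidiag_eq ha hb t X Y]
    rw [← antidiag_tsum hs, hs.tsum_prod]
    exact tsum_congr fun n => sterm_inner ha hb ht X Y n
  unfold jHker
  rw [e, ← tsum_mul_left, ← tsum_mul_left]
  refine tsum_congr fun n => ?_
  rw [mul_assoc (Real.exp _), trigP_mul ha hb]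
  unfold jLam
  rw [Real.sqrt_sq (by positivity), neg_mul]
  have : (2:ℝ) ^ (a + b + 1) ≠ 0 := by positivity
  change _ * (_ * (BB a b n / c0 a b * (Polynomial.eval X _ * Polynomial.eval Y _))) = _
  generalize Polynomial.eval X (pP a b n) = u
  generalize Polynomial.eval Y (pP a b n) = v
  field_simp

end JK

namespace JK

/-- a series of products of three functions -/
def TT (f g h : ℕ × ℕ → ℂ → ℂ) (τ z w : ℂ) : ℂ := ∑' q, f q τ * g q z * h q w

/-- local normal convergence of the product series on a domain -/
def Good (Ω : ℂ → ℂ → ℂ → Prop) (f g h : ℕ × ℕ → ℂ → ℂ) : Prop :=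
  ∀ τ z w, Ω τ z w → ∃ ε > 0, ∃ u : ℕ × ℕ → ℝ, Summable u ∧
    (∀ q, DifferentiableOn ℂ (f q) (Metric.ball τ ε)) ∧
    (∀ q, DifferentiableOn ℂ (g q) (Metric.ball z ε)) ∧
    (∀ q, DifferentiableOn ℂ (h q) (Metric.ball w ε)) ∧
    ∀ τ' ∈ Metric.ball τ ε, ∀ z' ∈ Metric.ball z ε, ∀ w' ∈ Metric.ball w ε, ∀ q,
      ‖f q τ' * g q z' * h q w'‖ ≤ u q

lemma TT_rot (f g h : ℕ × ℕ → ℂ → ℂ) (τ z w : ℂ) : TT g h f z w τ = TT f g h τ z w := by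
  unfold TT
  exact tsum_congr fun q => by ring

lemma Good.rot {Ω : ℂ → ℂ → ℂ → Prop} {f g h : ℕ × ℕ → ℂ → ℂ} (H : Good Ω f g h) :
    Good (fun z w τ => Ω τ z w) g h f := by
  intro z w τ hp
  obtain ⟨ε, hε, u, hu, hf, hg, hh, hb⟩ := H τ z w hp
  refine ⟨ε, hε, u, hu, hg, hh, hf, fun z' hz w' hw τ' hτ q => ?_⟩
  have := hb τ' hτ z' hz w' hw q
  rwa [show g q z' * h q w' * f q τ' = f q τ' * g q z' * h q w' by ring]

lemma Good.d1 {Ω : ℂ → ℂ → ℂ → Prop} {f g h : ℕ × ℕ → ℂ → ℂ} (H : Good Ω f g h) :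
    Good Ω (fun q => deriv (f q)) g h := by
  intro τ z w hp
  obtain ⟨ε, hε, u, hu, hf, hg, hh, hb⟩ := H τ z w hp
  have hsub : ∀ x : ℂ, Metric.ball x (ε / 2) ⊆ Metric.ball x ε := fun x => Metric.ball_subset_ball (by linarith)
  refine ⟨ε / 2, by positivity, fun q => u q / (ε / 4), hu.div_const _, fun q => ?_, fun q => (hg q).mono (hsub z),
    fun q => (hh q).mono (hsub w), fun τ' hτ z' hz w' hw q => ?_⟩
  · exact ((hf q).deriv Metric.isOpen_ball).mono (hsub τ)
  · have hcl : Metric.closedBall τ' (ε / 4) ⊆ Metric.ball τ ε := by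
      intro x hx
      rw [Metric.mem_closedBall] at hx
      rw [Metric.mem_ball] at hτ ⊢
      linarith [dist_triangle x τ' τ]
    have hd : DiffContOnCl ℂ (fun x => f q x * g q z' * h q w') (Metric.ball τ' (ε / 4)) := by
      apply DifferentiableOn.diffContOnCl
      rw [closure_ball _ (by positivity)]
      exact (((hf q).mono hcl).mul_const _).mul_const _
    have := Complex.norm_deriv_le_of_forall_mem_sphere_norm_le (by positivity) hd
      (fun x hx => hb x (hcl (Metric.sphere_subset_closedBall hx)) z' (hsub z hz) w' (hsub w hw) q)
    have hda : DifferentiableAt ℂ (f q) τ' := (hf q).differentiableAt (Metric.isOpen_ball.mem_nhds (hsub τ hτ))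
    rwa [show deriv (fun x => f q x * g q z' * h q w') τ' = deriv (f q) τ' * g q z' * h q w' from
      ((hda.hasDerivAt.mul_const _).mul_const _).deriv] at this

lemma Good.hasDeriv {Ω : ℂ → ℂ → ℂ → Prop} {f g h : ℕ × ℕ → ℂ → ℂ} (H : Good Ω f g h) {τ z w : ℂ} (hp : Ω τ z w) :
    HasDerivAt (fun x => TT f g h x z w) (TT (fun q => deriv (f q)) g h τ z w) τ := by
  obtain ⟨ε, hε, u, hu, hf, hg, hh, hb⟩ := H τ z w hp
  have hz : z ∈ Metric.ball z ε := Metric.mem_ball_self hε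
  have hw : w ∈ Metric.ball w ε := Metric.mem_ball_self hε
  have hτ : τ ∈ Metric.ball τ ε := Metric.mem_ball_self hε
  have hfd : ∀ q, DifferentiableOn ℂ (fun x => f q x * g q z * h q w) (Metric.ball τ ε) := fun q => ((hf q).mul_const _).mul_const _
  have h1 := Complex.differentiableOn_tsum_of_summable_norm hu hfd Metric.isOpen_ball (fun q x hx => hb x hx z hz w hw q)
  have h2 := Complex.hasSum_deriv_of_summable_norm hu hfd Metric.isOpen_ball (fun q x hx => hb x hx z hz w hw q) hτ
  have h3 := (h1.differentiableAt (Metric.isOpen_ball.mem_nhds hτ)).hasDerivAt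
  refine h3.congr_deriv ?_
  rw [← h2.tsum_eq]
  refine tsum_congr fun q => ?_
  have hda : DifferentiableAt ℂ (f q) τ := (hf q).differentiableAt (Metric.isOpen_ball.mem_nhds hτ)
  exact ((hda.hasDerivAt.mul_const _).mul_const _).deriv

/-- iterated termwise derivative -/
def Dn (n : ℕ) (f : ℕ × ℕ → ℂ → ℂ) : ℕ × ℕ → ℂ → ℂ := fun q => deriv^[n] (f q)

lemma Dn_succ (n : ℕ) (f : ℕ × ℕ → ℂ → ℂ) : Dn (n + 1) f = fun q => deriv (Dn n f q) := by
  funext q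
  simp only [Dn, Function.iterate_succ', Function.comp]

lemma Good.dn {Ω : ℂ → ℂ → ℂ → Prop} {f g h : ℕ × ℕ → ℂ → ℂ} (H : Good Ω f g h) (n : ℕ) :
    Good Ω (Dn n f) g h := by
  induction n with
  | zero => exact H
  | succ n ih => rw [Dn_succ]; exact ih.d1

lemma Good.dn_all {Ω : ℂ → ℂ → ℂ → Prop} {f g h : ℕ × ℕ → ℂ → ℂ} (H : Good Ω f g h) (l m n : ℕ) :
    Good Ω (Dn l f) (Dn m g) (Dn n h) :=
  ((((H.dn l).rot).dn m).rot.dn n).rot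

lemma Good.hasDeriv_dn {Ω : ℂ → ℂ → ℂ → Prop} {f g h : ℕ × ℕ → ℂ → ℂ} (H : Good Ω f g h) (n : ℕ) {τ z w : ℂ} (hp : Ω τ z w) :
    HasDerivAt (fun x => TT (Dn n f) g h x z w) (TT (Dn (n + 1) f) g h τ z w) τ := by
  rw [Dn_succ]; exact (H.dn n).hasDeriv hp

lemma Good.iter {Ω : ℂ → ℂ → ℂ → Prop} {f g h : ℕ × ℕ → ℂ → ℂ} (H : Good Ω f g h) (n : ℕ) {z w : ℂ} {U : Set ℂ} (hU : IsOpen U)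
    (hp : ∀ τ ∈ U, Ω τ z w) : ∀ τ ∈ U, iteratedDeriv n (fun x => TT f g h x z w) τ = TT (Dn n f) g h τ z w := by
  induction n with
  | zero => intro τ _; rw [iteratedDeriv_zero]; rfl
  | succ n ih =>
    intro τ hτ
    rw [iteratedDeriv_succ, Filter.EventuallyEq.deriv_eq (Filter.eventuallyEq_of_mem (hU.mem_nhds hτ) ih)]
    exact (H.hasDeriv_dn n (hp τ hτ)).deriv

lemma Good.cauchy {Ω : ℂ → ℂ → ℂ → Prop} {f g h : ℕ × ℕ → ℂ → ℂ} (H : Good Ω f g h) (n : ℕ) {τ z w : ℂ} {r B : ℝ} (hr : 0 < r)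
    (hp : ∀ τ' ∈ Metric.closedBall τ r, Ω τ' z w) (hB : ∀ τ' ∈ Metric.closedBall τ r, ‖TT f g h τ' z w‖ ≤ B) :
    ‖TT (Dn n f) g h τ z w‖ ≤ n.factorial * B / r ^ n := by
  rw [← H.iter n Metric.isOpen_ball (fun x hx => hp x (Metric.ball_subset_closedBall hx)) τ (Metric.mem_ball_self hr)]
  apply Complex.norm_iteratedDeriv_le_of_forall_mem_sphere_norm_le n hr
  · apply DifferentiableOn.diffContOnCl
    rw [closure_ball _ hr.ne']
    intro x hx
    exact (H.hasDeriv (hp x hx)).differentiableAt.differentiableWithinAt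
  · exact fun x hx => hB x (Metric.sphere_subset_closedBall hx)

lemma Good.cauchy3 {Ω : ℂ → ℂ → ℂ → Prop} {f g h : ℕ × ℕ → ℂ → ℂ} (H : Good Ω f g h) (l m n : ℕ) {τ z w : ℂ} {r B : ℝ} (hr : 0 < r)
    (hp : ∀ τ' ∈ Metric.closedBall τ r, ∀ z' ∈ Metric.closedBall z r, ∀ w' ∈ Metric.closedBall w r, Ω τ' z' w')
    (hB : ∀ τ' ∈ Metric.closedBall τ r, ∀ z' ∈ Metric.closedBall z r, ∀ w' ∈ Metric.closedBall w r, ‖TT f g h τ' z' w'‖ ≤ B) :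
    ‖TT (Dn l f) (Dn m g) (Dn n h) τ z w‖ ≤ n.factorial * (m.factorial * (l.factorial * B / r ^ l) / r ^ m) / r ^ n := by
  have hs : ∀ x : ℂ, x ∈ Metric.closedBall x r := fun x => Metric.mem_closedBall_self hr.le
  have s1 : ∀ z' ∈ Metric.closedBall z r, ∀ w' ∈ Metric.closedBall w r, ‖TT (Dn l f) g h τ z' w'‖ ≤ l.factorial * B / r ^ l :=
    fun z' hz w' hw => H.cauchy l hr (fun x hx => hp x hx z' hz w' hw) (fun x hx => hB x hx z' hz w' hw)
  have s2 : ∀ w' ∈ Metric.closedBall w r, ‖TT (Dn m g) h (Dn l f) z w' τ‖ ≤ m.factorial * (l.factorial * B / r ^ l) / r ^ m :=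
    fun w' hw => (H.dn l).rot.cauchy m hr (fun x hx => hp τ (hs τ) x hx w' hw) 
      (fun x hx => by rw [TT_rot]; exact s1 x hx w' hw)
  have s3 := ((H.dn l).rot.dn m).rot.cauchy n (τ := w) (z := τ) (w := z) hr (fun x hx => hp τ (hs τ) z (hs z) x hx) 
      (fun x hx => by rw [TT_rot]; exact s2 x hx)
  rwa [TT_rot, TT_rot] at s3

end JK

namespace JK

def fA (a b : ℝ) (q : ℕ × ℕ) (τ : ℂ) : ℂ :=
  (coef a b q : ℂ) * (Complex.sinh (τ / 2) * (Complex.cosh (τ / 2) ^ ((-((a + b + 1) + 1) : ℝ) : ℂ) *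
    ((Complex.cosh (τ / 2) ^ 2)⁻¹) ^ (q.1 + q.2)))

def gB (q : ℕ × ℕ) (z : ℂ) : ℂ := (Complex.sin (z / 2) ^ 2) ^ q.1 * (Complex.cos (z / 2) ^ 2) ^ q.2

/-- the numerator quantity -/
def nS (z w : ℂ) : ℝ := ‖Complex.sin (z / 2)‖ * ‖Complex.sin (w / 2)‖
def nC (z w : ℂ) : ℝ := ‖Complex.cos (z / 2)‖ * ‖Complex.cos (w / 2)‖

def Om (τ z w : ℂ) : Prop :=
  0 < (Complex.cosh (τ / 2)).re ∧ nS z w + nC z w < ‖Complex.cosh (τ / 2)‖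

lemma term_norm {a b : ℝ} (ha : 0 < a) (hb : 0 < b) {τ : ℂ} (h : 0 < (Complex.cosh (τ / 2)).re) (z w : ℂ) (q : ℕ × ℕ) :
    ‖fA a b q τ * gB q z * gB q w‖ = ‖Complex.sinh (τ / 2)‖ * ‖Complex.cosh (τ / 2)‖ ^ (-((a + b + 1) + 1)) *
      (coef a b q * ((nS z w / ‖Complex.cosh (τ / 2)‖) ^ (2 * q.1) * (nC z w / ‖Complex.cosh (τ / 2)‖) ^ (2 * q.2))) := by
  have hc : Complex.cosh (τ / 2) ≠ 0 := fun h0 => by simp [h0] at h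
  have hn : ‖Complex.cosh (τ / 2)‖ ≠ 0 := by simpa using hc
  unfold fA gB nS nC
  simp only [norm_mul, norm_pow, norm_inv, Complex.norm_real]
  rw [Complex.norm_cpow_real, Real.norm_of_nonneg (coef_pos ha hb q).le]
  rw [div_pow, div_pow, mul_pow, mul_pow, pow_mul, pow_mul, pow_mul, pow_mul, pow_mul, pow_mul, pow_add, inv_pow, inv_pow]
  field_simp

lemma coef_summable {a b : ℝ} (ha : 0 < a) (hb : 0 < b) {x y : ℝ} (hx : 0 ≤ x) (hy : 0 ≤ y) (h : x + y < 1) :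
    Summable (fun q : ℕ × ℕ => coef a b q * (x ^ (2 * q.1) * y ^ (2 * q.2))) := by
  obtain ⟨K, hK, H⟩ := S_bound ha hb
  exact (H x y hx hy h).1

lemma gB_diff (q : ℕ × ℕ) : Differentiable ℂ (gB q) := by
  unfold gB
  fun_prop

lemma fA_diff (a b : ℝ) (q : ℕ × ℕ) {τ : ℂ} (h : 0 < (Complex.cosh (τ / 2)).re) : DifferentiableAt ℂ (fA a b q) τ := by
  have hc : Complex.cosh (τ / 2) ≠ 0 := fun h0 => by simp [h0] at h
  unfold fA
  have h1 : DifferentiableAt ℂ (fun τ : ℂ => Complex.cosh (τ / 2)) τ := by fun_prop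
  have h2 : DifferentiableAt ℂ (fun τ : ℂ => Complex.sinh (τ / 2)) τ := by fun_prop
  have h3 : DifferentiableAt ℂ (fun τ : ℂ => Complex.cosh (τ / 2) ^ ((-((a + b + 1) + 1) : ℝ) : ℂ)) τ :=
    h1.cpow (differentiableAt_const _) (Or.inl h)
  have h4 : DifferentiableAt ℂ (fun τ : ℂ => ((Complex.cosh (τ / 2) ^ 2)⁻¹) ^ (q.1 + q.2)) τ :=
    ((h1.pow 2).inv (pow_ne_zero 2 hc)).pow _
  exact (h2.mul (h3.mul h4)).const_mul _

lemma good_fA {a b : ℝ} (ha : 0 < a) (hb : 0 < b) : Good Om (fA a b) gB gB := by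
  intro τ z w ⟨hre, hlt⟩
  set m := ‖Complex.cosh (τ / 2)‖ with hm
  have hcτ : Continuous fun τ : ℂ => ‖Complex.cosh (τ / 2)‖ := by fun_prop
  have hcr : Continuous fun τ : ℂ => (Complex.cosh (τ / 2)).re := by fun_prop
  have hsτ : Continuous fun τ : ℂ => ‖Complex.sinh (τ / 2)‖ := by fun_prop
  have hsz : Continuous fun τ : ℂ => ‖Complex.sin (τ / 2)‖ := by fun_prop
  have hcz : Continuous fun τ : ℂ => ‖Complex.cos (τ / 2)‖ := by fun_prop
  have hm0 : 0 < m := lt_of_lt_of_le hre (Complex.re_le_norm _)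
  obtain ⟨η, hη, hη1, hη2⟩ : ∃ η : ℝ, 0 < η ∧ (‖Complex.sin (z / 2)‖ + η) * (‖Complex.sin (w / 2)‖ + η) +
      (‖Complex.cos (z / 2)‖ + η) * (‖Complex.cos (w / 2)‖ + η) < m - η ∧ η < m := by
    have e1 : ∀ᶠ η : ℝ in nhds 0, (‖Complex.sin (z / 2)‖ + η) * (‖Complex.sin (w / 2)‖ + η) +
      (‖Complex.cos (z / 2)‖ + η) * (‖Complex.cos (w / 2)‖ + η) < m - η := by
      refine ContinuousAt.eventually_lt (by fun_prop) (by fun_prop) ?_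
      simpa [nS, nC] using hlt
    have e2 : ∀ᶠ η : ℝ in nhds 0, η < m := eventually_lt_nhds hm0
    obtain ⟨η, h1, h2⟩ := ((e1.and e2).filter_mono nhdsWithin_le_nhds |>.and (self_mem_nhdsWithin : Ioi (0:ℝ) ∈ nhdsWithin 0 (Ioi 0))).exists
    exact ⟨η, h2, h1.1, h1.2⟩
  have E1 : ∀ᶠ τ' in nhds τ, (m - η < ‖Complex.cosh (τ' / 2)‖ ∧ 0 < (Complex.cosh (τ' / 2)).re) ∧ ‖Complex.sinh (τ' / 2)‖ < ‖Complex.sinh (τ / 2)‖ + 1 :=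
    ((continuousAt_const.eventually_lt hcτ.continuousAt (by linarith)).and (continuousAt_const.eventually_lt hcr.continuousAt hre)).and
      (hsτ.continuousAt.eventually_lt continuousAt_const (by linarith))
  have E2 : ∀ x, ∀ᶠ x' in nhds x, ‖Complex.sin (x' / 2)‖ < ‖Complex.sin (x / 2)‖ + η ∧ ‖Complex.cos (x' / 2)‖ < ‖Complex.cos (x / 2)‖ + η := fun x =>
    (hsz.continuousAt.eventually_lt continuousAt_const (by linarith)).and (hcz.continuousAt.eventually_lt continuousAt_const (by linarith))
  obtain ⟨ε1, hε1, H1⟩ := Metric.eventually_nhds_iff_ball.1 E1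
  obtain ⟨ε2, hε2, H2⟩ := Metric.eventually_nhds_iff_ball.1 (E2 z)
  obtain ⟨ε3, hε3, H3⟩ := Metric.eventually_nhds_iff_ball.1 (E2 w)
  have hmη : 0 < m - η := by linarith
  refine ⟨min ε1 (min ε2 ε3), by positivity, fun q => (‖Complex.sinh (τ / 2)‖ + 1) * (m - η) ^ (-((a + b + 1) + 1)) *
    (coef a b q * (((‖Complex.sin (z / 2)‖ + η) * (‖Complex.sin (w / 2)‖ + η) / (m - η)) ^ (2 * q.1) *
      ((‖Complex.cos (z / 2)‖ + η) * (‖Complex.cos (w / 2)‖ + η) / (m - η)) ^ (2 * q.2))), ?_, fun q => ?_,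
      fun q => (gB_diff q).differentiableOn, fun q => (gB_diff q).differentiableOn, ?_⟩
  · refine (coef_summable ha hb (by positivity) (by positivity) ?_).mul_left _
    rw [← add_div, div_lt_one hmη]; exact hη1
  · intro x hx
    exact (fA_diff a b q (H1 x (Metric.ball_subset_ball (min_le_left _ _) hx)).1.2).differentiableWithinAt
  · intro τ' hτ z' hz w' hw q
    obtain ⟨⟨a1, a2⟩, a3⟩ := H1 τ' (Metric.ball_subset_ball (min_le_left _ _) hτ)
    obtain ⟨b1, b2⟩ := H2 z' (Metric.ball_subset_ball ((min_le_right _ _).trans (min_le_left _ _)) hz)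
    obtain ⟨c1, c2⟩ := H3 w' (Metric.ball_subset_ball ((min_le_right _ _).trans (min_le_right _ _)) hw)
    rw [term_norm ha hb a2]
    have hk := coef_pos ha hb q
    unfold nS nC
    have hneg : -((a + b + 1) + 1) ≤ 0 := by linarith
    have hr := Real.rpow_le_rpow_of_nonpos hmη a1.le hneg
    beta_reduce
    gcongr

lemma TT_bound {a b : ℝ} (ha : 0 < a) (hb : 0 < b) : ∃ K > 0, ∀ τ z w, Om τ z w → ∀ x y, 
    x = nS z w / ‖Complex.cosh (τ / 2)‖ → y = nC z w / ‖Complex.cosh (τ / 2)‖ →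
    ‖TT (fA a b) gB gB τ z w‖ ≤ ‖Complex.sinh (τ / 2)‖ * ‖Complex.cosh (τ / 2)‖ ^ (-((a + b + 1) + 1)) *
      (K*((1-x-y)⁻¹*((1-x-y+x)^(-(a+1/2))*(1-x-y+y)^(-(b+1/2))))) := by
  obtain ⟨K, hK, H⟩ := S_bound ha hb
  refine ⟨K, hK, fun τ z w hO x y hx hy => ?_⟩
  have hm : 0 < ‖Complex.cosh (τ / 2)‖ := lt_of_lt_of_le hO.1 (Complex.re_le_norm _)
  have hx0 : 0 ≤ x := by rw [hx, nS]; positivity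
  have hy0 : 0 ≤ y := by rw [hy, nC]; positivity
  obtain ⟨h1, h2⟩ := H x y hx0 hy0 (by rw [hx, hy, ← add_div, div_lt_one hm]; exact hO.2)
  have h3 := h1.mul_left (‖Complex.sinh (τ / 2)‖ * ‖Complex.cosh (τ / 2)‖ ^ (-((a + b + 1) + 1)))
  unfold TT
  refine (tsum_of_norm_bounded h3.hasSum fun q => ?_).trans ?_
  · rw [term_norm ha hb hO.1, hx, hy]
  · rw [tsum_mul_left]
    gcongr

lemma Om_real {t : ℝ} (ht : 0 < t) (θ φ : ℝ) : Om t θ φ := by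
  have hc := cosh_half_gt ht
  have e : Complex.cosh ((t:ℂ) / 2) = ((Real.cosh (t / 2) : ℝ) : ℂ) := by push_cast; rfl
  have e1 : ∀ x : ℝ, Complex.sin ((x:ℂ) / 2) = ((Real.sin (x / 2) : ℝ) : ℂ) := fun x => by push_cast; rfl
  have e2 : ∀ x : ℝ, Complex.cos ((x:ℂ) / 2) = ((Real.cos (x / 2) : ℝ) : ℂ) := fun x => by push_cast; rfl
  refine ⟨?_, ?_⟩
  · rw [e, Complex.ofReal_re]; linarith
  · unfold nS nC
    rw [e, e1, e1, e2, e2]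
    simp only [Complex.norm_real, Real.norm_eq_abs]
    rw [abs_of_pos (by linarith : 0 < Real.cosh (t / 2))]
    nlinarith [sq_nonneg (|Real.sin (θ/2)| - |Real.sin (φ/2)|), sq_nonneg (|Real.cos (θ/2)| - |Real.cos (φ/2)|),
      sq_abs (Real.sin (θ/2)), sq_abs (Real.sin (φ/2)), sq_abs (Real.cos (θ/2)), sq_abs (Real.cos (φ/2)),
      Real.sin_sq_add_cos_sq (θ/2), Real.sin_sq_add_cos_sq (φ/2)]

def kap (a b : ℝ) : ℝ := 1 / (2 * c0 a b * 2 ^ (a + b + 1))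

lemma jHker_TT {a b : ℝ} (ha : 0 < a) (hb : 0 < b) {t : ℝ} (ht : 0 < t) (θ φ : ℝ) :
    jHker a b t θ φ = kap a b * (TT (fA a b) gB gB t θ φ).re := by
  rw [jHker_eq ha hb ht, kap]
  congr 1
  have : TT (fA a b) gB gB t θ φ = ((∑' q : ℕ × ℕ, dterm a b t (Real.sin (θ / 2) ^ 2) (Real.sin (φ / 2) ^ 2) q : ℝ) : ℂ) := by
    rw [Complex.ofReal_tsum]
    unfold TT
    refine tsum_congr fun q => ?_
    unfold dterm At fA gB
    have hs : ∀ x : ℝ, 1 - Real.sin x ^ 2 = Real.cos x ^ 2 := fun x => by linarith [Real.sin_sq_add_cos_sq x]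
    rw [hs, hs, mul_pow, mul_pow]
    have e : Complex.cosh ((t:ℂ) / 2) = ((Real.cosh (t / 2) : ℝ) : ℂ) := by push_cast; rfl
    rw [e, ← Complex.ofReal_cpow (Real.cosh_pos _).le]
    push_cast
    ring
  rw [this, Complex.ofReal_re]

lemma iter_real {F : ℕ → ℂ → ℂ} {U : Set ℝ} (hU : IsOpen U) (hF : ∀ n, ∀ x ∈ U, HasDerivAt (F n) (F (n + 1) x) (x : ℂ)) (κ : ℝ)
    {u : ℝ → ℝ} (hu : ∀ x ∈ U, u x = κ * (F 0 x).re) (n : ℕ) : ∀ x ∈ U, deriv^[n] u x = κ * (F n x).re := by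
  induction n with
  | zero => exact hu
  | succ n ih =>
    intro x hx
    rw [Function.iterate_succ', Function.comp, Filter.EventuallyEq.deriv_eq (Filter.eventuallyEq_of_mem (hU.mem_nhds hx) ih)]
    exact ((hF n x hx).real_of_complex.const_mul κ).deriv

lemma deriv_all {a b : ℝ} (ha : 0 < a) (hb : 0 < b) (M N L : ℕ) {t : ℝ} (ht : 0 < t) (θ φ : ℝ) :
    deriv^[L] (fun φ' => deriv^[N] (fun θ' => deriv^[M] (fun s => jHker a b s θ' φ') t) θ) φ =
      kap a b * (TT (Dn M (fA a b)) (Dn N gB) (Dn L gB) t θ φ).re := by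
  have G := good_fA ha hb
  have s1 : ∀ θ' φ' : ℝ, deriv^[M] (fun s => jHker a b s θ' φ') t = kap a b * (TT (Dn M (fA a b)) gB gB t θ' φ').re := by
    intro θ' φ'
    exact iter_real (F := fun n x => TT (Dn n (fA a b)) gB gB x θ' φ') isOpen_Ioi 
      (fun n x hx => G.hasDeriv_dn n (Om_real hx θ' φ')) (kap a b) (fun x hx => jHker_TT ha hb hx θ' φ') M t ht
  have s2 : ∀ φ' : ℝ, deriv^[N] (fun θ' => deriv^[M] (fun s => jHker a b s θ' φ') t) θ = kap a b * (TT (Dn M (fA a b)) (Dn N gB) gB t θ φ').re := by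
    intro φ'
    refine iter_real (F := fun n x => TT (Dn M (fA a b)) (Dn n gB) gB t x φ') isOpen_univ 
      (fun n x _ => ?_) (kap a b) (fun x hx => s1 x φ') N θ (mem_univ _)
    have := (G.dn M).rot.hasDeriv_dn n (τ := x) (z := φ') (w := t) (Om_real ht x φ')
    have e : ∀ (n : ℕ) (x : ℂ), TT (Dn n gB) gB (Dn M (fA a b)) x φ' t = TT (Dn M (fA a b)) (Dn n gB) gB t x φ' := fun n x =>
      TT_rot _ _ _ _ _ _
    simpa only [e] using this
  refine iter_real (F := fun n x => TT (Dn M (fA a b)) (Dn N gB) (Dn n gB) t θ x) isOpen_univ 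
      (fun n x _ => ?_) (kap a b) (fun x hx => s2 x) L φ (mem_univ _)
  have := ((G.dn M).rot.dn N).rot.hasDeriv_dn n (τ := x) (z := t) (w := θ) (Om_real ht θ x)
  have e : ∀ (n : ℕ) (x : ℂ), TT (Dn n gB) (Dn M (fA a b)) (Dn N gB) x t θ = TT (Dn M (fA a b)) (Dn N gB) (Dn n gB) t θ x := fun n x => 
    (TT_rot _ _ _ _ _ _).symm
  simpa only [e] using this

end JK

namespace JK

lemma csin_small {ζ : ℂ} (h : ‖ζ‖ ≤ 1) : ‖Complex.sin ζ‖ ≤ 2 * ‖ζ‖ ∧ ‖Complex.cos ζ - 1‖ ≤ 2 * ‖ζ‖ := by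
  have h1 := Complex.norm_exp_sub_one_le (x := ζ * Complex.I) (by simpa using h)
  have h2 := Complex.norm_exp_sub_one_le (x := -ζ * Complex.I) (by simpa using h)
  have e1 : ‖ζ * Complex.I‖ = ‖ζ‖ := by simp
  have e2 : ‖-ζ * Complex.I‖ = ‖ζ‖ := by simp
  rw [e1] at h1
  rw [e2] at h2
  constructor
  · have : Complex.sin ζ = ((Complex.exp (-ζ * Complex.I) - 1) - (Complex.exp (ζ * Complex.I) - 1)) * (Complex.I / 2) := by
      rw [Complex.sin]; ring
    rw [this, norm_mul]
    have e3 : ‖Complex.I / 2‖ = 1 / 2 := by simp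
    rw [e3]
    have := norm_sub_le (Complex.exp (-ζ * Complex.I) - 1) (Complex.exp (ζ * Complex.I) - 1)
    linarith
  · have : Complex.cos ζ - 1 = ((Complex.exp (-ζ * Complex.I) - 1) + (Complex.exp (ζ * Complex.I) - 1)) * (1 / 2) := by
      rw [Complex.cos]; ring
    rw [this, norm_mul]
    have e3 : ‖(1 / 2 : ℂ)‖ = 1 / 2 := by simp
    rw [e3]
    have := norm_add_le (Complex.exp (-ζ * Complex.I) - 1) (Complex.exp (ζ * Complex.I) - 1)
    linarith

lemma sin_lip {θ r : ℝ} {z : ℂ} (hr : r ≤ 1) (h : ‖z - θ‖ ≤ r) (h0 : 0 ≤ θ) (hπ : θ ≤ π) :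
    |‖Complex.sin (z / 2)‖ - Real.sin (θ / 2)| ≤ 2 * r ∧ |‖Complex.cos (z / 2)‖ - Real.cos (θ / 2)| ≤ 2 * r := by
  have hn : ‖(z - θ) / 2‖ ≤ r / 2 := by rw [norm_div]; simpa using by linarith
  obtain ⟨h1, h2⟩ := csin_small (ζ := (z - θ) / 2) (by linarith)
  have hz : z / 2 = (((θ / 2 : ℝ)) : ℂ) + (z - θ) / 2 := by push_cast; ring
  have es : ‖Complex.sin ((θ / 2 : ℝ) : ℂ)‖ = Real.sin (θ / 2) := by
    rw [← Complex.ofReal_sin, Complex.norm_real, Real.norm_of_nonneg (Real.sin_nonneg_of_nonneg_of_le_pi (by linarith) (by linarith))]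
  have ec : ‖Complex.cos ((θ / 2 : ℝ) : ℂ)‖ = Real.cos (θ / 2) := by
    rw [← Complex.ofReal_cos, Complex.norm_real, Real.norm_of_nonneg (Real.cos_nonneg_of_mem_Icc ⟨by linarith, by linarith⟩)]
  have hs1 := Real.sin_le_one (θ / 2)
  have hc1 := Real.cos_le_one (θ / 2)
  constructor
  · rw [← es]
    refine (abs_norm_sub_norm_le _ _).trans ?_
    rw [hz, Complex.sin_add, show ∀ s c C S : ℂ, s * C + c * S - s = s * (C - 1) + c * S by intros; ring]
    refine (norm_add_le _ _).trans ?_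
    rw [norm_mul, norm_mul, es, ec]
    nlinarith [norm_nonneg (Complex.cos ((z - θ) / 2) - 1), norm_nonneg (Complex.sin ((z - θ) / 2))]
  · rw [← ec]
    refine (abs_norm_sub_norm_le _ _).trans ?_
    rw [hz, Complex.cos_add, show ∀ s c C S : ℂ, c * C - s * S - c = c * (C - 1) - s * S by intros; ring]
    refine (norm_sub_le _ _).trans ?_
    rw [norm_mul, norm_mul, es, ec]
    nlinarith [norm_nonneg (Complex.cos ((z - θ) / 2) - 1), norm_nonneg (Complex.sin ((z - θ) / 2))]

lemma cosh_le_of_le {y r : ℝ} (hr : r ≤ 1) (h : |y| ≤ r) : Real.cosh y ≤ 1 + r ^ 2 := by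
  have h1 := Real.cosh_le_exp_half_sq y
  have hy2 : y ^ 2 ≤ r ^ 2 := sq_le_sq' (by linarith [neg_abs_le y]) (by linarith [le_abs_self y])
  have hr0 : 0 ≤ r := (abs_nonneg y).trans h
  have h2 := Real.abs_exp_sub_one_le (x := y ^ 2 / 2) (by rw [abs_of_nonneg (by positivity)]; nlinarith)
  rw [abs_of_nonneg (by positivity : 0 ≤ y ^ 2 / 2)] at h2
  linarith [le_abs_self (Real.exp (y ^ 2 / 2) - 1)]

lemma norm_sin_cos (z : ℂ) : ‖Complex.sin (z / 2)‖ ^ 2 + ‖Complex.cos (z / 2)‖ ^ 2 = Real.cosh z.im := by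
  have hz : z / 2 = ((z.re / 2 : ℝ) : ℂ) + ((z.im / 2 : ℝ) : ℂ) * Complex.I := by
    apply Complex.ext <;> simp
  rw [hz, Complex.sin_add_mul_I, Complex.cos_add_mul_I]
  rw [← Complex.ofReal_sin, ← Complex.ofReal_cos, ← Complex.ofReal_sinh, ← Complex.ofReal_cosh]
  rw [← Complex.normSq_eq_norm_sq, ← Complex.normSq_eq_norm_sq]
  have hz2 : z.im = 2 * (z.im / 2) := by ring
  rw [sub_eq_add_neg, ← neg_mul]
  simp only [← Complex.ofReal_mul, ← Complex.ofReal_neg, Complex.normSq_add_mul_I]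
  conv_rhs => rw [hz2, Real.cosh_two_mul]
  linear_combination (Real.cosh (z.im / 2) ^ 2 + Real.sinh (z.im / 2) ^ 2) * Real.sin_sq_add_cos_sq (z.re / 2)

lemma nSC_le {θ φ r : ℝ} {z w : ℂ} (hr : r ≤ 1) (hz : ‖z - θ‖ ≤ r) (hw : ‖w - φ‖ ≤ r) (hθ : θ ∈ Ioo 0 π) (hφ : φ ∈ Ioo 0 π) :
    nS z w + nC z w ≤ 1 + 17 * r ^ 2 - |θ - φ| ^ 2 / 40 := by
  obtain ⟨s1, c1⟩ := sin_lip hr hz hθ.1.le hθ.2.le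
  obtain ⟨s2, c2⟩ := sin_lip hr hw hφ.1.le hφ.2.le
  have n1 := norm_sin_cos z
  have n2 := norm_sin_cos w
  have i1 : Real.cosh z.im ≤ 1 + r ^ 2 := cosh_le_of_le hr ((by simpa using Complex.abs_im_le_norm (z - θ) : |z.im| ≤ ‖z - θ‖).trans hz)
  have i2 : Real.cosh w.im ≤ 1 + r ^ 2 := cosh_le_of_le hr ((by simpa using Complex.abs_im_le_norm (w - φ) : |w.im| ≤ ‖w - φ‖).trans hw)
  have hd : |θ - φ| ^ 2 / 10 ≤ (Real.sin (θ / 2) - Real.sin (φ / 2)) ^ 2 + (Real.cos (θ / 2) - Real.cos (φ / 2)) ^ 2 := by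
    have e : (Real.sin (θ / 2) - Real.sin (φ / 2)) ^ 2 + (Real.cos (θ / 2) - Real.cos (φ / 2)) ^ 2 = 4 * Real.sin (|θ - φ| / 4) ^ 2 := by
      have e1 : Real.cos (|θ - φ| / 2) = Real.cos (θ / 2) * Real.cos (φ / 2) + Real.sin (θ / 2) * Real.sin (φ / 2) := by
        rw [show |θ - φ| / 2 = |θ / 2 - φ / 2| by rw [← sub_div, abs_div, abs_two], Real.cos_abs, Real.cos_sub]
      have e2 : Real.cos (|θ - φ| / 2) = 1 - 2 * Real.sin (|θ - φ| / 4) ^ 2 := by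
        rw [show |θ - φ| / 2 = 2 * (|θ - φ| / 4) by ring, Real.cos_two_mul, Real.cos_sq']; ring
      nlinarith [Real.sin_sq_add_cos_sq (θ/2), Real.sin_sq_add_cos_sq (φ/2)]
    rw [e]
    have hdπ : |θ - φ| ≤ π := abs_sub_le_iff.2 ⟨by linarith [hθ.2, hφ.1], by linarith [hφ.2, hθ.1]⟩
    have := Real.mul_le_sin (x := |θ - φ| / 4) (by positivity) (by linarith [Real.pi_pos])
    have h3 : (|θ - φ| / (2 * π)) ^ 2 ≤ Real.sin (|θ - φ| / 4) ^ 2 := by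
      refine pow_le_pow_left₀ (by positivity) ?_ 2
      calc _ = 2 / π * (|θ - φ| / 4) := by field_simp; ring
        _ ≤ _ := this
    have hpi : π ^ 2 ≤ 10 := by nlinarith [Real.pi_lt_d2, Real.pi_pos]
    calc |θ - φ| ^ 2 / 10 ≤ |θ - φ| ^ 2 / π ^ 2 := by gcongr
      _ = 4 * (|θ - φ| / (2 * π)) ^ 2 := by field_simp; ring
      _ ≤ _ := by linarith
  have aux : ∀ {x x' y y' : ℝ}, |x - y| ≤ 2 * r → |x' - y'| ≤ 2 * r → (y - y') ^ 2 / 2 - 16 * r ^ 2 ≤ (x - x') ^ 2 := by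
    intro x x' y y' h h'
    have h1 : |(y - y') - (x - x')| ≤ 4 * r := by
      have : (y - y') - (x - x') = (x' - y') - (x - y) := by ring
      rw [this]
      exact (abs_sub _ _).trans (by linarith)
    have h2 : ((y - y') - (x - x')) ^ 2 ≤ (4 * r) ^ 2 := by
      rw [← sq_abs ((y - y') - (x - x'))]
      exact pow_le_pow_left₀ (abs_nonneg _) h1 2
    nlinarith [sq_nonneg ((y - y') - 2 * (x - x'))]
  have A := aux s1 s2
  have B := aux c1 c2
  unfold nS nC
  nlinarith

end JK

namespace JK

lemma one_add_sq_le_cosh (u : ℝ) : 1 + u ^ 2 / 2 ≤ Real.cosh u := by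
  have e : Real.cosh u = 1 + 2 * Real.sinh (u / 2) ^ 2 := by
    have h : u = 2 * (u / 2) := by ring
    conv_lhs => rw [h, Real.cosh_two_mul, Real.cosh_sq]
    ring
  have h2 : (u / 2) ^ 2 ≤ Real.sinh (u / 2) ^ 2 := by
    rw [← sq_abs (u / 2), ← sq_abs (Real.sinh (u / 2)), Real.abs_sinh]
    exact pow_le_pow_left₀ (abs_nonneg _) (Real.self_le_sinh_iff.2 (abs_nonneg _)) 2
  rw [e]; nlinarith

lemma sinh_le_mul_cosh {u : ℝ} (hu : 0 ≤ u) : Real.sinh u ≤ u * Real.cosh u := by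
  have hd : ∀ x, HasDerivAt (fun x => x * Real.cosh x - Real.sinh x) (x * Real.sinh x) x := fun x => by
    have := ((hasDerivAt_id x).mul (Real.hasDerivAt_cosh x)).sub (Real.hasDerivAt_sinh x)
    refine this.congr_deriv ?_
    simp
  have hm : MonotoneOn (fun x => x * Real.cosh x - Real.sinh x) (Ici 0) := by
    apply monotoneOn_of_deriv_nonneg (convex_Ici 0)
    · exact fun x _ => (hd x).continuousAt.continuousWithinAt
    · exact fun x _ => (hd x).differentiableAt.differentiableWithinAt
    · intro x hx
      rw [interior_Ici] at hx
      rw [(hd x).deriv]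
      exact mul_nonneg (le_of_lt hx) (Real.sinh_nonneg_iff.2 (le_of_lt hx))
  have := hm (mem_Ici.2 le_rfl) (mem_Ici.2 hu) hu
  simp at this
  linarith

lemma abs_sinh_le_mul_cosh (u : ℝ) : |Real.sinh u| ≤ |u| * Real.cosh u := by
  rw [Real.abs_sinh, ← Real.cosh_abs u]
  exact sinh_le_mul_cosh (abs_nonneg u)

lemma tau_facts {t r : ℝ} {τ : ℂ} (hr : r ≤ 1) (h : ‖τ - t‖ ≤ r) : ∃ u, |u - t / 2| ≤ r / 2 ∧
    Real.cosh u * (1 - r ^ 2 / 8) ≤ (Complex.cosh (τ / 2)).re ∧ ‖Complex.cosh (τ / 2)‖ ≤ Real.cosh u ∧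
    ‖Complex.sinh (τ / 2)‖ ≤ |Real.sinh u| + Real.cosh u * (r / 2) := by
  set u := τ.re / 2 with hu
  set v := τ.im / 2 with hv
  have hz : τ / 2 = ((u : ℝ) : ℂ) + ((v : ℝ) : ℂ) * Complex.I := by
    apply Complex.ext <;> simp [hu, hv]
  have hv1 : |v| ≤ r / 2 := by
    have := (Complex.abs_im_le_norm (τ - t)).trans h
    simp at this
    rw [hv, abs_div, abs_two]; linarith
  have hC : Complex.cosh (τ / 2) = ((Real.cosh u * Real.cos v : ℝ) : ℂ) + ((Real.sinh u * Real.sin v : ℝ) : ℂ) * Complex.I := by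
    rw [hz, Complex.cosh_add, Complex.cosh_mul_I, Complex.sinh_mul_I]; push_cast; ring
  have hS : Complex.sinh (τ / 2) = ((Real.sinh u * Real.cos v : ℝ) : ℂ) + ((Real.cosh u * Real.sin v : ℝ) : ℂ) * Complex.I := by
    rw [hz, Complex.sinh_add, Complex.cosh_mul_I, Complex.sinh_mul_I]; push_cast; ring
  have hcu := Real.cosh_pos u
  refine ⟨u, ?_, ?_, ?_, ?_⟩
  · have := (Complex.abs_re_le_norm (τ - t)).trans h
    simp at this
    rw [hu, ← sub_div, abs_div, abs_two]; linarith
  · rw [hC]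
    simp only [Complex.add_re, Complex.ofReal_re, Complex.re_ofReal_mul, Complex.I_re, mul_zero, add_zero]
    have h1 := Real.one_sub_sq_div_two_le_cos (x := v)
    have h2 : v ^ 2 ≤ (r / 2) ^ 2 := by rw [← sq_abs]; exact pow_le_pow_left₀ (abs_nonneg _) hv1 2
    exact mul_le_mul_of_nonneg_left (by linarith) hcu.le
  · rw [← abs_of_pos hcu, ← abs_of_nonneg (norm_nonneg (Complex.cosh (τ / 2)))]
    rw [← sq_le_sq, ← Complex.normSq_eq_norm_sq, hC, Complex.normSq_add_mul_I]
    nlinarith [Real.sin_sq_add_cos_sq v, Real.cosh_sq u, sq_nonneg (Real.sin v)]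
  · rw [hS]
    refine (norm_add_le _ _).trans ?_
    rw [norm_mul, Complex.norm_I, Complex.norm_real, Complex.norm_real, Real.norm_eq_abs, Real.norm_eq_abs, abs_mul, abs_mul, mul_one,
      abs_of_pos hcu]
    have h1 := Real.abs_cos_le_one v
    have h2 : |Real.sin v| ≤ |v| := Real.abs_sin_le_abs
    have h3 := abs_nonneg (Real.sinh u)
    gcongr
    · exact mul_le_of_le_one_right h3 h1
    · exact h2.trans hv1

lemma gap {t θ φ ρ : ℝ} {z w : ℂ} {u m : ℝ} (ht : 0 < t) (hθ : θ ∈ Ioo 0 π) (hφ : φ ∈ Ioo 0 π) (hρ0 : 0 < ρ) (hρ1 : ρ ≤ 1)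
    (hρ : ρ ≤ t + |θ - φ|) (hu : |u - t / 2| ≤ (ρ / 80) / 2) (hm1 : Real.cosh u * (1 - (ρ / 80) ^ 2 / 8) ≤ m) (hm2 : m ≤ Real.cosh u)
    (hz : ‖z - θ‖ ≤ ρ / 80) (hw : ‖w - φ‖ ≤ ρ / 80) : nS z w + nC z w ≤ m - ρ ^ 2 / 160 * m := by
  have h1 := nSC_le (by linarith) hz hw hθ hφ
  have h2 := one_add_sq_le_cosh u
  have hd := abs_nonneg (θ - φ)
  set d := |θ - φ|
  have hu2 : (u - t / 2) ^ 2 ≤ ((ρ / 80) / 2) ^ 2 := by rw [← sq_abs]; exact pow_le_pow_left₀ (abs_nonneg _) hu 2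
  have hu3 : t ^ 2 / 8 - (ρ / 80) ^ 2 / 4 ≤ u ^ 2 := by nlinarith [sq_nonneg (2 * u - t / 2)]
  have hρ2 : ρ ^ 2 ≤ 2 * (t ^ 2 + d ^ 2) := by nlinarith [sq_nonneg (t - d)]
  have hρ3 : ρ ^ 2 ≤ 1 := by nlinarith
  have hσ : (1 + u ^ 2 / 2) * (1 - (ρ / 80) ^ 2 / 8 - ρ ^ 2 / 160) ≤ Real.cosh u * (1 - (ρ / 80) ^ 2 / 8 - ρ ^ 2 / 160) :=
    mul_le_mul_of_nonneg_right h2 (by nlinarith)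
  have h4 : ρ ^ 2 / 160 * m ≤ ρ ^ 2 / 160 * Real.cosh u := by gcongr
  nlinarith [mul_nonneg (sq_nonneg u) (sq_nonneg ρ), sq_nonneg u]

end JK

namespace JK

lemma side {A A' ρ t d m s1 s2 δ : ℝ} (hA : 0 < A) (hAπ : A < π) (hd : |A - A'| = d) (ht : 0 < t) (hρ : ρ = min (t + d) 1)
    (hδ : ρ ^ 2 / 160 ≤ δ) (hm0 : 0 < m) (hm : ρ < 1 → m ≤ 2) (h1 : A / π - ρ / 40 ≤ s1) (h2 : A' / π - ρ / 40 ≤ s2)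
    (hs1 : 0 ≤ s1) (hs2 : 0 ≤ s2) : (ρ + A) ^ 2 / 10240 ≤ δ + s1 * s2 / m := by
  have hd0 : 0 ≤ d := hd ▸ abs_nonneg _
  have hρ0 : 0 < ρ := by rw [hρ]; exact lt_min (by linarith) one_pos
  have hx : 0 ≤ s1 * s2 / m := by positivity
  rcases le_or_gt A (7 * ρ) with h | h
  · have : (ρ + A) ^ 2 ≤ (8 * ρ) ^ 2 := pow_le_pow_left₀ (by linarith) (by linarith) 2
    linarith
  · have hρ1 : ρ < 1 := by linarith [Real.pi_lt_d2]
    have e : ρ = t + d := by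
      rw [hρ]; apply min_eq_left
      by_contra hc
      rw [hρ, min_eq_right (by linarith)] at hρ1
      linarith
    have hA' : 6 / 7 * A ≤ A' := by linarith [le_abs_self (A - A')]
    have p1 : A / 4 ≤ A / π := by
      apply div_le_div_of_nonneg_left hA.le Real.pi_pos (by linarith [Real.pi_lt_d2])
    have p2 : A' / 4 ≤ A' / π := by
      apply div_le_div_of_nonneg_left (by linarith) Real.pi_pos (by linarith [Real.pi_lt_d2])
    have q1 : A / 5 ≤ s1 := by linarith
    have q2 : A / 5 ≤ s2 := by linarith
    have q3 : A / 5 * (A / 5) / 2 ≤ s1 * s2 / m := by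
      have := hm hρ1
      gcongr
    have : (ρ + A) ^ 2 ≤ (2 * A) ^ 2 := pow_le_pow_left₀ (by linarith) (by linarith) 2
    nlinarith

lemma rpow_side {B s c : ℝ} (hB : 0 < B) (hs : 0 < s) (h : B ^ 2 / 10240 ≤ c) : c ^ (-(s + 1 / 2)) ≤ 10240 ^ (s + 1 / 2) * B ^ (-(2 * s + 1)) := by
  have h1 := Real.rpow_le_rpow_of_nonpos (z := -(s + 1 / 2)) (by positivity : 0 < B ^ 2 / 10240) h (by linarith)
  refine h1.trans (le_of_eq ?_)
  rw [Real.div_rpow (by positivity) (by norm_num), Real.rpow_neg (by norm_num : (0:ℝ) ≤ 10240), div_inv_eq_mul, mul_comm]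
  congr 1
  rw [← Real.rpow_natCast, ← Real.rpow_mul hB.le]
  congr 1
  push_cast; ring

lemma combine {sh mp ρ e8 ex K i1 A B cA cB TA TB : ℝ} (hρ : 0 < ρ) (hK : 0 < K) (h1 : sh * mp ≤ 4 * ρ * (e8 * ex))
    (hex : 0 ≤ e8 * ex) (h2 : i1 ≤ 160 * (ρ⁻¹ * ρ⁻¹)) (hA : A ≤ cA * TA) (hB : B ≤ cB * TB) (hi : 0 ≤ i1) (hA0 : 0 ≤ A) (hB0 : 0 ≤ B) :
    sh * mp * (K * (i1 * (A * B))) ≤ 4 * e8 * (K * (160 * (cA * cB))) * (ex * ρ⁻¹ * (TA * TB)) := by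
  have hA1 : 0 ≤ cA * TA := hA0.trans hA
  calc _ ≤ 4 * ρ * (e8 * ex) * (K * (160 * (ρ⁻¹ * ρ⁻¹) * ((cA * TA) * (cB * TB)))) := by gcongr
    _ = _ := by field_simp

lemma msplit {sh m ρ l R : ℝ} (hm : 0 < m) (h : sh ≤ 4 * ρ * m) (hρ : 0 < ρ) (hR : m ^ (-l) ≤ R) : sh * m ^ (-(l + 1)) ≤ 4 * ρ * R := by
  calc _ ≤ 4 * ρ * m * m ^ (-(l + 1)) := by gcongr
    _ = 4 * ρ * m ^ (-l) := by
      rw [mul_assoc (4 * ρ), show -(l + 1) = -l - 1 by ring, Real.rpow_sub_one hm.ne']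
      field_simp
    _ ≤ _ := by gcongr

set_option maxHeartbeats 1000000 in
lemma polydisc {a b : ℝ} (ha : 0 < a) (hb : 0 < b) : ∃ K > 0, ∀ t > 0, ∀ θ ∈ Ioo 0 π, ∀ φ ∈ Ioo 0 π, ∀ ρ, ρ = min (t + |θ - φ|) 1 →
    ∀ τ ∈ Metric.closedBall (t : ℂ) (ρ / 80), ∀ z ∈ Metric.closedBall (θ : ℂ) (ρ / 80), ∀ w ∈ Metric.closedBall (φ : ℂ) (ρ / 80),
    Om τ z w ∧ ‖TT (fA a b) gB gB τ z w‖ ≤ 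
      K * (Real.exp (-(t / 2 * (a + b + 1))) * ρ⁻¹ * ((ρ + θ) ^ (-(2 * a + 1)) * (ρ + (π - θ)) ^ (-(2 * b + 1)))) := by
  obtain ⟨K, hK, H⟩ := TT_bound ha hb
  refine ⟨4 * 8 ^ (a + b + 1) * (K * (160 * (10240 ^ (a + 1 / 2) * 10240 ^ (b + 1 / 2)))), by positivity, 
    fun t ht θ hθ φ hφ ρ hρ τ hτ z hz w hw => ?_⟩
  rw [mem_closedBall_iff_norm] at hτ hz hw
  have hd0 := abs_nonneg (θ - φ)
  have hρ0 : 0 < ρ := by rw [hρ]; exact lt_min (by linarith) one_pos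
  have hρ1 : ρ ≤ 1 := by rw [hρ]; exact min_le_right _ _
  have hρd : ρ ≤ t + |θ - φ| := by rw [hρ]; exact min_le_left _ _
  have hρlt : ρ < 1 → ρ = t + |θ - φ| := by
    intro h1
    rw [hρ]; apply min_eq_left
    by_contra hc
    rw [hρ, min_eq_right (by linarith)] at h1
    linarith
  have hr1 : ρ / 80 ≤ 1 := by linarith
  obtain ⟨u, hu, hre, hmu, hsh⟩ := tau_facts hr1 hτ
  set m := ‖Complex.cosh (τ / 2)‖ with hm
  have hmre : (Complex.cosh (τ / 2)).re ≤ m := Complex.re_le_norm _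
  have hcu := Real.cosh_pos u
  have hρ2 : ρ ^ 2 ≤ 1 := by nlinarith
  have hhalf : Real.cosh u / 2 ≤ Real.cosh u * (1 - (ρ / 80) ^ 2 / 8) := by nlinarith
  have hg := gap ht hθ hφ hρ0 hρ1 hρd hu (hre.trans hmre) hmu hz hw
  have hm0 : 0 < m := by linarith
  have hO : Om τ z w := by
    refine ⟨by linarith, ?_⟩
    rw [← hm]
    have : 0 < ρ ^ 2 / 160 * m := by positivity
    linarith
  refine ⟨hO, ?_⟩
  have HT := H τ z w hO _ _ rfl rfl
  rw [← hm] at HT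
  set x := nS z w / m with hx
  set y := nC z w / m with hy
  have hδ : ρ ^ 2 / 160 ≤ 1 - x - y := by
    have : x + y ≤ 1 - ρ ^ 2 / 160 := by
      rw [hx, hy, ← add_div, div_le_iff₀ hm0]; linarith
    linarith
  have hu1 : |u| ≤ t / 2 + ρ / 160 := by
    have := abs_sub_abs_le_abs_sub u (t / 2)
    rw [abs_of_pos (by linarith : 0 < t / 2)] at this
    linarith
  have hm2 : ρ < 1 → m ≤ 2 := fun h => by
    have h1 := hρlt h
    have := cosh_le_of_le (y := u) (r := 1) le_rfl (by linarith)
    linarith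
  obtain ⟨s1, c1⟩ := sin_lip hr1 hz hθ.1.le hθ.2.le
  obtain ⟨s2, c2⟩ := sin_lip hr1 hw hφ.1.le hφ.2.le
  have jor : ∀ A ∈ Ioo 0 π, A / π ≤ Real.sin (A / 2) := fun A hA => by
    have := Real.mul_le_sin (x := A / 2) (by linarith [hA.1]) (by linarith [hA.2])
    refine le_trans (le_of_eq ?_) this
    field_simp
  have jorc : ∀ A ∈ Ioo 0 π, (π - A) / π ≤ Real.cos (A / 2) := fun A hA => by
    rw [← Real.sin_pi_div_two_sub, show π / 2 - A / 2 = (π - A) / 2 by ring]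
    exact jor _ ⟨by linarith [hA.2], by linarith [hA.1]⟩
  have S1 : (ρ + θ) ^ 2 / 10240 ≤ 1 - x - y + x := by
    refine side hθ.1 hθ.2 rfl ht hρ hδ hm0 hm2 ?_ ?_ (norm_nonneg _) (norm_nonneg _)
    · have := jor θ hθ
      rw [abs_le] at s1
      linarith
    · have := jor φ hφ
      rw [abs_le] at s2
      linarith
  have S2 : (ρ + (π - θ)) ^ 2 / 10240 ≤ 1 - x - y + y := by
    refine side (A := π - θ) (A' := π - φ) (by linarith [hθ.2]) (by linarith [hθ.1]) ?_ ht hρ hδ hm0 hm2 ?_ ?_ (norm_nonneg _) (norm_nonneg _)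
    · rw [show π - θ - (π - φ) = -(θ - φ) by ring, abs_neg]
    · have := jorc θ hθ
      rw [abs_le] at c1
      linarith
    · have := jorc φ hφ
      rw [abs_le] at c2
      linarith
  have R1 := rpow_side (by linarith [hθ.1]) ha S1
  have R2 := rpow_side (by linarith [hθ.2]) hb S2
  have R3 : (1 - x - y)⁻¹ ≤ 160 * (ρ⁻¹ * ρ⁻¹) := by
    calc _ ≤ (ρ ^ 2 / 160)⁻¹ := inv_anti₀ (by positivity) hδ
      _ = _ := by field_simp
  have R4 : ‖Complex.sinh (τ / 2)‖ ≤ 4 * ρ * m := by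
    have : |Real.sinh u| ≤ ρ * Real.cosh u := by
      rcases lt_or_eq_of_le hρ1 with h | h
      · refine (abs_sinh_le_mul_cosh u).trans ?_
        gcongr
        have := hρlt h
        linarith
      · rw [h, one_mul]; exact abs_sinh_le_cosh u
    nlinarith
  have R5 : m ^ (-(a + b + 1)) ≤ 8 ^ (a + b + 1) * Real.exp (-(t / 2 * (a + b + 1))) := by
    have hexp : Real.exp (t / 2) / 8 ≤ m := by
      have h1 : Real.exp u / 2 ≤ Real.cosh u := by
        rw [Real.cosh_eq]; linarith [Real.exp_pos (-u)]
      have h2 : Real.exp (t / 2) / 2 ≤ Real.exp u := by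
        have h3 : t / 2 - 1 / 2 ≤ u := by linarith [neg_abs_le (u - t / 2)]
        have h4 : Real.exp (t / 2) * Real.exp (-(1 / 2)) ≤ Real.exp u := by
          rw [← Real.exp_add]; exact Real.exp_le_exp.2 (by linarith)
        have h5 := Real.add_one_le_exp (-(1 / 2) : ℝ)
        nlinarith [Real.exp_pos (t / 2)]
      linarith
    have h1 := Real.rpow_le_rpow_of_nonpos (z := -(a + b + 1)) (by positivity) hexp (by linarith)
    refine h1.trans (le_of_eq ?_)
    rw [Real.div_rpow (by positivity) (by norm_num), Real.rpow_neg (by norm_num : (0:ℝ) ≤ 8), div_inv_eq_mul, mul_comm, ← Real.exp_mul, mul_neg]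
  have R6 : ‖Complex.sinh (τ / 2)‖ * m ^ (-((a + b + 1) + 1)) ≤ 4 * ρ * (8 ^ (a + b + 1) * Real.exp (-(t / 2 * (a + b + 1)))) :=
    msplit hm0 R4 hρ0 R5
  have p1 : 0 ≤ (1 - x - y + x) ^ (-(a + 1 / 2)) := Real.rpow_nonneg (by nlinarith [S1, sq_nonneg (ρ + θ)]) _
  have p2 : 0 ≤ (1 - x - y + y) ^ (-(b + 1 / 2)) := Real.rpow_nonneg (by nlinarith [S2, sq_nonneg (ρ + (π - θ))]) _
  have p3 : 0 ≤ (1 - x - y)⁻¹ := inv_nonneg.2 (by nlinarith)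
  have q1 : 0 < ρ + θ := by linarith [hθ.1]
  have q2 : 0 < ρ + (π - θ) := by linarith [hθ.2]
  refine HT.trans ?_
  exact combine hρ0 hK R6 (by positivity) R3 R1 R2 p3 p1 p2

/-- pointwise kernel bound -/
lemma deriv_bound {a b : ℝ} (ha : 0 < a) (hb : 0 < b) (M N L : ℕ) : ∃ K > 0, ∀ t > 0, ∀ θ ∈ Ioo 0 π, ∀ φ ∈ Ioo 0 π, 
    ∀ ρ, ρ = min (t + |θ - φ|) 1 →
    |deriv^[L] (fun φ' => deriv^[N] (fun θ' => deriv^[M] (fun s => jHker a b s θ' φ') t) θ) φ| ≤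
      K * (Real.exp (-(t / 2 * (a + b + 1))) * (ρ⁻¹ ^ (M + N + L + 1)) * ((ρ + θ) ^ (-(2 * a + 1)) * (ρ + (π - θ)) ^ (-(2 * b + 1)))) := by
  obtain ⟨K, hK, H⟩ := polydisc ha hb
  have hc0 := c0_pos ha hb
  have hk : 0 < kap a b := by unfold kap; positivity
  refine ⟨kap a b * (L.factorial * N.factorial * M.factorial * 80 ^ (M + N + L) * K), by positivity, fun t ht θ hθ φ hφ ρ hρ => ?_⟩
  have hd0 := abs_nonneg (θ - φ)
  have hρ0 : 0 < ρ := by rw [hρ]; exact lt_min (by linarith) one_pos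
  have h := (good_fA ha hb).cauchy3 M N L (τ := t) (z := θ) (w := φ) (r := ρ / 80) (by positivity)
    (fun τ hτ z hz w hw => (H t ht θ hθ φ hφ ρ hρ τ hτ z hz w hw).1) (fun τ hτ z hz w hw => (H t ht θ hθ φ hφ ρ hρ τ hτ z hz w hw).2)
  rw [deriv_all ha hb M N L ht θ φ, abs_mul, abs_of_pos hk]
  have h2 := (Complex.abs_re_le_norm _).trans h
  calc _ ≤ kap a b * _ := mul_le_mul_of_nonneg_left h2 hk.le
    _ = _ := by
      rw [pow_add, pow_add, pow_add, pow_one, pow_add, pow_add, inv_pow, inv_pow, inv_pow, div_pow, div_pow, div_pow]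
      field_simp

end JK

namespace JK

lemma pow_compare {c1 c2 x s q : ℝ} (hc1 : 0 < c1) (hx : 0 < x) (h1 : c1 * x ≤ s) (h2 : s ≤ c2 * x) :
    s ^ q ≤ (c1 ^ q + c2 ^ q) * x ^ q := by
  have hs : 0 < s := lt_of_lt_of_le (by positivity) h1
  have hc2 : 0 < c2 := by
    by_contra h
    nlinarith
  rcases le_total 0 q with h | h
  · have := Real.rpow_le_rpow hs.le h2 h
    rw [Real.mul_rpow hc2.le hx.le] at this
    have : 0 ≤ c1 ^ q * x ^ q := by positivity
    linarith
  · have := Real.rpow_le_rpow_of_nonpos (by positivity) h1 h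
    rw [Real.mul_rpow hc1.le hx.le] at this
    have : 0 ≤ c2 ^ q * x ^ q := by positivity
    linarith

lemma lint_rpow {p T : ℝ} (hp : -1 < p) (hT : 0 < T) :
    ∫⁻ x in Ioc 0 T, ENNReal.ofReal (x ^ p) = ENNReal.ofReal (T ^ (p + 1) / (p + 1)) := by
  have h1 : IntegrableOn (fun x : ℝ => x ^ p) (Ioc 0 T) := by
    have := intervalIntegral.intervalIntegrable_rpow' (a := 0) (b := T) hp
    rwa [intervalIntegrable_iff_integrableOn_Ioc_of_le hT.le] at this
  rw [← ofReal_integral_eq_lintegral_ofReal h1]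
  · rw [← intervalIntegral.integral_of_le hT.le, integral_rpow (Or.inl hp), Real.zero_rpow (by linarith), sub_zero]
  · refine (ae_restrict_iff' measurableSet_Ioc).2 (Filter.Eventually.of_forall fun x hx => ?_)
    exact Real.rpow_nonneg hx.1.le _

lemma J_bound {p : ℝ} (hp : -1 < p) : ∃ C > 0, ∀ θ > 0, ∀ d > 0,
    ∫⁻ x in Ioo (θ - d) (θ + d) ∩ Ioi 0, ENNReal.ofReal (x ^ p) ≤ ENNReal.ofReal (C * (d * (d + θ) ^ p)) := by
  have hp1 : 0 < p + 1 := by linarith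
  refine ⟨2 * ((1 / 3) ^ p + 1 ^ p) + 3 / (p + 1), by positivity, fun θ hθ d hd => ?_⟩
  have hP : 0 < d * (d + θ) ^ p := by positivity
  rcases le_or_gt (2 * d) θ with h | h
  · calc _ ≤ ∫⁻ x in Ioo (θ - d) (θ + d) ∩ Ioi 0, ENNReal.ofReal (((1 / 3) ^ p + 1 ^ p) * (d + θ) ^ p) := by
          refine setLIntegral_mono' (measurableSet_Ioo.inter measurableSet_Ioi) fun x hx => ?_
          exact ENNReal.ofReal_le_ofReal (pow_compare (by norm_num) (by linarith) (by linarith [hx.1.1]) (by linarith [hx.1.2]))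
      _ ≤ ∫⁻ x in Ioo (θ - d) (θ + d), ENNReal.ofReal (((1 / 3) ^ p + 1 ^ p) * (d + θ) ^ p) := 
          lintegral_mono_set inter_subset_left
      _ = ENNReal.ofReal (((1 / 3) ^ p + 1 ^ p) * (d + θ) ^ p * (2 * d)) := by
          rw [setLIntegral_const, Real.volume_Ioo, ← ENNReal.ofReal_mul (by positivity)]
          congr 2; ring
      _ ≤ _ := by
          apply ENNReal.ofReal_le_ofReal
          have : 0 ≤ 3 / (p + 1) * (d * (d + θ) ^ p) := by positivity
          linarith
  · calc _ ≤ ∫⁻ x in Ioc 0 (d + θ), ENNReal.ofReal (x ^ p) := 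
          lintegral_mono_set fun x hx => ⟨hx.2, by linarith [hx.1.2]⟩
      _ = _ := lint_rpow hp (by linarith)
      _ ≤ _ := by
          apply ENNReal.ofReal_le_ofReal
          rw [Real.rpow_add_one (by linarith)]
          have h3 : (d + θ) ^ p * (d + θ) / (p + 1) ≤ (d + θ) ^ p * (3 * d) / (p + 1) := by
            gcongr; linarith
          have : 0 ≤ 2 * ((1 / 3) ^ p + 1 ^ p) * (d * (d + θ) ^ p) := by positivity
          calc _ ≤ _ := h3
            _ = 3 / (p + 1) * (d * (d + θ) ^ p) := by ring
            _ ≤ _ := by linarith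

lemma J_refl (q θ d : ℝ) : ∫⁻ x in Ioo (θ - d) (θ + d) ∩ Iio π, ENNReal.ofReal ((π - x) ^ q) =
    ∫⁻ x in Ioo ((π - θ) - d) ((π - θ) + d) ∩ Ioi 0, ENNReal.ofReal (x ^ q) := by
  rw [← lintegral_indicator (measurableSet_Ioo.inter measurableSet_Iio), ← lintegral_indicator (measurableSet_Ioo.inter measurableSet_Ioi)]
  conv_rhs => rw [← lintegral_sub_left_eq_self _ π]
  refine lintegral_congr fun x => ?_
  by_cases h : x ∈ Ioo (θ - d) (θ + d) ∩ Iio π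
  · rw [indicator_of_mem h, indicator_of_mem]
    exact ⟨⟨by linarith [h.1.2], by linarith [h.1.1]⟩, by simpa using h.2⟩
  · rw [indicator_of_notMem h, indicator_of_notMem]
    intro h'
    exact h ⟨⟨by linarith [h'.1.2], by linarith [h'.1.1]⟩, by simpa using h'.2⟩

lemma psi_sq {α β x : ℝ} (hx : x ∈ Ioo 0 π) : jPsi α β x ^ 2 = Real.sin (x / 2) ^ (2 * α + 1) * Real.cos (x / 2) ^ (2 * β + 1) := by
  have h1 : 0 < Real.sin (x / 2) := Real.sin_pos_of_pos_of_lt_pi (by linarith [hx.1]) (by linarith [hx.2, Real.pi_pos])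
  have h2 : 0 < Real.cos (x / 2) := Real.cos_pos_of_mem_Ioo ⟨by linarith [hx.1, Real.pi_pos], by linarith [hx.2]⟩
  unfold jPsi
  rw [abs_of_pos h1, mul_pow, ← Real.rpow_natCast, ← Real.rpow_natCast, ← Real.rpow_mul h1.le, ← Real.rpow_mul h2.le]
  congr 2 <;> push_cast <;> ring

lemma ball_eq (α β θ d : ℝ) : ballMeasure α β θ d = 
    ∫⁻ x in Ioo (θ - d) (θ + d) ∩ Ioo 0 π, ENNReal.ofReal (jPsi α β x ^ 2) := by
  unfold ballMeasure jacobiMeasurePlus jacobiMeasure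
  rw [Measure.restrict_apply measurableSet_Ioo, withDensity_apply _ (measurableSet_Ioo.inter measurableSet_Ioo),
    Measure.restrict_restrict (measurableSet_Ioo.inter measurableSet_Ioo)]
  congr 2
  ext x
  simp only [mem_inter_iff, mem_Ioo]
  constructor
  · exact fun h => h.1
  · exact fun h => ⟨h, by linarith [h.2.1, Real.pi_pos], h.2.2⟩

lemma ball_pos {α β θ d : ℝ} (hθ : θ ∈ Ioo 0 π) (hd : 0 < d) : 0 < ballMeasure α β θ d := by
  rw [ball_eq]
  have hmeas : MeasurableSet (Ioo (θ - d) (θ + d) ∩ Ioo 0 π) := measurableSet_Ioo.inter measurableSet_Ioo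
  rw [setLIntegral_pos_iff]
  · have hsub : Ioo (θ - d) (θ + d) ∩ Ioo 0 π ⊆ Function.support (fun x => ENNReal.ofReal (jPsi α β x ^ 2)) := by
      intro x hx
      have hx2 := hx.2
      have h1 : 0 < Real.sin (x / 2) := Real.sin_pos_of_pos_of_lt_pi (by linarith [hx2.1]) (by linarith [hx2.2, Real.pi_pos])
      have h2 : 0 < Real.cos (x / 2) := Real.cos_pos_of_mem_Ioo ⟨by linarith [hx2.1, Real.pi_pos], by linarith [hx2.2]⟩
      rw [Function.mem_support, psi_sq hx2]
      exact (ENNReal.ofReal_pos.2 (by positivity)).ne'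
    rw [inter_eq_self_of_subset_right hsub]
    exact (isOpen_Ioo.inter isOpen_Ioo).measure_pos volume ⟨θ, ⟨by linarith, by linarith⟩, hθ⟩
  · unfold jPsi
    fun_prop

lemma ball_bound {α β : ℝ} (hα : -1 < α) (hβ : -1 < β) : ∃ C > 0, ∀ θ ∈ Ioo 0 π, ∀ d, 0 < d → d < π →
    ballMeasure α β θ d ≤ ENNReal.ofReal (C * (d * ((d + θ) ^ (2 * α + 1) * (d + (π - θ)) ^ (2 * β + 1)))) := by
  obtain ⟨C1, hC1, H1⟩ := J_bound (p := 2 * α + 1) (by linarith)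
  obtain ⟨C2, hC2, H2⟩ := J_bound (p := 2 * β + 1) (by linarith)
  have hpi := Real.pi_pos
  set p := 2 * α + 1
  set q := 2 * β + 1
  let k : ℝ → ℝ := fun q => (1 / π) ^ q + (1 / 2) ^ q
  let l : ℝ → ℝ := fun q => (1 / 4) ^ q + 1 ^ q
  have hk : ∀ q, 0 < k q := fun q => by positivity
  have hl : ∀ q, 0 < l q := fun q => by positivity
  have jor : ∀ A ∈ Ioo 0 π, Real.sin (A / 2) ∈ Icc (1 / π * A) (1 / 2 * A) := fun A hA => by
    have := Real.mul_le_sin (x := A / 2) (by linarith [hA.1]) (by linarith [hA.2])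
    refine ⟨le_trans (le_of_eq ?_) this, (Real.sin_le (by linarith [hA.1])).trans (by linarith)⟩
    field_simp
  have dens : ∀ x ∈ Ioo 0 π, jPsi α β x ^ 2 ≤ k p * k q * (x ^ p * (π - x) ^ q) := fun x hx => by
    rw [psi_sq hx]
    have h2 : 0 < Real.cos (x / 2) := Real.cos_pos_of_mem_Ioo ⟨by linarith [hx.1, Real.pi_pos], by linarith [hx.2]⟩
    have a1 := jor x hx
    have a2 := jor (π - x) ⟨by linarith [hx.2], by linarith [hx.1]⟩
    rw [show (π - x) / 2 = π / 2 - x / 2 by ring, Real.sin_pi_div_two_sub] at a2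
    have b1 := pow_compare (q := p) (by positivity) hx.1 a1.1 a1.2
    have b2 := pow_compare (q := q) (by positivity) (by linarith [hx.2]) a2.1 a2.2
    have hx1 := hx.1
    have hx2 : 0 < π - x := by linarith [hx.2]
    calc _ ≤ (k p * x ^ p) * (k q * (π - x) ^ q) := by
            apply mul_le_mul b1 b2 (by positivity) (by have := hk p; positivity)
      _ = _ := by ring
  refine ⟨k p * k q * (l q * C1 + l p * C2), by have := hk p; have := hk q; have := hl p; have := hl q; positivity, 
    fun θ hθ d hd hdπ => ?_⟩
  have hθ1 := hθ.1
  have hθ2 : 0 < π - θ := by linarith [hθ.2]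
  have hkp := hk p
  have hkq := hk q
  have hlp := hl p
  have hlq := hl q
  rw [ball_eq]
  have key : ∀ x ∈ Ioo (θ - d) (θ + d) ∩ Ioo 0 π, jPsi α β x ^ 2 ≤ 
      (k p * k q * (l q * (d + (π - θ)) ^ q)) * x ^ p + (k p * k q * (l p * (d + θ) ^ p)) * (π - x) ^ q := by
    intro x ⟨hx1, hx⟩
    refine (dens x hx).trans ?_
    have hx0 := hx.1
    have hx2 : 0 < π - x := by linarith [hx.2]
    have n1 : 0 ≤ (k p * k q * (l q * (d + (π - θ)) ^ q)) * x ^ p := by positivity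
    have n2 : 0 ≤ (k p * k q * (l p * (d + θ) ^ p)) * (π - x) ^ q := by positivity
    rcases le_total x (π / 2) with h | h
    · have : (π - x) ^ q ≤ l q * (d + (π - θ)) ^ q := 
        pow_compare (by norm_num) (by linarith) (by linarith [hx1.1]) (by linarith [hx1.1])
      calc _ ≤ k p * k q * (x ^ p * (l q * (d + (π - θ)) ^ q)) := by gcongr
        _ = (k p * k q * (l q * (d + (π - θ)) ^ q)) * x ^ p := by ring
        _ ≤ _ := by linarith
    · have : x ^ p ≤ l p * (d + θ) ^ p := 
        pow_compare (by norm_num) (by linarith) (by linarith [hx1.2, hθ.2]) (by linarith [hx1.2])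
      calc _ ≤ k p * k q * (l p * (d + θ) ^ p * (π - x) ^ q) := by gcongr
        _ = (k p * k q * (l p * (d + θ) ^ p)) * (π - x) ^ q := by ring
        _ ≤ _ := by linarith
  have hmeas : MeasurableSet (Ioo (θ - d) (θ + d) ∩ Ioo 0 π) := measurableSet_Ioo.inter measurableSet_Ioo
  set A := k p * k q * (l q * (d + (π - θ)) ^ q) with hA
  set B := k p * k q * (l p * (d + θ) ^ p) with hB
  have hA0 : 0 ≤ A := by positivity
  have hB0 : 0 ≤ B := by positivity
  calc _ ≤ ∫⁻ x in Ioo (θ - d) (θ + d) ∩ Ioo 0 π, (ENNReal.ofReal A * ENNReal.ofReal (x ^ p) + ENNReal.ofReal B * ENNReal.ofReal ((π - x) ^ q)) := by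
        refine setLIntegral_mono' hmeas fun x hx => ?_
        rw [← ENNReal.ofReal_mul hA0, ← ENNReal.ofReal_mul hB0]
        exact (ENNReal.ofReal_le_ofReal (key x hx)).trans ENNReal.ofReal_add_le
    _ = ENNReal.ofReal A * (∫⁻ x in Ioo (θ - d) (θ + d) ∩ Ioo 0 π, ENNReal.ofReal (x ^ p)) +
        ENNReal.ofReal B * (∫⁻ x in Ioo (θ - d) (θ + d) ∩ Ioo 0 π, ENNReal.ofReal ((π - x) ^ q)) := by
        rw [lintegral_add_left (by fun_prop), lintegral_const_mul _ (by fun_prop), lintegral_const_mul _ (by fun_prop)]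
    _ ≤ ENNReal.ofReal A * ENNReal.ofReal (C1 * (d * (d + θ) ^ p)) + ENNReal.ofReal B * ENNReal.ofReal (C2 * (d * (d + (π - θ)) ^ q)) := by
        gcongr
        · exact (lintegral_mono_set (inter_subset_inter_right _ (show Ioo (0:ℝ) π ⊆ Ioi 0 from fun x hx => hx.1))).trans (H1 θ hθ1 d hd)
        · refine (lintegral_mono_set (inter_subset_inter_right _ (show Ioo (0:ℝ) π ⊆ Iio π from fun x hx => hx.2))).trans ?_
          rw [J_refl]
          exact H2 (π - θ) hθ2 d hd
    _ = _ := by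
        rw [← ENNReal.ofReal_mul hA0, ← ENNReal.ofReal_mul hB0, ← ENNReal.ofReal_add (by positivity) (by positivity), hA, hB]
        congr 1
        ring

end JK

namespace JK

theorem fac_compare {p d r x : ℝ} (hd : 0 < d) (hr : 0 < r) (hx : 0 < x) (hdr : d ≤ π * r) :
    (d + x) ^ p * r ^ (min 0 p) ≤ π ^ |p| * (d ^ (min 0 p) * (r + x) ^ p) := by
  have hpi : 1 < π := by linarith [pi_gt_three]
  have hpi0 : 0 < π := pi_pos
  rcases le_total 0 p with h | h
  · rw [min_eq_left h, abs_of_nonneg h, rpow_zero, rpow_zero, mul_one, one_mul, ← mul_rpow hpi0.le (by positivity)]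
    exact rpow_le_rpow (by positivity) (by nlinarith) h
  · rw [min_eq_right h, abs_of_nonpos h, rpow_neg hpi0.le, ← inv_rpow hpi0.le, ← mul_rpow (by positivity) hr.le,
      ← mul_rpow hd.le (by positivity), ← mul_rpow (by positivity) (by positivity)]
    refine rpow_le_rpow_of_nonpos (by positivity) ?_ h
    rw [inv_mul_le_iff₀ hpi0]
    nlinarith [mul_pos hd hr, mul_pos hd hx, mul_pos hr hx, mul_le_mul_of_nonneg_right hdr hx.le]

theorem weight_bound {θ φ r w : ℝ} {S g1 g2 : ℕ} (hθ : θ ∈ Ioo 0 π) (hφ : φ ∈ Ioo 0 π) (hr : 0 < r) (hr1 : r ≤ 1)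
    (hd : |θ - φ| ≤ π * r) (h1 : g1 ≤ 1) (h2 : g2 ≤ 1) (hw : 1 + (S:ℝ) ≤ w + g1 + g2) :
    Real.sin θ ^ g1 * Real.sin φ ^ g2 * r⁻¹ ^ (S + 1) * (((r + θ) * (r + (π - θ))) ^ 2)⁻¹ ≤ 5 * (r ^ (-w) * (r ^ 2)⁻¹) := by
  obtain ⟨t0, tp⟩ := hθ
  obtain ⟨f0, fp⟩ := hφ
  have hpi := pi_gt_three
  have hpi4 := pi_lt_four
  set P := (r + θ) * (r + (π - θ)) with hP
  have hs : Real.sin θ ≤ P ∧ r ≤ P := by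
    have s1 : Real.sin θ ≤ θ := sin_le t0.le
    have s2 : Real.sin θ ≤ π - θ := by rw [← Real.sin_pi_sub]; exact sin_le (by linarith)
    rcases le_total θ (π / 2) with h | h
    · have : r + θ ≤ P := by
        rw [hP]; nlinarith
      constructor <;> linarith
    · have : r + (π - θ) ≤ P := by
        rw [hP]; nlinarith
      constructor <;> linarith
  have hP0 : 0 < P := by linarith
  have sθ0 : 0 < Real.sin θ := sin_pos_of_pos_of_lt_pi t0 tp
  have sφ0 : 0 < Real.sin φ := sin_pos_of_pos_of_lt_pi f0 fp
  have hsφ : Real.sin φ ≤ 5 * P := by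
    have := Real.abs_sin_sub_sin_le φ θ
    have h3 := le_abs_self (Real.sin φ - Real.sin θ)
    rw [abs_sub_comm φ θ] at this
    nlinarith
  have hA : Real.sin θ ^ g1 * Real.sin φ ^ g2 ≤ 5 * P ^ (g1 + g2) := by
    have e1 : Real.sin θ ^ g1 ≤ P ^ g1 := pow_le_pow_left₀ sθ0.le hs.1 _
    have e2 : Real.sin φ ^ g2 ≤ 5 * P ^ g2 := by
      interval_cases g2
      · norm_num
      · simpa using hsφ
    calc _ ≤ P ^ g1 * (5 * P ^ g2) := by gcongr
      _ = _ := by ring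
  have hB : P ^ (g1 + g2) * (P ^ 2)⁻¹ ≤ r ^ (g1 + g2) * (r ^ 2)⁻¹ := by
    obtain ⟨k, hk⟩ : ∃ k, 2 = g1 + g2 + k := ⟨2 - (g1 + g2), by omega⟩
    rw [hk, pow_add P (g1 + g2) k, pow_add r (g1 + g2) k, mul_inv, mul_inv, mul_inv_cancel_left₀ (by positivity), mul_inv_cancel_left₀ (by positivity)]
    gcongr
    exact hs.2
  have hC : r ^ (g1 + g2) * r⁻¹ ^ (S + 1) ≤ r ^ (-w) := by
    rw [inv_pow, ← rpow_natCast, ← rpow_natCast, ← rpow_neg hr.le, ← rpow_add hr]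
    refine rpow_le_rpow_of_exponent_ge hr hr1 ?_
    push_cast; linarith
  calc _ ≤ 5 * P ^ (g1 + g2) * r⁻¹ ^ (S + 1) * (P ^ 2)⁻¹ := by gcongr
    _ = 5 * (P ^ (g1 + g2) * (P ^ 2)⁻¹) * r⁻¹ ^ (S + 1) := by ring
    _ ≤ 5 * (r ^ (g1 + g2) * (r ^ 2)⁻¹) * r⁻¹ ^ (S + 1) := by gcongr
    _ = 5 * (r ^ (g1 + g2) * r⁻¹ ^ (S + 1) * (r ^ 2)⁻¹) := by ring
    _ ≤ _ := by gcongr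

/-- dominating function -/
def gdom (lam w e d t : ℝ) : ℝ :=
  Real.exp (-(t / 2 * lam)) * ((min (t + d) 1) ^ (-w) * (d / min (t + d) 1) ^ e)

theorem ratio_le {d t : ℝ} (hd : 0 < d) (hdp : d < π) (ht : 0 < t) : d ≤ π * min (t + d) 1 := by
  have := pi_gt_three
  rcases min_cases (t + d) 1 with ⟨h, _⟩ | ⟨h, _⟩ <;> rw [h] <;> nlinarith

theorem gdom_pow {lam W e d t P : ℝ} (hl : 0 < lam) (hW : 1 ≤ W) (he : 0 < e) (hd : 0 < d) (hdp : d < π) (ht : 0 < t)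
    (hP : 0 < P) : t ^ (W - 1) * gdom lam (W / P) e d t ^ P ≤
      d ^ (e * P) * (t + d) ^ (-1 - e * P) + π ^ (e * P) * (t ^ (W - 1) * Real.exp (-(lam * P / 2 * t))) := by
  have hpi := pi_pos
  have hr := ratio_le hd hdp ht
  have hm : 0 < min (t + d) 1 := lt_min (by linarith) one_pos
  have hg : gdom lam (W / P) e d t ^ P = Real.exp (-(lam * P / 2 * t)) * ((min (t + d) 1) ^ (-W) * (d / min (t + d) 1) ^ (e * P)) := by
    unfold gdom
    rw [mul_rpow (by positivity) (by positivity), mul_rpow (by positivity) (by positivity), ← rpow_mul hm.le, ← rpow_mul (by positivity), ← Real.exp_mul]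
    congr 2
    · ring
    · congr 1; field_simp
  rw [hg]
  have hexp : Real.exp (-(lam * P / 2 * t)) ≤ 1 := by
    rw [Real.exp_le_one_iff]; have : 0 < lam * P / 2 * t := by positivity
    linarith
  rcases le_total (t + d) 1 with h | h
  · rw [min_eq_left h]
    have hs : 0 < t + d := by linarith
    have : t ^ (W - 1) ≤ (t + d) ^ (W - 1) := rpow_le_rpow ht.le (by linarith) (by linarith)
    calc _ ≤ (t + d) ^ (W - 1) * (1 * ((t + d) ^ (-W) * (d / (t + d)) ^ (e * P))) := by gcongr
      _ = d ^ (e * P) * (t + d) ^ (-1 - e * P) := by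
        rw [div_rpow hd.le hs.le, one_mul, div_eq_mul_inv, ← rpow_neg hs.le]
        rw [show (t + d) ^ (-1 - e * P) = (t + d) ^ (W - 1) * ((t + d) ^ (-W) * (t + d) ^ (-(e * P))) by
          rw [← rpow_add hs, ← rpow_add hs]; congr 1; ring]
        ring
      _ ≤ _ := le_add_of_nonneg_right (by positivity)
  · rw [min_eq_right h]
    have : d ^ (e * P) ≤ π ^ (e * P) := rpow_le_rpow hd.le hdp.le (by positivity)
    calc _ = d ^ (e * P) * (t ^ (W - 1) * Real.exp (-(lam * P / 2 * t))) := by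
          rw [one_rpow, div_one]; ring
      _ ≤ π ^ (e * P) * (t ^ (W - 1) * Real.exp (-(lam * P / 2 * t))) := by gcongr
      _ ≤ _ := le_add_of_nonneg_left (by positivity)

theorem lint_tail {η d : ℝ} (hη : 0 < η) (hd : 0 < d) :
    ∫⁻ t in Ioi (0:ℝ), ENNReal.ofReal (d ^ η * (t + d) ^ (-1 - η)) ≤ ENNReal.ofReal (1 / η) := by
  have hlt : -1 - η < -1 := by linarith
  have hIntg : IntegrableOn (fun t : ℝ => (t + d) ^ (-1 - η)) (Ioi 0) := integrableOn_add_rpow_Ioi_of_lt hlt (by linarith)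
  rw [← ofReal_integral_eq_lintegral_ofReal (hIntg.const_mul _)]
  · apply ENNReal.ofReal_le_ofReal
    rw [integral_const_mul]
    have : ∫ t in Ioi (0:ℝ), (t + d) ^ (-1 - η) = ∫ t in Ioi d, t ^ (-1 - η) := by
      have h := (measurePreserving_add_right volume d).setIntegral_preimage_emb (measurableEmbedding_addRight d) (fun t : ℝ => t ^ (-1 - η)) (Ioi d)
      rw [← h]
      simp
    rw [this, integral_Ioi_rpow_of_lt hlt hd]
    rw [show -1 - η + 1 = -η by ring, neg_div_neg_eq, ← mul_div_assoc, ← rpow_add hd]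
    simp
  · refine (ae_restrict_mem measurableSet_Ioi).mono fun t (ht : 0 < t) => ?_
    have : 0 < t + d := by linarith
    simp only [Pi.zero_apply]; positivity

theorem gdom_norm {lam W e : ℝ} (hl : 0 < lam) (hW : 1 ≤ W) (he : 0 < e) (p : ℝ≥0∞) (hp : 1 ≤ p) :
    ∃ C > 0, ∀ d, 0 < d → d < π → eLpNorm (gdom lam (W / p.toReal) e d) p ((volume.restrict (Ioi (0 : ℝ))).withDensity fun t =>
              ENNReal.ofReal (t ^ (W - 1))) ≤ ENNReal.ofReal C := by
  have hpi := pi_pos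
  have hpos : ∀ w d t, 0 < d → 0 < t → 0 ≤ gdom lam w e d t := by
    intro w d t hd ht
    have hm : 0 < min (t + d) 1 := lt_min (by linarith) one_pos
    unfold gdom; positivity
  have hac : ((volume.restrict (Ioi (0 : ℝ))).withDensity fun t => ENNReal.ofReal (t ^ (W - 1))) ≪ volume.restrict (Ioi (0:ℝ)) :=
    withDensity_absolutelyContinuous _ _
  by_cases htop : p = ∞
  · subst htop
    refine ⟨π ^ e, by positivity, fun d hd hdp => ?_⟩
    rw [eLpNorm_exponent_top]
    refine eLpNormEssSup_le_of_ae_bound ?_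
    refine hac.ae_le ((ae_restrict_mem measurableSet_Ioi).mono fun t (ht : 0 < t) => ?_)
    have hm : 0 < min (t + d) 1 := lt_min (by linarith) one_pos
    rw [Real.norm_of_nonneg (hpos _ _ _ hd ht)]
    simp only [gdom, ENNReal.toReal_top, div_zero, neg_zero, rpow_zero, one_mul]
    have h1 : (d / min (t + d) 1) ^ e ≤ π ^ e := by
      refine rpow_le_rpow (by positivity) ?_ he.le
      rw [div_le_iff₀ hm]
      exact ratio_le hd hdp ht
    have hexp : Real.exp (-(t / 2 * lam)) ≤ 1 := by
      rw [Real.exp_le_one_iff]; have : 0 < t / 2 * lam := by positivity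
      linarith
    calc _ ≤ 1 * π ^ e := by gcongr
      _ = _ := one_mul _
  · have hp0 : p ≠ 0 := (lt_of_lt_of_le one_pos hp).ne'
    set P := p.toReal with hPdef
    have hP : 0 < P := ENNReal.toReal_pos hp0 htop
    set η := e * P with hη
    have hη0 : 0 < η := by positivity
    obtain ⟨J, hJ0, hJ⟩ : ∃ J : ℝ, 0 ≤ J ∧ ∫⁻ t in Ioi (0:ℝ), ENNReal.ofReal (π ^ η * (t ^ (W - 1) * Real.exp (-(lam * P / 2 * t)))) ≤ ENNReal.ofReal J := by
      have hIntg : IntegrableOn (fun t : ℝ => t ^ (W - 1) * Real.exp (-(lam * P / 2 * t))) (Ioi 0) := by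
        have := integrableOn_rpow_mul_exp_neg_mul_rpow (s := W - 1) (p := 1) (b := lam * P / 2) (by linarith) one_pos (by positivity)
        simpa using this
      refine ⟨_, ?_, (ofReal_integral_eq_lintegral_ofReal (hIntg.const_mul _) ?_).symm.le⟩
      · refine setIntegral_nonneg measurableSet_Ioi fun t (ht : 0 < t) => by positivity
      · refine (ae_restrict_mem measurableSet_Ioi).mono fun t (ht : 0 < t) => ?_
        simp only [Pi.zero_apply]; positivity
    refine ⟨(1 / η + J) ^ (1 / P), by positivity, fun d hd hdp => ?_⟩
    have hmeas : Measurable (gdom lam (W / P) e d) := by unfold gdom; fun_prop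
    rw [eLpNorm_eq_lintegral_rpow_enorm_toReal hp0 htop, ← hPdef, ← ENNReal.ofReal_rpow_of_nonneg (by positivity) (by positivity)]
    gcongr
    rw [lintegral_withDensity_eq_lintegral_mul _ (by fun_prop) (by fun_prop)]
    calc _ ≤ ∫⁻ t in Ioi (0:ℝ), (ENNReal.ofReal (d ^ η * (t + d) ^ (-1 - η)) + ENNReal.ofReal (π ^ η * (t ^ (W - 1) * Real.exp (-(lam * P / 2 * t))))) := by
          refine setLIntegral_mono' measurableSet_Ioi fun t (ht : 0 < t) => ?_
          rw [Pi.mul_apply, Real.enorm_of_nonneg (hpos _ _ _ hd ht), ENNReal.ofReal_rpow_of_nonneg (hpos _ _ _ hd ht) hP.le,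
            ← ENNReal.ofReal_mul (by positivity)]
          exact (ENNReal.ofReal_le_ofReal (gdom_pow hl hW he hd hdp ht hP)).trans ENNReal.ofReal_add_le
      _ ≤ ENNReal.ofReal (1 / η) + ENNReal.ofReal J := by
          rw [lintegral_add_left (by fun_prop)]
          exact add_le_add (lint_tail hη0 hd) hJ
      _ = _ := by rw [ENNReal.ofReal_add (by positivity) hJ0]

end JK

namespace JK

theorem vol_compare {p q d r x y : ℝ} (hd : 0 < d) (hr : 0 < r) (hx : 0 < x) (hy : 0 < y) (hdr : d ≤ π * r) :
    (r ^ 2)⁻¹ * ((r + x) ^ (-p) * (r + y) ^ (-q)) ≤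
      π ^ |p| * π ^ |q| * (d / r) ^ (2 + min 0 p + min 0 q) * (d * (d * ((d + x) ^ p * (d + y) ^ q)))⁻¹ := by
  have h1 := fac_compare (p := p) hd hr hx hdr
  have h2 := fac_compare (p := q) hd hr hy hdr
  have hpi := pi_pos
  have h3 := mul_le_mul h1 h2 (by positivity) (by positivity)
  have e : (d / r) ^ (2 + min 0 p + min 0 q) = d ^ 2 * d ^ (min 0 p) * d ^ (min 0 q) / (r ^ 2 * r ^ (min 0 p) * r ^ (min 0 q)) := by
    rw [div_rpow hd.le hr.le, rpow_add hd, rpow_add hd, rpow_add hr, rpow_add hr, rpow_two, rpow_two]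
  rw [e, rpow_neg (by positivity), rpow_neg (by positivity), ← mul_inv, ← mul_inv, mul_div_assoc', ← div_eq_mul_inv, div_div,
    inv_eq_one_div, div_le_div_iff₀ (by positivity) (by positivity)]
  calc _ = d ^ 2 * r ^ 2 * ((d + x) ^ p * r ^ min 0 p * ((d + y) ^ q * r ^ min 0 q)) := by ring
    _ ≤ d ^ 2 * r ^ 2 * (π ^ |p| * (d ^ min 0 p * (r + x) ^ p) * (π ^ |q| * (d ^ min 0 q * (r + y) ^ q))) := by gcongr
    _ = _ := by ring

theorem main_est (α β : ℝ) (hα : -1 < α) (hβ : -1 < β)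
    (M N L γ₁ γ₂ : ℕ) (hγ₁ : γ₁ ≤ 1) (hγ₂ : γ₂ ≤ 1)
    (W : ℝ) (hW : 1 ≤ W) (p : ℝ≥0∞) (hp : 1 ≤ p)
    (hcond : 1 ≤ W / p.toReal + γ₁ + γ₂ - L - N - M) :
    ∃ C : ℝ, 0 < C ∧ ∀ θ ∈ Ioo (0 : ℝ) π, ∀ φ ∈ Ioo (0 : ℝ) π, θ ≠ φ →
      ENNReal.ofReal (Real.sin θ ^ γ₁ * Real.sin φ ^ γ₂) *
          eLpNorm (fun t => deriv^[L] (fun φ' => deriv^[N] (fun θ' =>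
              deriv^[M] (fun s => jHker (α + 1) (β + 1) s θ' φ') t) θ) φ) p
            ((volume.restrict (Ioi (0 : ℝ))).withDensity fun t =>
              ENNReal.ofReal (t ^ (W - 1))) ≤
        ENNReal.ofReal (C / (|θ - φ| * (ballMeasure α β θ |θ - φ|).toReal)) := by
  obtain ⟨K, hK, hF⟩ := deriv_bound (a := α + 1) (b := β + 1) (by linarith) (by linarith) M N L
  obtain ⟨Cb, hCb, hball⟩ := ball_bound hα hβ
  set e := 2 + min 0 (2 * α + 1) + min 0 (2 * β + 1) with he_def
  have he : 0 < e := by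
    rcases min_cases 0 (2 * α + 1) with ⟨h, _⟩ | ⟨h, _⟩ <;> rcases min_cases 0 (2 * β + 1) with ⟨h', _⟩ | ⟨h', _⟩ <;>
      rw [he_def, h, h'] <;> linarith
  have hlam : 0 < α + 1 + (β + 1) + 1 := by linarith
  obtain ⟨Cg, hCg, hg⟩ := gdom_norm hlam hW he p hp
  have hpi := pi_pos
  set Cp := π ^ |2 * α + 1| * π ^ |2 * β + 1| with hCp
  have hCp0 : 0 < Cp := by positivity
  refine ⟨K * 5 * Cp * Cb * Cg, by positivity, ?_⟩
  intro θ hθ φ hφ hne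
  have hx : 0 < θ := hθ.1
  have hy : 0 < π - θ := by linarith [hθ.2]
  have hd : 0 < |θ - φ| := abs_pos.2 (sub_ne_zero.2 hne)
  have hdp : |θ - φ| < π := by
    rw [abs_lt]; constructor <;> linarith [hθ.1, hθ.2, hφ.1, hφ.2]
  have hs : 0 < Real.sin θ ^ γ₁ * Real.sin φ ^ γ₂ :=
    mul_pos (pow_pos (sin_pos_of_pos_of_lt_pi hθ.1 hθ.2) _) (pow_pos (sin_pos_of_pos_of_lt_pi hφ.1 hφ.2) _)
  have hb := hball θ hθ _ hd hdp
  have hbp := ball_pos (α := α) (β := β) hθ hd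
  have hF' := fun t ht => hF t ht θ hθ φ hφ _ rfl
  have hwt := fun r hr hr1 hdr => weight_bound (θ := θ) (φ := φ) (r := r) (w := W / p.toReal) (S := M + N + L) (g1 := γ₁) (g2 := γ₂)
    hθ hφ hr hr1 hdr hγ₁ hγ₂ (by push_cast; linarith)
  set d := |θ - φ| with hd_def
  set s := Real.sin θ ^ γ₁ * Real.sin φ ^ γ₂ with hs_def
  set μ := (ballMeasure α β θ d).toReal with hμ
  have hfin : ballMeasure α β θ d ≠ ∞ := ne_top_of_le_ne_top ENNReal.ofReal_ne_top hb
  have hμ0 : 0 < μ := ENNReal.toReal_pos hbp.ne' hfin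
  set A := (d + θ) ^ (2 * α + 1) * (d + (π - θ)) ^ (2 * β + 1) with hA
  have hA0 : 0 < A := by positivity
  have hμle : μ ≤ Cb * (d * A) := by
    rw [hμ]
    exact ENNReal.toReal_le_of_le_ofReal (by positivity) hb
  have hVinv : (d * (d * A))⁻¹ ≤ Cb / (d * μ) := by
    rw [inv_eq_one_div, div_le_div_iff₀ (by positivity) (by positivity)]
    nlinarith [mul_le_mul_of_nonneg_left hμle hd.le]
  have hac : ((volume.restrict (Ioi (0 : ℝ))).withDensity fun t => ENNReal.ofReal (t ^ (W - 1))) ≪ volume.restrict (Ioi (0:ℝ)) :=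
    withDensity_absolutelyContinuous _ _
  have hdom := eLpNorm_le_mul_eLpNorm_of_ae_le_mul (μ := (volume.restrict (Ioi (0 : ℝ))).withDensity fun t => ENNReal.ofReal (t ^ (W - 1)))
    (f := fun t => deriv^[L] (fun φ' => deriv^[N] (fun θ' => deriv^[M] (fun s => jHker (α + 1) (β + 1) s θ' φ') t) θ) φ)
    (g := gdom (α + 1 + (β + 1) + 1) (W / p.toReal) e d) (c := K * 5 * Cp * (Cb / (d * μ)) / s) (by
      refine hac.ae_le ((ae_restrict_mem measurableSet_Ioi).mono fun t (ht : 0 < t) => ?_)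
      refine le_trans ?_ (mul_le_mul_of_nonneg_left (le_abs_self _) (by positivity))
      rw [div_mul_eq_mul_div, le_div_iff₀ hs, Real.norm_eq_abs]
      have h1 := hF' t ht
      have hm : 0 < min (t + d) 1 := lt_min (by linarith) one_pos
      have hdr := ratio_le hd hdp ht
      have h2 := hwt _ hm (min_le_right _ _) hdr
      have h3 := vol_compare (p := 2 * α + 1) (q := 2 * β + 1) hd hm hx hy hdr
      unfold gdom
      set r := min (t + d) 1 with hr
      set E := Real.exp (-(t / 2 * (α + 1 + (β + 1) + 1))) with hE
      have hE0 : 0 < E := Real.exp_pos _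
      have ex : ∀ z : ℝ, 0 < z → ∀ c : ℝ, z ^ (-(2 * (c + 1) + 1)) = z ^ (-(2 * c + 1)) * (z ^ 2)⁻¹ := by
        intro z hz c
        rw [← rpow_two, ← rpow_neg hz.le, ← rpow_add hz]; congr 1; ring
      rw [ex _ (by linarith), ex _ (by linarith)] at h1
      set X := (r + θ) ^ (-(2 * α + 1)) with hX
      set Y := (r + (π - θ)) ^ (-(2 * β + 1)) with hY
      have hX0 : 0 < X := by positivity
      have hY0 : 0 < Y := by positivity
      calc _ ≤ K * (E * (r⁻¹ ^ (M + N + L + 1)) * (X * ((r + θ) ^ 2)⁻¹ * (Y * ((r + (π - θ)) ^ 2)⁻¹))) * s := by gcongr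
        _ = K * E * (X * Y) * (s * r⁻¹ ^ (M + N + L + 1) * (((r + θ) * (r + (π - θ))) ^ 2)⁻¹) := by
          rw [mul_pow, mul_inv]; ring
        _ ≤ K * E * (X * Y) * (5 * (r ^ (-(W / p.toReal)) * (r ^ 2)⁻¹)) := by gcongr
        _ = K * E * 5 * r ^ (-(W / p.toReal)) * ((r ^ 2)⁻¹ * (X * Y)) := by ring
        _ ≤ K * E * 5 * r ^ (-(W / p.toReal)) * (Cp * (d / r) ^ e * (Cb / (d * μ))) := by
          refine mul_le_mul_of_nonneg_left (h3.trans ?_) (by positivity)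
          exact mul_le_mul_of_nonneg_left hVinv (by positivity)
        _ = _ := by ring) p
  calc _ ≤ ENNReal.ofReal s * (ENNReal.ofReal (K * 5 * Cp * (Cb / (d * μ)) / s) * ENNReal.ofReal Cg) := by
        gcongr
        exact hdom.trans (by gcongr; exact hg d hd hdp)
    _ = _ := by
        rw [← ENNReal.ofReal_mul (by positivity), ← ENNReal.ofReal_mul hs.le]
        congr 1
        field_simp

end JK


/-- Theorem (smoothness-type estimate, Lemma 4.7 of the paper): weighted
`L^p((0,∞), t^{W−1}dt)` bounds of mixed derivatives of `H_t^{α+1,β+1}` against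
`1/(|θ−φ| μ⁺_{α,β}(B(θ,|θ−φ|)))`. -/
theorem kernel_smoothness_estimate (α β : ℝ) (hα : -1 < α) (hβ : -1 < β)
    (M N L γ₁ γ₂ : ℕ) (hL : L ≤ 1) (hγ₁ : γ₁ ≤ 1) (hγ₂ : γ₂ ≤ 1)
    (W : ℝ) (hW : 1 ≤ W) (p : ℝ≥0∞) (hp : 1 ≤ p)
    (hcond : 1 ≤ W / p.toReal + γ₁ + γ₂ - L - N - M) :
    ∃ C : ℝ, 0 < C ∧ ∀ θ ∈ Ioo (0 : ℝ) π, ∀ φ ∈ Ioo (0 : ℝ) π, θ ≠ φ →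
      ENNReal.ofReal (Real.sin θ ^ γ₁ * Real.sin φ ^ γ₂) *
          eLpNorm (fun t => deriv^[L] (fun φ' => deriv^[N] (fun θ' =>
              deriv^[M] (fun s => jHker (α + 1) (β + 1) s θ' φ') t) θ) φ) p
            ((volume.restrict (Ioi (0 : ℝ))).withDensity fun t =>
              ENNReal.ofReal (t ^ (W - 1))) ≤
        ENNReal.ofReal (C / (|θ - φ| * (ballMeasure α β θ |θ - φ|).toReal)) := by
  exact JK.main_est α β hα hβ M N L γ₁ γ₂ hγ₁ hγ₂ W hW p hp hcond
end
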